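/- arXiv:2310.14473 — 3 statements merged into one kernel-verified Lean document; each statement's English description precedes it below -/
import Mathlib

section
/- Assume [A]. Suppose that for each x the map y ↦ c₂(x,y) is strictly convex, that c₁(x) ≠ c₂(x,x) for μ-a.e. x, and that ν is absolutely continuous with respect to Lebesgue measure. If P_c = P̄_c (where P̄_c is the relaxed value for the vector cost (c₁(x), c₂(x,y)) with L = 2), then every optimal pair (π, μ₁) for the primal problem P_c satisfies μ₁ ⊥ (μ − μ₁), i.e., the optimal exercise is nonrandomized. -/
open MeasureTheory ProbabilityTheory Set
open scoped ENNReal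

noncomputable section

/-- Convex order between finite-first-moment probability measures on `ℝ`:
`μ ≼_c ν` iff `μ(f) ≤ ν(f)` for every convex `f`. -/
def ConvexOrder (μ ν : Measure ℝ) : Prop :=
  ∀ f : ℝ → ℝ, ConvexOn ℝ Set.univ f → Integrable f ν →
    Integrable f μ ∧ ∫ x, f x ∂μ ≤ ∫ x, f x ∂ν

/-- `κ` is a disintegration kernel of a martingale transport from `μ` to `ν`;
the associated transport plan is `π = μ ⊗ₘ κ ∈ ℳ(μ,ν)`. -/
def MartKernel (μ ν : Measure ℝ) (κ : Kernel ℝ ℝ) : Prop :=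
  IsMarkovKernel κ ∧ (μ ⊗ₘ κ).map Prod.snd = ν ∧
    ∀ᵐ x ∂μ, Integrable id (κ x) ∧ ∫ y, y ∂(κ x) = x

/-- The set `ℳ(μ,ν)` of martingale transports from `μ` to `ν`. -/
def MT (μ ν : Measure ℝ) : Set (Measure (ℝ × ℝ)) :=
  {π | ∃ κ : Kernel ℝ ℝ, MartKernel μ ν κ ∧ π = μ ⊗ₘ κ}

/-- Membership in `ℳ̄`: `γ` is a nonnegative finite measure which is zero or a scalar
multiple of a martingale transport between its own marginals. -/
def IsSubMart (γ : Measure (ℝ × ℝ)) : Prop :=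
  IsFiniteMeasure γ ∧ (γ = 0 ∨ ∃ κ : Kernel ℝ ℝ, IsMarkovKernel κ ∧
    γ.map Prod.fst ⊗ₘ κ = γ ∧
    ∀ᵐ x ∂(γ.map Prod.fst), Integrable id (κ x) ∧ ∫ y, y ∂(κ x) = x)

/-- Membership in `ℳ_L(μ,ν)`. -/
def MLfeasible (μ ν : Measure ℝ) {L : ℕ} (γ : Fin L → Measure (ℝ × ℝ)) : Prop :=
  (∀ l, IsSubMart (γ l)) ∧ (∑ l, γ l) ∈ MT μ ν

/-- The relaxed value `P̄_c` for a vector cost `c = (c_1, …, c_L)`. -/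
def RelaxedValue (μ ν : Measure ℝ) {L : ℕ} (c : Fin L → ℝ × ℝ → ℝ) : ℝ :=
  sSup {r | ∃ γ : Fin L → Measure (ℝ × ℝ), MLfeasible μ ν γ ∧
    r = ∑ l, ∫ p, c l p ∂(γ l)}

/-- The primal value `P_c` for an American option payoff `(c₁(x), c₂(x,y))`. -/
def PrimalValue (μ ν : Measure ℝ) (c₁ : ℝ → ℝ) (c₂ : ℝ × ℝ → ℝ) : ℝ :=
  sSup {r | ∃ (κ : Kernel ℝ ℝ) (μ₁ : Measure ℝ), MartKernel μ ν κ ∧ μ₁ ≤ μ ∧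
    r = ∫ p, c₁ p.1 ∂(μ₁ ⊗ₘ κ) + ∫ p, c₂ p ∂((μ - μ₁) ⊗ₘ κ)}

/-- Dual feasibility: membership of `(φ, ψ, θ)` in `Ψ̄_c`. -/
def DualFeasible (μ ν : Measure ℝ) {L : ℕ} (c : Fin L → ℝ × ℝ → ℝ)
    (φ ψ : ℝ → ℝ) (θ : Fin L → ℝ → ℝ) : Prop :=
  Continuous φ ∧ Integrable φ μ ∧ Continuous ψ ∧ Integrable ψ ν ∧
    (∀ l, Continuous (θ l) ∧ ∃ M, ∀ x, |θ l x| ≤ M) ∧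
    ∀ l, ∀ x y : ℝ, c l (x, y) ≤ φ x + ψ y + θ l x * (y - x)

/-- The dual value `D̄_c`. -/
def DualValue (μ ν : Measure ℝ) {L : ℕ} (c : Fin L → ℝ × ℝ → ℝ) : ℝ :=
  sInf {r | ∃ φ ψ θ, DualFeasible μ ν c φ ψ θ ∧ r = ∫ x, φ x ∂μ + ∫ y, ψ y ∂ν}

/-- Assumption [A'] for a vector cost. -/
def AssumpA' (μ ν : Measure ℝ) {L : ℕ} (c : Fin L → ℝ × ℝ → ℝ) : Prop :=
  IsProbabilityMeasure μ ∧ IsProbabilityMeasure ν ∧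
  Integrable id μ ∧ Integrable id ν ∧
  (∀ l, Continuous (c l)) ∧ ConvexOrder μ ν ∧
  ∃ v w : ℝ → ℝ, Continuous v ∧ Continuous w ∧ Integrable v μ ∧ Integrable w ν ∧
    ∀ x y : ℝ, ∑ l, |c l (x, y)| ≤ v x + w y

/-- Assumption [A] for an American payoff `(c₁, c₂)`. -/
def AssumpA (μ ν : Measure ℝ) (c₁ : ℝ → ℝ) (c₂ : ℝ × ℝ → ℝ) : Prop :=
  IsProbabilityMeasure μ ∧ IsProbabilityMeasure ν ∧
  Integrable id μ ∧ Integrable id ν ∧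
  Continuous c₁ ∧ Continuous c₂ ∧ ConvexOrder μ ν ∧
  ∃ v w : ℝ → ℝ, Continuous v ∧ Continuous w ∧ Integrable v μ ∧ Integrable w ν ∧
    ∀ x y : ℝ, |c₁ x| + |c₂ (x, y)| ≤ v x + w y

/-- The potential function `u_ξ`. -/
def potential (ξ : Measure ℝ) (x : ℝ) : ℝ := ∫ y, |x - y| ∂ξ

/-- `(μ, ν)` is an irreducible pair. -/
def IrreduciblePair (μ ν : Measure ℝ) : Prop :=
  IsOpen {x | potential μ x < potential ν x} ∧
  IsConnected {x | potential μ x < potential ν x} ∧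
  μ {x | potential μ x < potential ν x} = μ Set.univ

/-- Set-wise martingale condition. -/
def MartM (γ : Measure (ℝ × ℝ)) : Prop :=
  ∀ B : Set ℝ, MeasurableSet B → ∫ p in Prod.fst ⁻¹' B, (p.2 - p.1) ∂γ = 0

/-- Feasibility for the relaxed problem, without kernels. -/
structure Feas (μ ν : Measure ℝ) (γ₁ γ₂ : Measure (ℝ × ℝ)) : Prop where
  fin₁ : IsFiniteMeasure γ₁
  fin₂ : IsFiniteMeasure γ₂
  hfst : (γ₁ + γ₂).map Prod.fst = μ
  hsnd : (γ₁ + γ₂).map Prod.snd = ν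
  mart₁ : MartM γ₁
  mart₂ : MartM γ₂

lemma int_of {μ ν : Measure ℝ} {γ : Measure (ℝ × ℝ)}
    (h1 : γ.map Prod.fst ≤ μ) (h2 : γ.map Prod.snd ≤ ν) {V W : ℝ → ℝ}
    (hV : Integrable V μ) (hW : Integrable W ν) {f : ℝ × ℝ → ℝ} (hf : Measurable f)
    (hb : ∀ x y, |f (x, y)| ≤ V x + W y) : Integrable f γ := by
  have a : Integrable (fun p : ℝ × ℝ => V p.1) γ :=
    (hV.mono_measure h1).comp_measurable measurable_fst
  have b : Integrable (fun p : ℝ × ℝ => W p.2) γ :=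
    (hW.mono_measure h2).comp_measurable measurable_snd
  refine (a.add b).mono' hf.aestronglyMeasurable (Filter.Eventually.of_forall ?_)
  rintro ⟨x, y⟩
  exact hb x y

lemma int_diff {μ ν : Measure ℝ} {γ : Measure (ℝ × ℝ)}
    (h1 : γ.map Prod.fst ≤ μ) (h2 : γ.map Prod.snd ≤ ν)
    (hV : Integrable id μ) (hW : Integrable id ν) :
    Integrable (fun p : ℝ × ℝ => p.2 - p.1) γ := by
  refine int_of h1 h2 hV.norm hW.norm (by fun_prop) ?_
  intro x y
  simp only [id, Real.norm_eq_abs]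
  rw [add_comm]
  exact abs_sub _ _

lemma kernel_of {μ ν : Measure ℝ} {γ : Measure (ℝ × ℝ)} [IsFiniteMeasure γ]
    (h1 : γ.map Prod.fst ≤ μ) (h2 : γ.map Prod.snd ≤ ν)
    (hV : Integrable id μ) (hW : Integrable id ν) (hM : MartM γ) :
    ∃ κ : Kernel ℝ ℝ, IsMarkovKernel κ ∧
    γ.map Prod.fst ⊗ₘ κ = γ ∧
    ∀ᵐ x ∂(γ.map Prod.fst), Integrable id (κ x) ∧ ∫ y, y ∂(κ x) = x := by
  have hd : γ.map Prod.fst ⊗ₘ γ.condKernel = γ := Measure.disintegrate γ γ.condKernel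
  refine ⟨γ.condKernel, inferInstance, hd, ?_⟩
  have hi := int_diff h1 h2 hV hW
  have hi' : Integrable (fun p : ℝ × ℝ => p.2 - p.1) (γ.map Prod.fst ⊗ₘ γ.condKernel) := by
    rw [hd]; exact hi
  have hA := (Measure.integrable_compProd_iff hi'.1).1 hi'
  have hI : Integrable (fun x => ∫ y, (y - x) ∂(γ.condKernel x)) (γ.map Prod.fst) :=
    MeasureTheory.Integrable.integral_compProd (f := fun p : ℝ × ℝ => p.2 - p.1) hi'
  have hz := hI.ae_eq_zero_of_forall_setIntegral_eq_zero (by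
    intro s hs _
    have := hM s hs
    rw [← hd] at this
    have e : (Prod.fst ⁻¹' s : Set (ℝ × ℝ)) = s ×ˢ Set.univ := by ext; simp
    rw [e, Measure.setIntegral_compProd hs MeasurableSet.univ hi'.integrableOn] at this
    simpa using this)
  filter_upwards [hA.1, hz] with x hx hx0
  have hid : Integrable (fun y : ℝ => y) (γ.condKernel x) := by
    refine (hx.add (integrable_const x)).congr (Filter.Eventually.of_forall fun y => ?_)
    simp
  refine ⟨hid, ?_⟩
  simp only [Pi.zero_apply] at hx0
  rw [integral_sub hid (integrable_const x)] at hx0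
  simp at hx0
  linarith

lemma MartM.add {γ₁ γ₂ : Measure (ℝ × ℝ)} (h₁ : MartM γ₁) (h₂ : MartM γ₂)
    (i₁ : Integrable (fun p : ℝ × ℝ => p.2 - p.1) γ₁)
    (i₂ : Integrable (fun p : ℝ × ℝ => p.2 - p.1) γ₂) : MartM (γ₁ + γ₂) := by
  intro B hB
  rw [Measure.restrict_add, integral_add_measure i₁.integrableOn i₂.integrableOn, h₁ B hB,
    h₂ B hB, add_zero]

namespace Feas
variable {μ ν : Measure ℝ} {γ₁ γ₂ : Measure (ℝ × ℝ)}

lemma f1 (h : Feas μ ν γ₁ γ₂) : γ₁.map Prod.fst ≤ μ := by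
  rw [← h.hfst]; exact Measure.map_mono (Measure.le_add_right le_rfl) measurable_fst
lemma f2 (h : Feas μ ν γ₁ γ₂) : γ₂.map Prod.fst ≤ μ := by
  rw [← h.hfst]; exact Measure.map_mono (Measure.le_add_left le_rfl) measurable_fst
lemma s1 (h : Feas μ ν γ₁ γ₂) : γ₁.map Prod.snd ≤ ν := by
  rw [← h.hsnd]; exact Measure.map_mono (Measure.le_add_right le_rfl) measurable_snd
lemma s2 (h : Feas μ ν γ₁ γ₂) : γ₂.map Prod.snd ≤ ν := by
  rw [← h.hsnd]; exact Measure.map_mono (Measure.le_add_left le_rfl) measurable_snd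

lemma ml (h : Feas μ ν γ₁ γ₂) (hV : Integrable id μ) (hW : Integrable id ν) :
    MLfeasible μ ν ![γ₁, γ₂] := by
  have := h.fin₁
  have := h.fin₂
  refine ⟨?_, ?_⟩
  · rw [Fin.forall_fin_two]
    exact ⟨⟨h.fin₁, Or.inr (kernel_of (γ := γ₁) h.f1 h.s1 hV hW h.mart₁)⟩,
      ⟨h.fin₂, Or.inr (kernel_of (γ := γ₂) h.f2 h.s2 hV hW h.mart₂)⟩⟩
  · simp only [Fin.sum_univ_two, Matrix.cons_val_zero, Matrix.cons_val_one]
    obtain ⟨κ, hκ, hd, hm⟩ := kernel_of (γ := γ₁ + γ₂) h.hfst.le h.hsnd.le hV hW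
      (h.mart₁.add h.mart₂ (int_diff h.f1 h.s1 hV hW) (int_diff h.f2 h.s2 hV hW))
    rw [h.hfst] at hd hm
    exact ⟨κ, ⟨hκ, by rw [hd, h.hsnd], hm⟩, hd.symm⟩
end Feas

lemma bdd_relaxed {μ ν : Measure ℝ} {c₁ : ℝ → ℝ} {c₂ : ℝ × ℝ → ℝ} (hA : AssumpA μ ν c₁ c₂) :
    BddAbove {r | ∃ γ : Fin 2 → Measure (ℝ × ℝ), MLfeasible μ ν γ ∧
    r = ∑ l, ∫ p, (![fun p => c₁ p.1, c₂] : Fin 2 → ℝ × ℝ → ℝ) l p ∂(γ l)} := by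
  obtain ⟨hμ, hν, hV, hW, hc₁, hc₂, -, v, w, hvc, hwc, hv, hw, hb⟩ := hA
  refine ⟨∫ x, v x ∂μ + ∫ y, w y ∂ν, ?_⟩
  rintro r ⟨γ, ⟨hg, κ, ⟨hκ, hs, hm⟩, hπ⟩, rfl⟩
  simp only [Fin.sum_univ_two, Matrix.cons_val_zero, Matrix.cons_val_one] at hπ ⊢
  have hf : (γ 0 + γ 1).map Prod.fst = μ := by
    rw [hπ]; exact Measure.fst_compProd μ κ
  have hs : (γ 0 + γ 1).map Prod.snd = ν := by rw [hπ, hs]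
  have f0 : (γ 0).map Prod.fst ≤ μ := by
    rw [← hf]; exact Measure.map_mono (Measure.le_add_right le_rfl) measurable_fst
  have f1 : (γ 1).map Prod.fst ≤ μ := by
    rw [← hf]; exact Measure.map_mono (Measure.le_add_left le_rfl) measurable_fst
  have s0 : (γ 0).map Prod.snd ≤ ν := by
    rw [← hs]; exact Measure.map_mono (Measure.le_add_right le_rfl) measurable_snd
  have s1 : (γ 1).map Prod.snd ≤ ν := by
    rw [← hs]; exact Measure.map_mono (Measure.le_add_left le_rfl) measurable_snd
  have hvw : ∀ x y, |(fun p : ℝ × ℝ => v p.1 + w p.2) (x, y)| ≤ |v x| + |w y| :=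
    fun x y => abs_add_le _ _
  have m : Measurable (fun p : ℝ × ℝ => v p.1 + w p.2) := by fun_prop
  have g0 := int_of f0 s0 hv.norm hw.norm m hvw
  have g1 := int_of f1 s1 hv.norm hw.norm m hvw
  have b1 : ∀ x y, |c₁ x| ≤ v x + w y := fun x y => by
    have := hb x y; have := abs_nonneg (c₂ (x, y)); linarith
  have b2 : ∀ x y, |c₂ (x, y)| ≤ v x + w y := fun x y => by
    have := hb x y; have := abs_nonneg (c₁ x); linarith
  have i0 : Integrable (fun p : ℝ × ℝ => c₁ p.1) (γ 0) :=
    int_of f0 s0 hv hw (by fun_prop) b1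
  have i1 : Integrable c₂ (γ 1) := int_of f1 s1 hv hw (by fun_prop) b2
  have k0 := integral_mono i0 g0 (fun p => (le_abs_self _).trans (b1 p.1 p.2))
  have k1 := integral_mono i1 g1 (fun p => (le_abs_self _).trans (b2 p.1 p.2))
  have tot : ∫ p, (v p.1 + w p.2) ∂(γ 0) + ∫ p, (v p.1 + w p.2) ∂(γ 1)
      = ∫ x, v x ∂μ + ∫ y, w y ∂ν := by
    rw [← integral_add_measure g0 g1, integral_add
      (by rw [← hf] at hv; exact hv.comp_measurable measurable_fst)
      (by rw [← hs] at hw; exact hw.comp_measurable measurable_snd)]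
    congr 1
    · conv_rhs => rw [← hf]
      rw [integral_map (by fun_prop) hvc.aestronglyMeasurable]
    · conv_rhs => rw [← hs]
      rw [integral_map (by fun_prop) hwc.aestronglyMeasurable]
  linarith

lemma opt_ineq {μ ν : Measure ℝ} {c₁ : ℝ → ℝ} {c₂ : ℝ × ℝ → ℝ} (hA : AssumpA μ ν c₁ c₂)
    {γ₁ γ₂ : Measure (ℝ × ℝ)} (hF : Feas μ ν γ₁ γ₂)
    (hopt : RelaxedValue μ ν ![fun p => c₁ p.1, c₂] ≤ ∫ p, c₁ p.1 ∂(γ₁) + ∫ p, c₂ p ∂(γ₂))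
    {R₁ R₂ S₁ S₂ : Measure (ℝ × ℝ)} (hR₁ : R₁ ≤ γ₁) (hR₂ : R₂ ≤ γ₂)
    (hfst : (R₁ + R₂).map Prod.fst = (S₁ + S₂).map Prod.fst)
    (hsnd : (R₁ + R₂).map Prod.snd = (S₁ + S₂).map Prod.snd)
    (m₁ : ∀ B : Set ℝ, MeasurableSet B → ∫ p in Prod.fst ⁻¹' B, (p.2 - p.1) ∂(R₁) =
      ∫ p in Prod.fst ⁻¹' B, (p.2 - p.1) ∂(S₁))
    (m₂ : ∀ B : Set ℝ, MeasurableSet B → ∫ p in Prod.fst ⁻¹' B, (p.2 - p.1) ∂(R₂) =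
      ∫ p in Prod.fst ⁻¹' B, (p.2 - p.1) ∂(S₂)) :
    ∫ p, c₁ p.1 ∂(S₁) + ∫ p, c₂ p ∂(S₂) ≤ ∫ p, c₁ p.1 ∂(R₁) + ∫ p, c₂ p ∂(R₂) := by
  have hbdd := bdd_relaxed hA
  obtain ⟨hμ, hν, hV, hW, hc₁, hc₂, -, v, w, hvc, hwc, hv, hw, hb⟩ := hA
  have b1 : ∀ x y, |c₁ x| ≤ v x + w y := fun x y => by
    have := hb x y; have := abs_nonneg (c₂ (x, y)); linarith
  have b2 : ∀ x y, |c₂ (x, y)| ≤ v x + w y := fun x y => by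
    have := hb x y; have := abs_nonneg (c₁ x); linarith
  have := hF.fin₁
  have := hF.fin₂
  have : IsFiniteMeasure R₁ := isFiniteMeasure_of_le _ hR₁
  have : IsFiniteMeasure R₂ := isFiniteMeasure_of_le _ hR₂
  have hSf : IsFiniteMeasure (S₁ + S₂) := by
    constructor
    have : (S₁ + S₂) univ = ((R₁ + R₂).map Prod.fst) univ := by
      rw [hfst, Measure.map_apply measurable_fst MeasurableSet.univ]; rfl
    rw [this]; exact measure_lt_top _ _
  have : IsFiniteMeasure S₁ := isFiniteMeasure_of_le (S₁ + S₂) (Measure.le_add_right le_rfl)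
  have : IsFiniteMeasure S₂ := isFiniteMeasure_of_le (S₁ + S₂) (Measure.le_add_left le_rfl)
  have e₁ := Measure.sub_add_cancel_of_le hR₁
  have e₂ := Measure.sub_add_cancel_of_le hR₂
  set T₁ := γ₁ - R₁
  set T₂ := γ₂ - R₂
  have : IsFiniteMeasure T₁ := isFiniteMeasure_of_le γ₁ (by rw [← e₁]; exact Measure.le_add_right le_rfl)
  have : IsFiniteMeasure T₂ := isFiniteMeasure_of_le γ₂ (by rw [← e₂]; exact Measure.le_add_right le_rfl)
  have key : ∀ g : ℝ × ℝ → ℝ, Measurable g → (R₁ + R₂).map g = (S₁ + S₂).map g →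
      ((T₁ + S₁) + (T₂ + S₂)).map g = (γ₁ + γ₂).map g := by
    intro g hg h
    have a : (T₁ + S₁) + (T₂ + S₂) = (T₁ + T₂) + (S₁ + S₂) := by abel
    have b : γ₁ + γ₂ = (T₁ + T₂) + (R₁ + R₂) := by rw [← e₁, ← e₂]; abel
    rw [a, b, Measure.map_add _ _ hg, ← h, ← Measure.map_add _ _ hg]
  have kf : ((T₁ + S₁) + (T₂ + S₂)).map Prod.fst = μ := by
    rw [key _ measurable_fst hfst, hF.hfst]
  have ks : ((T₁ + S₁) + (T₂ + S₂)).map Prod.snd = ν := by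
    rw [key _ measurable_snd hsnd, hF.hsnd]
  -- integrability on pieces
  have big : ∀ {η : Measure (ℝ × ℝ)}, η ≤ (T₁ + S₁) + (T₂ + S₂) →
      η.map Prod.fst ≤ μ ∧ η.map Prod.snd ≤ ν := by
    intro η h
    rw [← kf, ← ks]
    exact ⟨Measure.map_mono h measurable_fst, Measure.map_mono h measurable_snd⟩
  have big' : ∀ {η : Measure (ℝ × ℝ)}, η ≤ γ₁ + γ₂ →
      η.map Prod.fst ≤ μ ∧ η.map Prod.snd ≤ ν := by
    intro η h
    rw [← hF.hfst, ← hF.hsnd]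
    exact ⟨Measure.map_mono h measurable_fst, Measure.map_mono h measurable_snd⟩
  have bS₁ := big (η := S₁) ((Measure.le_add_left le_rfl).trans (Measure.le_add_right le_rfl))
  have bT₁ := big (η := T₁) ((Measure.le_add_right le_rfl).trans (Measure.le_add_right le_rfl))
  have bS₂ := big (η := S₂) ((Measure.le_add_left le_rfl).trans (Measure.le_add_left le_rfl))
  have bT₂ := big (η := T₂) ((Measure.le_add_right le_rfl).trans (Measure.le_add_left le_rfl))
  have bR₁ := big' (η := R₁) (hR₁.trans (Measure.le_add_right le_rfl))
  have bR₂ := big' (η := R₂) (hR₂.trans (Measure.le_add_left le_rfl))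
  have mm : ∀ {γ R S T : Measure (ℝ × ℝ)}, T + R = γ → MartM γ →
      Integrable (fun p : ℝ × ℝ => p.2 - p.1) R → Integrable (fun p : ℝ × ℝ => p.2 - p.1) S →
      Integrable (fun p : ℝ × ℝ => p.2 - p.1) T →
      (∀ B : Set ℝ, MeasurableSet B → ∫ p in Prod.fst ⁻¹' B, (p.2 - p.1) ∂(R) =
        ∫ p in Prod.fst ⁻¹' B, (p.2 - p.1) ∂S) → MartM (T + S) := by
    intro γ R S T e hm hR hS hT h B hB
    have := hm B hB
    rw [← e, Measure.restrict_add, integral_add_measure hT.integrableOn hR.integrableOn] at this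
    rw [Measure.restrict_add, integral_add_measure hT.integrableOn hS.integrableOn, ← h B hB, this]
  have hFeas : Feas μ ν (T₁ + S₁) (T₂ + S₂) :=
    ⟨inferInstance, inferInstance, kf, ks,
      mm e₁ hF.mart₁ (int_diff bR₁.1 bR₁.2 hV hW) (int_diff bS₁.1 bS₁.2 hV hW)
        (int_diff bT₁.1 bT₁.2 hV hW) m₁,
      mm e₂ hF.mart₂ (int_diff bR₂.1 bR₂.2 hV hW) (int_diff bS₂.1 bS₂.2 hV hW)
        (int_diff bT₂.1 bT₂.2 hV hW) m₂⟩
  have hle := le_csSup hbdd ⟨_, hFeas.ml hV hW, rfl⟩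
  have hle := hle.trans hopt
  simp only [Fin.sum_univ_two, Matrix.cons_val_zero, Matrix.cons_val_one] at hle
  rw [← e₁, ← e₂] at hle
  have M1 : Measurable (fun p : ℝ × ℝ => c₁ p.1) := by fun_prop
  have M2 : Measurable c₂ := by fun_prop
  rw [integral_add_measure (int_of bT₁.1 bT₁.2 hv hw M1 b1) (int_of bS₁.1 bS₁.2 hv hw M1 b1),
    integral_add_measure (int_of bT₂.1 bT₂.2 hv hw M2 b2) (int_of bS₂.1 bS₂.2 hv hw M2 b2),
    integral_add_measure (int_of bT₁.1 bT₁.2 hv hw M1 b1) (int_of bR₁.1 bR₁.2 hv hw M1 b1),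
    integral_add_measure (int_of bT₂.1 bT₂.2 hv hw M2 b2) (int_of bR₂.1 bR₂.2 hv hw M2 b2)] at hle
  linarith

/-- Mass spread to two endpoints. -/
def spreadM {Ω : Type} [MeasurableSpace Ω] (N : Measure Ω) (w X Y₁ Y₂ : Ω → ℝ) :
    Measure (ℝ × ℝ) :=
  (N.withDensity fun ω => ENNReal.ofReal (w ω)).map (fun ω => (X ω, Y₁ ω)) +
  (N.withDensity fun ω => ENNReal.ofReal (1 - w ω)).map (fun ω => (X ω, Y₂ ω))

lemma wd_sum {Ω : Type} [MeasurableSpace Ω] {N : Measure Ω} {w : Ω → ℝ}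
    (hw : Measurable w) (h01 : ∀ᵐ ω ∂N, 0 ≤ w ω ∧ w ω ≤ 1) :
    (N.withDensity fun ω => ENNReal.ofReal (w ω)) +
      (N.withDensity fun ω => ENNReal.ofReal (1 - w ω)) = N := by
  rw [← withDensity_add_left (by fun_prop)]
  conv_rhs => rw [← withDensity_one (μ := N)]
  refine withDensity_congr_ae ?_
  filter_upwards [h01] with ω h
  simp only [Pi.add_apply, Pi.one_apply]
  rw [← ENNReal.ofReal_add h.1 (by linarith)]
  simp

lemma spread_fst {Ω : Type} [MeasurableSpace Ω] {N : Measure Ω} {w X Y₁ Y₂ : Ω → ℝ}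
    (hw : Measurable w) (h01 : ∀ᵐ ω ∂N, 0 ≤ w ω ∧ w ω ≤ 1) (hX : Measurable X)
    (hY₁ : Measurable Y₁) (hY₂ : Measurable Y₂) :
    (spreadM N w X Y₁ Y₂).map Prod.fst = N.map X := by
  unfold spreadM
  rw [Measure.map_add _ _ measurable_fst, Measure.map_map measurable_fst (by fun_prop),
    Measure.map_map measurable_fst (by fun_prop)]
  conv_rhs => rw [← wd_sum hw h01, Measure.map_add _ _ hX]
  rfl

lemma spread_snd {Ω : Type} [MeasurableSpace Ω] {N : Measure Ω} {w X Z Y₁ Y₂ : Ω → ℝ}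
    (hX : Measurable X) (hZ : Measurable Z)
    (hY₁ : Measurable Y₁) (hY₂ : Measurable Y₂) :
    (spreadM N w X Y₁ Y₂).map Prod.snd = (spreadM N w Z Y₁ Y₂).map Prod.snd := by
  unfold spreadM
  rw [Measure.map_add _ _ measurable_snd, Measure.map_map measurable_snd (by fun_prop),
    Measure.map_map measurable_snd (by fun_prop), Measure.map_add _ _ measurable_snd,
    Measure.map_map measurable_snd (by fun_prop), Measure.map_map measurable_snd (by fun_prop)]
  rfl

lemma spread_int {Ω : Type} [MeasurableSpace Ω] {N : Measure Ω} {w X Y₁ Y₂ : Ω → ℝ}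
    (hw : Measurable w) (h01 : ∀ᵐ ω ∂N, 0 ≤ w ω ∧ w ω ≤ 1) (hX : Measurable X)
    (hY₁ : Measurable Y₁) (hY₂ : Measurable Y₂) {f : ℝ × ℝ → ℝ} (hf : Measurable f)
    (hi : Integrable f (spreadM N w X Y₁ Y₂)) :
    Integrable (fun ω => w ω * f (X ω, Y₁ ω) + (1 - w ω) * f (X ω, Y₂ ω)) N ∧
    ∫ p, f p ∂(spreadM N w X Y₁ Y₂) =
      ∫ ω, (w ω * f (X ω, Y₁ ω) + (1 - w ω) * f (X ω, Y₂ ω)) ∂N := by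
  unfold spreadM at *
  rw [integrable_add_measure] at hi
  obtain ⟨h1, h2⟩ := hi
  rw [integral_add_measure h1 h2, integral_map (by fun_prop) h1.1,
    integral_map (by fun_prop) h2.1]
  have h1 := h1.comp_measurable (f := fun ω => (X ω, Y₁ ω)) (by fun_prop)
  have h2 := h2.comp_measurable (f := fun ω => (X ω, Y₂ ω)) (by fun_prop)
  rw [integrable_withDensity_iff_integrable_smul' (by fun_prop) (by simp)] at h1 h2
  rw [integral_withDensity_eq_integral_toReal_smul (by fun_prop) (by simp),
    integral_withDensity_eq_integral_toReal_smul (by fun_prop) (by simp)]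
  have a : (fun ω => (ENNReal.ofReal (w ω)).toReal • (f ∘ fun ω => (X ω, Y₁ ω)) ω) =ᵐ[N]
      fun ω => w ω * f (X ω, Y₁ ω) := by
    filter_upwards [h01] with ω h
    simp [ENNReal.toReal_ofReal h.1]
  have b : (fun ω => (ENNReal.ofReal (1 - w ω)).toReal • (f ∘ fun ω => (X ω, Y₂ ω)) ω) =ᵐ[N]
      fun ω => (1 - w ω) * f (X ω, Y₂ ω) := by
    filter_upwards [h01] with ω h
    simp [ENNReal.toReal_ofReal (sub_nonneg.2 h.2)]
  have h1 := h1.congr a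
  have h2 := h2.congr b
  refine ⟨h1.add h2, ?_⟩
  rw [integral_add h1 h2]
  congr 1
  · exact integral_congr_ae a
  · exact integral_congr_ae b

lemma spread_bary {Ω : Type} [MeasurableSpace Ω] {N : Measure Ω} {w X Y₁ Y₂ Y : Ω → ℝ}
    (hw : Measurable w) (h01 : ∀ᵐ ω ∂N, 0 ≤ w ω ∧ w ω ≤ 1) (hX : Measurable X)
    (hY₁ : Measurable Y₁) (hY₂ : Measurable Y₂) (hY : Measurable Y)
    (hb : ∀ᵐ ω ∂N, w ω * Y₁ ω + (1 - w ω) * Y₂ ω = Y ω)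
    (hi : Integrable (fun p : ℝ × ℝ => p.2 - p.1) (spreadM N w X Y₁ Y₂))
    (B : Set ℝ) (hB : MeasurableSet B) :
    ∫ p in Prod.fst ⁻¹' B, (p.2 - p.1) ∂(spreadM N w X Y₁ Y₂) =
      ∫ p in Prod.fst ⁻¹' B, (p.2 - p.1) ∂(N.map fun ω => (X ω, Y ω)) := by
  have mB : MeasurableSet (Prod.fst ⁻¹' B : Set (ℝ × ℝ)) := measurable_fst hB
  have mm : Measurable (fun p : ℝ × ℝ => p.2 - p.1) := by fun_prop
  rw [← integral_indicator mB, ← integral_indicator mB,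
    (spread_int hw h01 hX hY₁ hY₂ (mm.indicator mB) (hi.indicator mB)).2,
    integral_map (by fun_prop) (mm.indicator mB).aestronglyMeasurable]
  refine integral_congr_ae ?_
  filter_upwards [hb] with ω h
  by_cases hx : X ω ∈ B
  · simp only [Set.indicator, Set.mem_preimage, hx, if_true]
    linear_combination h
  · simp [Set.indicator, hx]

lemma no_improve {μ ν : Measure ℝ} {c₁ : ℝ → ℝ} {c₂ : ℝ × ℝ → ℝ} (hA : AssumpA μ ν c₁ c₂)
    (hstrict : ∀ x : ℝ, StrictConvexOn ℝ Set.univ fun y => c₂ (x, y))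
    {γ₁ γ₂ : Measure (ℝ × ℝ)} (hF : Feas μ ν γ₁ γ₂)
    (hopt : RelaxedValue μ ν ![fun p => c₁ p.1, c₂] ≤ ∫ p, c₁ p.1 ∂(γ₁) + ∫ p, c₂ p ∂(γ₂))
    {Ω : Type} [MeasurableSpace Ω] {N : Measure Ω} {w X Z Y₁ Y₂ Y : Ω → ℝ}
    (hw : Measurable w) (h01 : ∀ᵐ ω ∂N, 0 < w ω ∧ w ω < 1) (hX : Measurable X)
    (hZ : Measurable Z)
    (hY₁ : Measurable Y₁) (hY₂ : Measurable Y₂) (hY : Measurable Y)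
    (hb : ∀ᵐ ω ∂N, w ω * Y₁ ω + (1 - w ω) * Y₂ ω = Y ω)
    (hlt : ∀ᵐ ω ∂N, Y₁ ω < Y₂ ω)
    (hR₁ : spreadM N w X Y₁ Y₂ ≤ γ₁) (hR₂ : N.map (fun ω => (Z ω, Y ω)) ≤ γ₂) : N = 0 := by
  have h01' : ∀ᵐ ω ∂N, 0 ≤ w ω ∧ w ω ≤ 1 := h01.mono fun ω h => ⟨h.1.le, h.2.le⟩
  have hf1 : (spreadM N w X Y₁ Y₂).map Prod.fst = (N.map fun ω => (X ω, Y ω)).map Prod.fst := by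
    rw [spread_fst hw h01' hX hY₁ hY₂, Measure.map_map measurable_fst (by fun_prop)]; rfl
  have hf2 : (spreadM N w Z Y₁ Y₂).map Prod.fst = (N.map fun ω => (Z ω, Y ω)).map Prod.fst := by
    rw [spread_fst hw h01' hZ hY₁ hY₂, Measure.map_map measurable_fst (by fun_prop)]; rfl
  have hs : (N.map fun ω => (X ω, Y ω)).map Prod.snd = (N.map fun ω => (Z ω, Y ω)).map Prod.snd := by
    rw [Measure.map_map measurable_snd (by fun_prop), Measure.map_map measurable_snd (by fun_prop)]
    rfl
  have hs' := spread_snd (N := N) (w := w) hX hZ hY₁ hY₂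
  have hA' := hA
  obtain ⟨hμ, hν, hV, hW, hc₁, hc₂, -, v, u, hvc, huc, hv, hu, hbd⟩ := hA'
  have b2 : ∀ x y, |c₂ (x, y)| ≤ v x + u y := fun x y => by
    have := hbd x y; have := abs_nonneg (c₁ x); linarith
  have r1f := (Measure.map_mono hR₁ measurable_fst).trans hF.f1
  have r1s := (Measure.map_mono hR₁ measurable_snd).trans hF.s1
  have r2f := (Measure.map_mono hR₂ measurable_fst).trans hF.f2
  have r2s := (Measure.map_mono hR₂ measurable_snd).trans hF.s2
  have s2f := r2f
  rw [← hf2] at s2f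
  have s2s := r1s
  rw [hs'] at s2s
  have M2 : Measurable c₂ := by fun_prop
  have main := opt_ineq hA hF hopt (S₁ := N.map fun ω => (X ω, Y ω))
    (S₂ := spreadM N w Z Y₁ Y₂) hR₁ hR₂
    (by rw [Measure.map_add _ _ measurable_fst, Measure.map_add _ _ measurable_fst, hf1, hf2])
    (by rw [Measure.map_add _ _ measurable_snd, Measure.map_add _ _ measurable_snd, hs, hs',
          add_comm])
    (spread_bary hw h01' hX hY₁ hY₂ hY hb (int_diff r1f r1s hV hW))
    (fun B hB => (spread_bary hw h01' hZ hY₁ hY₂ hY hb (int_diff s2f s2s hV hW) B hB).symm)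
  have hc : ∫ p, c₁ p.1 ∂(N.map fun ω => (X ω, Y ω)) = ∫ p, c₁ p.1 ∂(spreadM N w X Y₁ Y₂) := by
    have hm : ∀ η : Measure (ℝ × ℝ), ∫ p, c₁ p.1 ∂η = ∫ x, c₁ x ∂(η.map Prod.fst) := by
      intro η
      rw [integral_map (by fun_prop) hc₁.aestronglyMeasurable]
    rw [hm, hm, hf1]
  rw [hc] at main
  have main : ∫ p, c₂ p ∂(spreadM N w Z Y₁ Y₂) ≤ ∫ p, c₂ p ∂(N.map fun ω => (Z ω, Y ω)) := by
    linarith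
  obtain ⟨i1, e1⟩ := spread_int hw h01' hZ hY₁ hY₂ M2 (int_of s2f s2s hv hu M2 b2)
  have i2 := (int_of r2f r2s hv hu M2 b2).comp_measurable (f := fun ω => (Z ω, Y ω)) (by fun_prop)
  rw [e1, integral_map (by fun_prop) M2.aestronglyMeasurable] at main
  have i2 : Integrable (fun ω => c₂ (Z ω, Y ω)) N := i2
  have pos : ∀ᵐ ω ∂N, 0 < (w ω * c₂ (Z ω, Y₁ ω) + (1 - w ω) * c₂ (Z ω, Y₂ ω)) - c₂ (Z ω, Y ω) := by
    filter_upwards [h01, hb, hlt] with ω h hb hl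
    have := (hstrict (Z ω)).2 (Set.mem_univ (Y₁ ω)) (Set.mem_univ (Y₂ ω)) hl.ne h.1
      (sub_pos.2 h.2) (by ring)
    simp only [smul_eq_mul, hb] at this
    linarith
  have i3 := i1.sub i2
  have le0 : ∫ ω, ((w ω * c₂ (Z ω, Y₁ ω) + (1 - w ω) * c₂ (Z ω, Y₂ ω)) - c₂ (Z ω, Y ω)) ∂N ≤ 0 := by
    rw [integral_sub i1 i2]; linarith
  have eq0 := le_antisymm le0 (integral_nonneg_of_ae (pos.mono fun ω h => h.le))
  rw [integral_eq_zero_iff_of_nonneg_ae (pos.mono fun ω h => h.le) i3] at eq0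
  have : ∀ᵐ ω ∂N, False := by
    filter_upwards [pos, eq0] with ω h1 h2
    exact h1.ne' h2
  simpa using this

lemma martM_compProd {μ : Measure ℝ} {κ : Kernel ℝ ℝ} [IsFiniteMeasure μ] [IsMarkovKernel κ]
    (hm : ∀ᵐ x ∂μ, Integrable id (κ x) ∧ ∫ y, y ∂(κ x) = x)
    (hi : Integrable (fun p : ℝ × ℝ => p.2 - p.1) (μ ⊗ₘ κ)) : MartM (μ ⊗ₘ κ) := by
  intro B hB
  have e : (Prod.fst ⁻¹' B : Set (ℝ × ℝ)) = B ×ˢ Set.univ := by ext; simp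
  rw [e, Measure.setIntegral_compProd hB MeasurableSet.univ hi.integrableOn]
  refine integral_eq_zero_of_ae (ae_restrict_of_ae ?_)
  filter_upwards [hm] with x hx
  have : Integrable (fun y : ℝ => y) (κ x) := hx.1
  simp only [Measure.restrict_univ, Pi.zero_apply]
  rw [integral_sub this (integrable_const x), hx.2]
  simp

lemma gap {μ ν : Measure ℝ} {c₁ : ℝ → ℝ} {c₂ : ℝ × ℝ → ℝ} (hA : AssumpA μ ν c₁ c₂)
    (hstrict : ∀ x : ℝ, StrictConvexOn ℝ Set.univ fun y => c₂ (x, y))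
    {κ : Kernel ℝ ℝ} [IsMarkovKernel κ] {μ₁ μ₂ : Measure ℝ}
    (h₁ : μ₁ ≤ μ) (h₂ : μ₂ ≤ μ)
    (hF : Feas μ ν (μ₁ ⊗ₘ κ) (μ₂ ⊗ₘ κ))
    (hopt : RelaxedValue μ ν ![fun p => c₁ p.1, c₂] ≤
      ∫ p, c₁ p.1 ∂(μ₁ ⊗ₘ κ) + ∫ p, c₂ p ∂(μ₂ ⊗ₘ κ))
    {a b : ℝ} (hab : a < b)
    (hpos : μ₁ {x | 0 < κ x (Iic a) ∧ 0 < κ x (Ici b)} ≠ 0) :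
    (μ₂ ⊗ₘ κ) (univ ×ˢ Ioo a b) = 0 := by
  have hμ : IsProbabilityMeasure μ := hA.1
  have : IsFiniteMeasure μ₁ := isFiniteMeasure_of_le μ h₁
  have : IsFiniteMeasure μ₂ := isFiniteMeasure_of_le μ h₂
  have u₁ : μ₁ univ ≤ 1 := (h₁ univ).trans (by simp)
  have u₂ : μ₂ univ ≤ 1 := (h₂ univ).trans (by simp)
  have cu : ∀ (ρ : Measure ℝ) [IsFiniteMeasure ρ] {β : Type} [MeasurableSpace β] (η : Kernel ℝ β)
      [IsMarkovKernel η], (ρ ⊗ₘ η) univ = ρ univ := by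
    intro ρ _ β _ η _
    rw [Measure.compProd_apply MeasurableSet.univ]; simp
  set M := (μ₁ ⊗ₘ (κ ×ₖ κ)).prod (μ₂ ⊗ₘ κ) with hM
  set D : Set ((ℝ × ℝ × ℝ) × (ℝ × ℝ)) := (univ ×ˢ (Iic a ×ˢ Ici b)) ×ˢ (univ ×ˢ Ioo a b) with hD
  have mD : MeasurableSet D :=
    (MeasurableSet.univ.prod (measurableSet_Iic.prod measurableSet_Ici)).prod
      (MeasurableSet.univ.prod measurableSet_Ioo)
  set N := (1 / 2 : ℝ≥0∞) • M.restrict D with hN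
  have NleM : N ≤ (1 / 2 : ℝ≥0∞) • M := by
    rw [hN]
    gcongr
    exact Measure.restrict_le_self
  have aeD : ∀ᵐ ω ∂N, ω ∈ D := Measure.ae_smul_measure (ae_restrict_mem mD) _
  let w : (ℝ × ℝ × ℝ) × (ℝ × ℝ) → ℝ := fun ω => (ω.1.2.2 - ω.2.2) / (ω.1.2.2 - ω.1.2.1)
  have hw : Measurable w := by fun_prop
  have facts : ∀ᵐ ω ∂N, ω.1.2.1 < ω.2.2 ∧ ω.2.2 < ω.1.2.2 := by
    filter_upwards [aeD] with ω h
    simp only [hD, mem_prod, mem_univ, true_and, mem_Iic, mem_Ici, mem_Ioo] at h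
    exact ⟨by linarith, by linarith⟩
  have h01 : ∀ᵐ ω ∂N, 0 < w ω ∧ w ω < 1 := by
    filter_upwards [facts] with ω h
    have : 0 < ω.1.2.2 - ω.1.2.1 := by linarith
    refine ⟨div_pos (by linarith) this, ?_⟩
    rw [div_lt_one this]; linarith
  have h01' : ∀ᵐ ω ∂N, 0 ≤ w ω ∧ w ω ≤ 1 := h01.mono fun ω h => ⟨h.1.le, h.2.le⟩
  have wdl := wd_sum hw h01'
  have Mmap1 : M.map (fun ω => (ω.1.1, ω.1.2.1)) ≤ μ₁ ⊗ₘ κ := by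
    have e : (fun ω : (ℝ × ℝ × ℝ) × (ℝ × ℝ) => (ω.1.1, ω.1.2.1)) =
      (Prod.map id Prod.fst) ∘ Prod.fst := rfl
    rw [e, ← Measure.map_map (by fun_prop) measurable_fst, hM, Measure.map_fst_prod,
      Measure.map_smul, ← Measure.compProd_map measurable_fst, cu]
    have : (κ ×ₖ κ).map Prod.fst = κ := by
      ext1 x; rw [Kernel.map_apply _ measurable_fst, Kernel.prod_apply, Measure.map_fst_prod]; simp
    rw [this]
    calc μ₂ univ • (μ₁ ⊗ₘ κ) ≤ (1 : ℝ≥0∞) • (μ₁ ⊗ₘ κ) := by gcongr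
      _ = _ := one_smul _ _
  have Mmap2 : M.map (fun ω => (ω.1.1, ω.1.2.2)) ≤ μ₁ ⊗ₘ κ := by
    have e : (fun ω : (ℝ × ℝ × ℝ) × (ℝ × ℝ) => (ω.1.1, ω.1.2.2)) =
      (Prod.map id Prod.snd) ∘ Prod.fst := rfl
    rw [e, ← Measure.map_map (by fun_prop) measurable_fst, hM, Measure.map_fst_prod,
      Measure.map_smul, ← Measure.compProd_map measurable_snd, cu]
    have : (κ ×ₖ κ).map Prod.snd = κ := by
      ext1 x; rw [Kernel.map_apply _ measurable_snd, Kernel.prod_apply, Measure.map_snd_prod]; simp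
    rw [this]
    calc μ₂ univ • (μ₁ ⊗ₘ κ) ≤ (1 : ℝ≥0∞) • (μ₁ ⊗ₘ κ) := by gcongr
      _ = _ := one_smul _ _
  have Mmap3 : M.map (fun ω => (ω.2.1, ω.2.2)) ≤ μ₂ ⊗ₘ κ := by
    have e : (fun ω : (ℝ × ℝ × ℝ) × (ℝ × ℝ) => (ω.2.1, ω.2.2)) = Prod.snd := rfl
    rw [e, hM, Measure.map_snd_prod, cu]
    calc μ₁ univ • (μ₂ ⊗ₘ κ) ≤ (1 : ℝ≥0∞) • (μ₂ ⊗ₘ κ) := by gcongr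
      _ = _ := one_smul _ _
  have half : ∀ (η γ : Measure (ℝ × ℝ)), η ≤ γ → (1 / 2 : ℝ≥0∞) • η ≤ (1 / 2 : ℝ≥0∞) • γ := by
    intro η γ h; gcongr
  have hR₁ : spreadM N w (fun ω => ω.1.1) (fun ω => ω.1.2.1) (fun ω => ω.1.2.2) ≤ μ₁ ⊗ₘ κ := by
    have l1 : (N.withDensity fun ω => ENNReal.ofReal (w ω)).map
        (fun ω => (ω.1.1, ω.1.2.1)) ≤ (1 / 2 : ℝ≥0∞) • (μ₁ ⊗ₘ κ) := by
      have : (N.withDensity fun ω => ENNReal.ofReal (w ω)) ≤ N := by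
        conv_rhs => rw [← wdl]
        exact Measure.le_add_right le_rfl
      refine (Measure.map_mono (this.trans NleM) (by fun_prop)).trans ?_
      rw [Measure.map_smul]
      exact half _ _ Mmap1
    have l2 : (N.withDensity fun ω => ENNReal.ofReal (1 - w ω)).map
        (fun ω => (ω.1.1, ω.1.2.2)) ≤ (1 / 2 : ℝ≥0∞) • (μ₁ ⊗ₘ κ) := by
      have : (N.withDensity fun ω => ENNReal.ofReal (1 - w ω)) ≤ N := by
        conv_rhs => rw [← wdl]
        exact Measure.le_add_left le_rfl
      refine (Measure.map_mono (this.trans NleM) (by fun_prop)).trans ?_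
      rw [Measure.map_smul]
      exact half _ _ Mmap2
    unfold spreadM
    refine (add_le_add l1 l2).trans ?_
    rw [← add_smul, ENNReal.add_halves, one_smul]
  have hR₂ : N.map (fun ω => (ω.2.1, ω.2.2)) ≤ μ₂ ⊗ₘ κ := by
    refine (Measure.map_mono NleM (by fun_prop)).trans ?_
    rw [Measure.map_smul]
    refine (half _ _ Mmap3).trans ?_
    calc (1 / 2 : ℝ≥0∞) • (μ₂ ⊗ₘ κ) ≤ (1 : ℝ≥0∞) • (μ₂ ⊗ₘ κ) := by
          gcongr
          exact ENNReal.half_le_self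
      _ = _ := one_smul _ _
  have N0 : N = 0 := no_improve hA hstrict hF hopt hw h01 (by fun_prop)
    (Z := fun ω => ω.2.1) (by fun_prop) (by fun_prop) (by fun_prop)
    (Y := fun ω => ω.2.2) (by fun_prop)
    (by
      filter_upwards [facts] with ω h
      have : ω.1.2.2 - ω.1.2.1 ≠ 0 := by linarith
      simp only [w]
      field_simp
      ring)
    (facts.mono fun ω h => h.1.trans h.2) hR₁ hR₂
  have M0 : M D = 0 := by
    have : N univ = 0 := by rw [N0]; rfl
    simpa [hN] using this
  rw [hM, hD, Measure.prod_prod, mul_eq_zero] at M0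
  refine M0.resolve_left fun h => hpos ?_
  rw [Measure.compProd_apply (MeasurableSet.univ.prod (measurableSet_Iic.prod measurableSet_Ici)),
    lintegral_eq_zero_iff (Kernel.measurable_kernel_prodMk_left
      (MeasurableSet.univ.prod (measurableSet_Iic.prod measurableSet_Ici)))] at h
  have : ∀ᵐ x ∂μ₁, ¬ (0 < κ x (Iic a) ∧ 0 < κ x (Ici b)) := by
    filter_upwards [h] with x hx
    have e : (Prod.mk x ⁻¹' (univ ×ˢ (Iic a ×ˢ Ici b)) : Set (ℝ × ℝ)) = Iic a ×ˢ Ici b := by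
      ext; simp
    rw [e, Kernel.prod_apply, Measure.prod_prod, Pi.zero_apply, mul_eq_zero] at hx
    rintro ⟨p, q⟩
    rcases hx with hx | hx
    · exact p.ne' hx
    · exact q.ne' hx
  rw [ae_iff] at this
  simpa only [not_not] using this

/-- Left endpoints of components of `U`. -/
lemma left_endpoints_countable (U : Set ℝ) :
    {y : ℝ | y ∉ U ∧ ∃ r : ℚ, y < r ∧ Ioo y (r : ℝ) ⊆ U}.Countable := by
  have : {y : ℝ | y ∉ U ∧ ∃ r : ℚ, y < r ∧ Ioo y (r : ℝ) ⊆ U} =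
      ⋃ r : ℚ, {y : ℝ | y ∉ U ∧ y < r ∧ Ioo y (r : ℝ) ⊆ U} := by
    ext y; simp
  rw [this]
  refine countable_iUnion fun r => Set.Subsingleton.countable ?_
  rintro y ⟨hy, hyr, hyU⟩ z ⟨hz, hzr, hzU⟩
  by_contra hne
  rcases lt_or_gt_of_ne hne with h | h
  · exact hz (hyU ⟨h, hzr⟩)
  · exact hy (hzU ⟨h, hyr⟩)

lemma eq_dirac_of {ρ : Measure ℝ} [IsProbabilityMeasure ρ] {x : ℝ} (hi : Integrable id ρ)
    (hm : ∫ y, y ∂ρ = x) {U : Set ℝ}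
    (hU : ∀ a b : ℚ, a < b → 0 < ρ (Iic (a : ℝ)) → 0 < ρ (Ici (b : ℝ)) → Ioo (a : ℝ) b ⊆ U)
    (hU0 : ρ U = 0) (hC : ρ {y : ℝ | y ∉ U ∧ ∃ r : ℚ, y < r ∧ Ioo y (r : ℝ) ⊆ U} = 0) :
    ∀ᵐ y ∂ρ, y = x := by
  have hid : Integrable (fun y : ℝ => y) ρ := hi
  have hsub : ∫ y, (y - x) ∂ρ = 0 := by
    rw [integral_sub hid (integrable_const x), hm]; simp
  have hisub : Integrable (fun y => y - x) ρ := hid.sub (integrable_const x)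
  have right0 : ρ (Ioi x) = 0 → ∀ᵐ y ∂ρ, y = x := by
    intro h
    have hle : ∀ᵐ y ∂ρ, y ≤ x := by
      rw [ae_iff]; simpa [Ioi] using h
    have h0 : ∫ y, (x - y) ∂ρ = 0 := by
      rw [integral_sub (integrable_const x) hid, hm]; simp
    rw [integral_eq_zero_iff_of_nonneg_ae (hle.mono fun y h => sub_nonneg.2 h)
      ((integrable_const x).sub hid)] at h0
    filter_upwards [h0] with y hy
    simp only [Pi.zero_apply] at hy
    linarith
  have left0 : ρ (Iio x) = 0 → ∀ᵐ y ∂ρ, y = x := by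
    intro h
    have hle : ∀ᵐ y ∂ρ, x ≤ y := by
      rw [ae_iff]; simpa [Iio] using h
    rw [integral_eq_zero_iff_of_nonneg_ae (hle.mono fun y h => sub_nonneg.2 h) hisub] at hsub
    filter_upwards [hsub] with y hy
    simp only [Pi.zero_apply] at hy
    linarith
  by_contra hcon
  have pL : ρ (Iio x) ≠ 0 := fun h => hcon (left0 h)
  have pR : ρ (Ioi x) ≠ 0 := fun h => hcon (right0 h)
  -- rational points
  have ratL : ∀ y : ℝ, ρ (Iio y) ≠ 0 → ∃ a : ℚ, (a : ℝ) < y ∧ 0 < ρ (Iic (a : ℝ)) := by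
    intro y hy
    by_contra! hno
    refine hy (measure_mono_null (t := ⋃ a : {a : ℚ // (a : ℝ) < y}, Iic (a.1 : ℝ)) ?_ ?_)
    · intro z hz
      obtain ⟨q, h1, h2⟩ := exists_rat_btwn (show z < y from hz)
      exact mem_iUnion.2 ⟨⟨q, h2⟩, h1.le⟩
    · exact measure_iUnion_null fun a => le_antisymm (hno a.1 a.2) (zero_le)
  obtain ⟨b, hxb, hb⟩ : ∃ b : ℚ, x < (b : ℝ) ∧ 0 < ρ (Ici (b : ℝ)) := by
    by_contra! hno
    refine pR (measure_mono_null (t := ⋃ a : {a : ℚ // x < (a : ℝ)}, Ici (a.1 : ℝ)) ?_ ?_)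
    · intro z hz
      obtain ⟨q, h1, h2⟩ := exists_rat_btwn (show x < z from hz)
      exact mem_iUnion.2 ⟨⟨q, h1⟩, h2.le⟩
    · exact measure_iUnion_null fun a => le_antisymm (hno a.1 a.2) (zero_le)
  obtain ⟨a, hax, ha⟩ := ratL x pL
  -- the set of points with mass strictly below
  set A : Set ℝ := {y | ρ (Iio y) ≠ 0} with hAdef
  have hAb : ∀ y ∈ A, y < b → y ∈ U := by
    intro y hy hyb
    obtain ⟨a', h1, h2⟩ := ratL y hy
    exact hU a' b (by exact_mod_cast h1.trans hyb) h2 hb ⟨h1, hyb⟩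
  have hAup : ∀ y ∈ A, ∀ z, y ≤ z → z ∈ A := by
    intro y hy z hyz h
    exact hy (measure_mono_null (Iio_subset_Iio hyz) h)
  have hxA : x ∈ A := pL
  have hAopen : ∀ y ∈ A, ∃ z ∈ A, z < y := by
    intro y hy
    obtain ⟨a', h1, h2⟩ := ratL y hy
    obtain ⟨z, h3, h4⟩ := exists_between h1
    exact ⟨z, fun h => h2.ne' (measure_mono_null (fun t ht => lt_of_le_of_lt ht h3) h), h4⟩
  -- mass of the complement of A below x is positive
  have hpos : ρ (Iio x \ U) ≠ 0 := by
    rwa [measure_sdiff_null hU0]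
  have hsubA : Iio x \ U ⊆ Aᶜ := by
    rintro y ⟨hyx, hyU⟩ hyA
    exact hyU (hAb y hyA (lt_trans hyx hxb))
  have hne : (Iio x \ U).Nonempty := nonempty_of_measure_ne_zero hpos
  obtain ⟨y0, hy0⟩ := hne
  have hbelow : BddBelow A := by
    refine ⟨y0, fun z hz => ?_⟩
    by_contra h
    exact hsubA hy0 (hAup z hz _ (not_le.1 h).le)
  set m := sInf A with hmdef
  have hmA : m ∉ A := by
    intro h
    obtain ⟨z, hz, hzm⟩ := hAopen m h
    exact (csInf_le hbelow hz).not_gt hzm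
  have hgt : ∀ z, m < z → z ∈ A := by
    intro z hz
    obtain ⟨t, ht, htz⟩ := exists_lt_of_csInf_lt ⟨x, hxA⟩ hz
    exact hAup t ht z htz.le
  have hm0 : ρ (Iio m) = 0 := by
    by_contra h; exact hmA h
  have hmass : ρ {m} ≠ 0 := by
    intro h
    refine hpos (measure_mono_null (t := Iio m ∪ {m}) ?_ (measure_union_null hm0 h))
    intro y hy
    have : y ≤ m := by
      by_contra hh
      exact hsubA hy (hgt y (not_le.1 hh))
    rcases this.lt_or_eq with h | h
    · exact Or.inl h
    · exact Or.inr h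
  have hmU : m ∉ U := fun h => hmass (measure_mono_null (singleton_subset_iff.2 h) hU0)
  have hmx : m ≤ x := csInf_le hbelow hxA
  refine hmass (measure_mono_null (singleton_subset_iff.2 ?_) hC)
  exact ⟨hmU, b, lt_of_le_of_lt hmx hxb, fun z hz => hAb z (hgt z hz.1) hz.2⟩

/-- Theorem (main): under [A], strict convexity of `y ↦ c₂(x,y)`, `c₁(x) ≠ c₂(x,x)` μ-a.e.,
absolute continuity of `ν`, and `P_c = P̄_c`, every optimal pair `(π, μ₁)` for the primal
problem satisfies `μ₁ ⊥ (μ - μ₁)`. -/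
theorem nonrandomized_optimal_exercise
    (μ ν : Measure ℝ) (c₁ : ℝ → ℝ) (c₂ : ℝ × ℝ → ℝ)
    (hA : AssumpA μ ν c₁ c₂)
    (hstrict : ∀ x : ℝ, StrictConvexOn ℝ Set.univ fun y => c₂ (x, y))
    (hne : ∀ᵐ x ∂μ, c₁ x ≠ c₂ (x, x))
    (hac : ν ≪ (volume : Measure ℝ))
    (heq : PrimalValue μ ν c₁ c₂ = RelaxedValue μ ν ![fun p => c₁ p.1, c₂]) :
    ∀ (κ : Kernel ℝ ℝ) (μ₁ : Measure ℝ), MartKernel μ ν κ → μ₁ ≤ μ →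
      ∫ p, c₁ p.1 ∂(μ₁ ⊗ₘ κ) + ∫ p, c₂ p ∂((μ - μ₁) ⊗ₘ κ) = PrimalValue μ ν c₁ c₂ →
      μ₁ ⟂ₘ (μ - μ₁) := by
  intro κ μ₁ hK hle hval
  have hμ : IsProbabilityMeasure μ := hA.1
  obtain ⟨hκ, hs, hm⟩ := id hK
  have : IsFiniteMeasure μ₁ := isFiniteMeasure_of_le μ hle
  have hsum := Measure.sub_add_cancel_of_le hle
  set μ₂ := μ - μ₁ with hμ₂
  have h2le : μ₂ ≤ μ := by rw [← hsum]; exact Measure.le_add_right le_rfl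
  have : IsFiniteMeasure μ₂ := isFiniteMeasure_of_le μ h2le
  have hV : Integrable id μ := hA.2.2.1
  have hW : Integrable id ν := hA.2.2.2.1
  have hπ : μ₁ ⊗ₘ κ + μ₂ ⊗ₘ κ = μ ⊗ₘ κ := by
    rw [← Measure.compProd_add_left, add_comm, hsum]
  have hfst : (μ ⊗ₘ κ).map Prod.fst = μ := Measure.fst_compProd μ κ
  -- sub-measures of `μ`
  have sub : ∀ ρ : Measure ℝ, ρ ≤ μ →
      ρ ⊗ₘ κ ≤ μ ⊗ₘ κ ∧ (ρ ⊗ₘ κ).map Prod.fst ≤ μ ∧ (ρ ⊗ₘ κ).map Prod.snd ≤ ν ∧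
        MartM (ρ ⊗ₘ κ) := by
    intro ρ hρ
    have : IsFiniteMeasure ρ := isFiniteMeasure_of_le μ hρ
    have hl : ρ ⊗ₘ κ ≤ μ ⊗ₘ κ := by
      have e := Measure.sub_add_cancel_of_le hρ
      have : IsFiniteMeasure (μ - ρ) :=
        isFiniteMeasure_of_le μ (by conv_rhs => rw [← e]
                                    exact Measure.le_add_right le_rfl)
      conv_rhs => rw [← e, Measure.compProd_add_left]
      exact Measure.le_add_left le_rfl
    have a1 : (ρ ⊗ₘ κ).map Prod.fst ≤ μ := by
      have := Measure.map_mono hl measurable_fst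
      rwa [hfst] at this
    have a2 : (ρ ⊗ₘ κ).map Prod.snd ≤ ν := by
      have := Measure.map_mono hl measurable_snd
      rwa [hs] at this
    exact ⟨hl, a1, a2, martM_compProd ((Measure.absolutelyContinuous_of_le hρ).ae_le hm)
      (int_diff a1 a2 hV hW)⟩
  have hF : Feas μ ν (μ₁ ⊗ₘ κ) (μ₂ ⊗ₘ κ) :=
    ⟨inferInstance, inferInstance, by rw [hπ, hfst], by rw [hπ, hs], (sub μ₁ hle).2.2.2,
      (sub μ₂ h2le).2.2.2⟩
  have hopt : RelaxedValue μ ν ![fun p => c₁ p.1, c₂] ≤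
      ∫ p, c₁ p.1 ∂(μ₁ ⊗ₘ κ) + ∫ p, c₂ p ∂(μ₂ ⊗ₘ κ) := by rw [hval, heq]
  rw [Measure.mutuallySingular_iff_disjoint]
  intro l hl1 hl2
  by_contra hl0
  have hlμ : l ≤ μ := hl1.trans hle
  have : IsFiniteMeasure l := isFiniteMeasure_of_le μ hlμ
  have lac : l ≪ μ := Measure.absolutelyContinuous_of_le hlμ
  have mono2 : ∀ ρ σ : Measure ℝ, IsFiniteMeasure σ → ρ ≤ σ → ρ ⊗ₘ κ ≤ σ ⊗ₘ κ := by
    intro ρ σ _ h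
    have : IsFiniteMeasure ρ := isFiniteMeasure_of_le σ h
    have e := Measure.sub_add_cancel_of_le h
    have : IsFiniteMeasure (σ - ρ) :=
      isFiniteMeasure_of_le σ (by conv_rhs => rw [← e]
                                  exact Measure.le_add_right le_rfl)
    conv_rhs => rw [← e, Measure.compProd_add_left]
    exact Measure.le_add_left le_rfl
  -- the open set charged by no mass of the second option
  let U : Set ℝ := ⋃ q : {q : ℚ × ℚ // q.1 < q.2 ∧
    l {x | 0 < κ x (Iic (q.1 : ℝ)) ∧ 0 < κ x (Ici (q.2 : ℝ))} ≠ 0}, Ioo (q.1.1 : ℝ) q.1.2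
  have mU : MeasurableSet U := MeasurableSet.iUnion fun _ => measurableSet_Ioo
  have hU0 : (μ₂ ⊗ₘ κ) (univ ×ˢ U) = 0 := by
    simp only [U, prod_iUnion]
    refine measure_iUnion_null fun q => ?_
    refine gap hA hstrict hle h2le hF hopt (by exact_mod_cast q.2.1) fun h => q.2.2 ?_
    exact le_antisymm ((hl1 _).trans h.le) (zero_le)
  have fib : ∀ (ρ : Measure ℝ) [IsFiniteMeasure ρ] (C : Set ℝ), MeasurableSet C →
      (ρ ⊗ₘ κ) (univ ×ˢ C) = 0 → ∀ᵐ x ∂ρ, κ x C = 0 := by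
    intro ρ _ C hC h
    rw [Measure.compProd_apply (MeasurableSet.univ.prod hC), lintegral_eq_zero_iff
      (Kernel.measurable_kernel_prodMk_left (MeasurableSet.univ.prod hC))] at h
    filter_upwards [h] with x hx
    have e : (Prod.mk x ⁻¹' (univ ×ˢ C) : Set ℝ) = C := by ext; simp
    rwa [e] at hx
  have hU0' : ∀ᵐ x ∂l, κ x U = 0 :=
    (Measure.absolutelyContinuous_of_le hl2).ae_le (fib μ₂ U mU hU0)
  have hCc := left_endpoints_countable U
  have hC0 : ∀ᵐ x ∂l, κ x {y : ℝ | y ∉ U ∧ ∃ r : ℚ, y < r ∧ Ioo y (r : ℝ) ⊆ U} = 0 := by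
    refine lac.ae_le (fib μ _ hCc.measurableSet ?_)
    have h0 := hac (hCc.measure_zero volume)
    rw [← hs, Measure.map_apply measurable_snd hCc.measurableSet] at h0
    rwa [univ_prod]
  have hG : ∀ᵐ x ∂l, ∀ a b : ℚ, a < b → 0 < κ x (Iic (a : ℝ)) → 0 < κ x (Ici (b : ℝ)) →
      Ioo (a : ℝ) b ⊆ U := by
    rw [ae_all_iff]; intro a
    rw [ae_all_iff]; intro b
    by_cases hab : a < b ∧ l {x | 0 < κ x (Iic (a : ℝ)) ∧ 0 < κ x (Ici (b : ℝ))} ≠ 0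
    · refine Filter.Eventually.of_forall fun x _ _ _ => ?_
      exact subset_iUnion (fun q : {q : ℚ × ℚ // q.1 < q.2 ∧
        l {x | 0 < κ x (Iic (q.1 : ℝ)) ∧ 0 < κ x (Ici (q.2 : ℝ))} ≠ 0} =>
          Ioo (q.1.1 : ℝ) q.1.2) ⟨(a, b), hab⟩
    · by_cases h : a < b
      · have h0 : l {x | 0 < κ x (Iic (a : ℝ)) ∧ 0 < κ x (Ici (b : ℝ))} = 0 := by
          by_contra h'; exact hab ⟨h, h'⟩
        have : ∀ᵐ x ∂l, ¬ (0 < κ x (Iic (a : ℝ)) ∧ 0 < κ x (Ici (b : ℝ))) := by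
          rw [ae_iff]; simpa only [not_not] using h0
        filter_upwards [this] with x hx _ h1 h2
        exact absurd ⟨h1, h2⟩ hx
      · exact Filter.Eventually.of_forall fun x h' => absurd h' h
  have hdirac : ∀ᵐ x ∂l, ∀ᵐ y ∂(κ x), y = x := by
    filter_upwards [hU0', hC0, hG, lac.ae_le hm] with x h1 h2 h3 h4
    exact eq_dirac_of h4.1 h4.2 h3 h1 h2
  -- equality of payoffs
  have hA' := hA
  obtain ⟨-, -, -, -, hc₁, hc₂, -, v, w, hvc, hwc, hv, hw, hb⟩ := hA'
  have b1 : ∀ x y, |c₁ x| ≤ v x + w y := fun x y => by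
    have := hb x y; have := abs_nonneg (c₂ (x, y)); linarith
  have b2 : ∀ x y, |c₂ (x, y)| ≤ v x + w y := fun x y => by
    have := hb x y; have := abs_nonneg (c₁ x); linarith
  have M1 : Measurable (fun p : ℝ × ℝ => c₁ p.1) := by fun_prop
  have M2 : Measurable c₂ := by fun_prop
  have fb : ∀ B : Set ℝ, ∫ p, c₁ p.1 ∂(l.restrict B ⊗ₘ κ) = ∫ p, c₂ p ∂(l.restrict B ⊗ₘ κ) := by
    intro B
    have hB : l.restrict B ≤ l := Measure.restrict_le_self
    have k := (sub _ (hB.trans hlμ)).2.2.2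
    have z : ∀ B : Set ℝ, MeasurableSet B →
        ∫ p in Prod.fst ⁻¹' B, (p.2 - p.1) ∂(0 : Measure (ℝ × ℝ)) = 0 := by
      intro B _; simp
    have e1 := opt_ineq hA hF hopt (R₁ := l.restrict B ⊗ₘ κ) (R₂ := 0) (S₁ := 0)
      (S₂ := l.restrict B ⊗ₘ κ) (mono2 _ _ inferInstance (hB.trans hl1)) (Measure.zero_le _)
      (by rw [add_comm]) (by rw [add_comm]) (fun B hB => by rw [k B hB, z B hB])
      (fun B hB => by rw [k B hB, z B hB])
    have e2 := opt_ineq hA hF hopt (R₂ := l.restrict B ⊗ₘ κ) (R₁ := 0) (S₂ := 0)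
      (S₁ := l.restrict B ⊗ₘ κ) (Measure.zero_le _) (mono2 _ _ inferInstance (hB.trans hl2))
      (by rw [add_comm]) (by rw [add_comm]) (fun B hB => by rw [k B hB, z B hB])
      (fun B hB => by rw [k B hB, z B hB])
    simp only [integral_zero_measure, zero_add, add_zero] at e1 e2
    exact le_antisymm e2 e1
  have hlk := sub l hlμ
  have I1 : Integrable (fun p : ℝ × ℝ => c₁ p.1) (l ⊗ₘ κ) :=
    int_of hlk.2.1 hlk.2.2.1 hv hw M1 b1
  have I2 : Integrable c₂ (l ⊗ₘ κ) := int_of hlk.2.1 hlk.2.2.1 hv hw M2 b2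
  have d2 : (fun x => ∫ y, c₂ (x, y) ∂(κ x)) =ᵐ[l] fun x => c₂ (x, x) := by
    filter_upwards [hdirac] with x hx
    have : ∫ y, c₂ (x, y) ∂(κ x) = ∫ y, c₂ (x, x) ∂(κ x) :=
      integral_congr_ae (hx.mono fun y hy => by simp only [hy])
    rw [this]; simp
  have J1 : Integrable c₁ l := by
    have := MeasureTheory.Integrable.integral_compProd I1
    simpa using this
  have J2 : Integrable (fun x => c₂ (x, x)) l :=
    (MeasureTheory.Integrable.integral_compProd I2).congr d2
  have heqae := J1.ae_eq_of_forall_setIntegral_eq _ _ J2 (by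
    intro B hB _
    have hBl : l.restrict B ⊗ₘ κ ≤ l ⊗ₘ κ := mono2 _ _ inferInstance Measure.restrict_le_self
    have := fb B
    rw [Measure.integral_compProd (I1.mono_measure hBl),
      Measure.integral_compProd (I2.mono_measure hBl)] at this
    rw [integral_congr_ae (ae_restrict_of_ae d2)] at this
    simpa using this)
  have : ∀ᵐ x ∂l, False := by
    filter_upwards [heqae, lac.ae_le hne] with x h1 h2
    exact h2 h1
  exact hl0 (by simpa using this : l = 0).le

end
end

section
/- Assume [A], that y ↦ c₂(x,y) is strictly convex for each x, that c₁(x) ≠ c₂(x,x) for μ-a.e. x, that ν is absolutely continuous with respect to Lebesgue measure, and that P_c = P̄_c. Then for any fixed π ∈ ℳ(μ,ν), if (π, μ₁) and (π, μ₁′) are both optimal for the primal problem P_c, then μ₁ = μ₁′; that is, given any optimal model π, the optimal exercise measure μ₁ is unique. -/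
open MeasureTheory ProbabilityTheory Set
open scoped ENNReal

noncomputable section

/-- Good measures: finite, integrable coordinates, and martingale in weak form. -/
def GoodM (γ : Measure (ℝ × ℝ)) : Prop :=
  IsFiniteMeasure γ ∧ Integrable (fun p : ℝ × ℝ => p.1) γ ∧ Integrable (fun p : ℝ × ℝ => p.2) γ ∧
    ∀ B : Set ℝ, MeasurableSet B → ∫ p in Prod.fst ⁻¹' B, (p.2 - p.1) ∂γ = 0

lemma GoodM.exists_kernel {γ : Measure (ℝ × ℝ)} (h : GoodM γ) :
    ∃ κ : Kernel ℝ ℝ, IsMarkovKernel κ ∧ γ.map Prod.fst ⊗ₘ κ = γ ∧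
    ∀ᵐ x ∂(γ.map Prod.fst), Integrable id (κ x) ∧ ∫ y, y ∂(κ x) = x := by
  obtain ⟨hf, h1, h2, hB⟩ := h
  have hd : γ.fst ⊗ₘ γ.condKernel = γ := γ.disintegrate γ.condKernel
  refine ⟨γ.condKernel, inferInstance, hd, ?_⟩
  change ∀ᵐ x ∂γ.fst, _
  have h21 : Integrable (fun p : ℝ × ℝ => p.2 - p.1) (γ.fst ⊗ₘ γ.condKernel) := by
    rw [hd]; exact h2.sub h1
  have h2' : Integrable (fun p : ℝ × ℝ => p.2) (γ.fst ⊗ₘ γ.condKernel) := by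
    rw [hd]; exact h2
  have hi := ((Measure.integrable_compProd_iff h2'.aestronglyMeasurable).1 h2').1
  have hI : Integrable (fun x => ∫ y, (y - x) ∂(γ.condKernel x)) γ.fst := 
    Integrable.integral_compProd (κ := Kernel.const Unit γ.fst)
      (η := Kernel.prodMkLeft Unit γ.condKernel) (a := ()) h21
  have hz : (fun x => ∫ y, (y - x) ∂(γ.condKernel x)) =ᵐ[γ.fst] 0 := by
    refine hI.ae_eq_zero_of_forall_setIntegral_eq_zero fun B hBm _ => ?_
    have := Measure.setIntegral_compProd (μ := γ.fst) (κ := γ.condKernel)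
      (f := fun p : ℝ × ℝ => p.2 - p.1) hBm MeasurableSet.univ h21.integrableOn
    rw [hd] at this
    simp only [Measure.restrict_univ] at this
    rw [← this, ← hB B hBm]
    congr 2
    ext; simp
  filter_upwards [hi, hz] with x hx hx0
  refine ⟨hx, ?_⟩
  have : ∫ y, (y - x) ∂(γ.condKernel x) = 0 := hx0
  rw [integral_sub hx (integrable_const _)] at this
  simp at this
  linarith

lemma GoodM.isSubMart {γ : Measure (ℝ × ℝ)} (h : GoodM γ) : IsSubMart γ :=
  ⟨h.1, Or.inr h.exists_kernel⟩

lemma GoodM.mem_MT {γ : Measure (ℝ × ℝ)} {μ ν : Measure ℝ} (h : GoodM γ)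
    (h1 : γ.map Prod.fst = μ) (h2 : γ.map Prod.snd = ν) : γ ∈ MT μ ν := by
  obtain ⟨κ, hk, he, hm⟩ := h.exists_kernel
  rw [h1] at he hm
  exact ⟨κ, ⟨hk, by rw [he, h2], hm⟩, he.symm⟩

lemma compProd_left_mono {σ μ : Measure ℝ} [IsFiniteMeasure μ] (h : σ ≤ μ)
    (κ : Kernel ℝ ℝ) : σ ⊗ₘ κ ≤ μ ⊗ₘ κ := by
  have : IsFiniteMeasure σ := isFiniteMeasure_of_le μ h
  rw [← Measure.sub_add_cancel_of_le h]
  have : IsFiniteMeasure (μ - σ) := isFiniteMeasure_of_le μ Measure.sub_le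
  rw [Measure.compProd_add_left]
  exact Measure.le_add_left le_rfl

lemma goodM_compProd {μ ν σ : Measure ℝ} {κ : Kernel ℝ ℝ} [IsFiniteMeasure μ]
    (hμ : Integrable id μ) (hν : Integrable id ν) (hk : MartKernel μ ν κ) (hσ : σ ≤ μ) :
    GoodM (σ ⊗ₘ κ) := by
  obtain ⟨hM, hs, hm⟩ := hk
  have : IsFiniteMeasure σ := isFiniteMeasure_of_le μ hσ
  have hle := compProd_left_mono hσ κ
  have h1 : Integrable (fun p : ℝ × ℝ => p.1) (σ ⊗ₘ κ) := by
    refine Integrable.mono_measure ?_ hle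
    have : Integrable id ((μ ⊗ₘ κ).map Prod.fst) := by
      rw [show (μ ⊗ₘ κ).map Prod.fst = μ from Measure.fst_compProd μ κ]; exact hμ
    exact this.comp_measurable measurable_fst
  have h2 : Integrable (fun p : ℝ × ℝ => p.2) (σ ⊗ₘ κ) := by
    refine Integrable.mono_measure ?_ hle
    rw [← hs] at hν
    exact hν.comp_measurable measurable_snd
  refine ⟨inferInstance, h1, h2, fun B hB => ?_⟩
  have h21 : Integrable (fun p : ℝ × ℝ => p.2 - p.1) (σ ⊗ₘ κ) := h2.sub h1
  have := Measure.setIntegral_compProd (μ := σ) (κ := κ)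
      (f := fun p : ℝ × ℝ => p.2 - p.1) hB MeasurableSet.univ h21.integrableOn
  have e : (Prod.fst ⁻¹' B : Set (ℝ × ℝ)) = B ×ˢ univ := by ext; simp
  rw [e, this]
  refine integral_eq_zero_of_ae (ae_restrict_of_ae ?_)
  have hm' := ae_mono hσ hm
  filter_upwards [hm'] with x hx
  simp only [Measure.restrict_univ]
  have hx1 : Integrable (fun y : ℝ => y) (κ x) := hx.1
  rw [integral_sub hx1 (integrable_const _)]
  simp [hx.2]

lemma setInt_add {γ γ' : Measure (ℝ × ℝ)} {f : ℝ × ℝ → ℝ} (s : Set (ℝ × ℝ))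
    (h : Integrable f γ) (h' : Integrable f γ') :
    ∫ p in s, f p ∂(γ + γ') = ∫ p in s, f p ∂γ + ∫ p in s, f p ∂γ' := by
  rw [Measure.restrict_add, integral_add_measure h.integrableOn h'.integrableOn]

lemma GoodM.add {γ γ' : Measure (ℝ × ℝ)} (h : GoodM γ) (h' : GoodM γ') : GoodM (γ + γ') := by
  obtain ⟨a, b, c, d⟩ := h
  obtain ⟨a', b', c', d'⟩ := h'
  refine ⟨inferInstance, b.add_measure b', c.add_measure c', fun B hB => ?_⟩
  rw [setInt_add (f := fun p : ℝ × ℝ => p.2 - p.1) _ (c.sub b) (c'.sub b'),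
    d B hB, d' B hB, add_zero]

/-- Swapping a piece of a good measure for another with same weak moments. -/
lemma GoodM.swap {R P S : Measure (ℝ × ℝ)} (h : GoodM (R + P)) [IsFiniteMeasure S]
    (h1 : Integrable (fun p : ℝ × ℝ => p.1) S) (h2 : Integrable (fun p : ℝ × ℝ => p.2) S)
    (hB : ∀ B : Set ℝ, MeasurableSet B → ∫ p in Prod.fst ⁻¹' B, (p.2 - p.1) ∂S =
      ∫ p in Prod.fst ⁻¹' B, (p.2 - p.1) ∂P) : GoodM (R + S) := by
  obtain ⟨a, b, c, d⟩ := h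
  have hR : IsFiniteMeasure R := isFiniteMeasure_of_le (R + P) (Measure.le_add_right le_rfl)
  have bR := b.left_of_add_measure
  have cR := c.left_of_add_measure
  have bP := b.right_of_add_measure
  have cP := c.right_of_add_measure
  refine ⟨inferInstance, bR.add_measure h1, cR.add_measure h2, fun B hBm => ?_⟩
  have := d B hBm
  rw [setInt_add (f := fun p : ℝ × ℝ => p.2 - p.1) _ (cR.sub bR) (cP.sub bP)] at this
  rw [setInt_add (f := fun p : ℝ × ℝ => p.2 - p.1) _ (cR.sub bR) (h2.sub h1), hB B hBm, this]

lemma exists_weight (κ : Kernel ℝ ℝ) [IsMarkovKernel κ] (r t : ℝ) (hrt : r < t) :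
    ∃ h : ℝ → ℝ → ℝ → ℝ, Measurable (fun p : ℝ × ℝ × ℝ => h p.1 p.2.1 p.2.2) ∧
      (∀ x y z, 0 ≤ h x y z) ∧ (∀ x y z, h x y z ≤ 1) ∧
      (∀ x y, Integrable id (κ x) → ∫ z, h x y z * (z - y) ∂(κ x) = 0) ∧
      (∀ x y, Integrable id (κ x) → y ∈ Ioo r t → 0 < κ x (Iio r) → 0 < κ x (Ioi t) →
        ∀ z ∈ Iio r, 0 < h x y z) := by
  classical
  set Mp : ℝ → ℝ → ℝ≥0∞ := fun x y => ∫⁻ z, (Ioi t).indicator (fun z => ENNReal.ofReal (z - y)) z ∂(κ x) with hMp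
  set Mm : ℝ → ℝ → ℝ≥0∞ := fun x y => ∫⁻ z, (Iio r).indicator (fun z => ENNReal.ofReal (y - z)) z ∂(κ x) with hMm
  set N : ℝ → ℝ≥0∞ := fun x => ∫⁻ z, ENNReal.ofReal (1 + |z| + |r| + |t|) ∂(κ x) with hN
  have mMp : Measurable (fun p : ℝ × ℝ => Mp p.1 p.2) := by
    have : Measurable (Function.uncurry fun (p : ℝ × ℝ) (z : ℝ) =>
        (Ioi t).indicator (fun z => ENNReal.ofReal (z - p.2)) z) := by
      have e : (Function.uncurry fun (p : ℝ × ℝ) (z : ℝ) =>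
        (Ioi t).indicator (fun z => ENNReal.ofReal (z - p.2)) z) =
        (Prod.snd ⁻¹' Ioi t : Set ((ℝ × ℝ) × ℝ)).indicator fun q => ENNReal.ofReal (q.2 - q.1.2) := by
        ext q; simp [Function.uncurry, indicator]
      rw [e]
      exact Measurable.indicator (by fun_prop) (measurable_snd measurableSet_Ioi)
    exact this.lintegral_kernel_prod_right (κ := κ.comap Prod.fst measurable_fst)
  have mMm : Measurable (fun p : ℝ × ℝ => Mm p.1 p.2) := by
    have : Measurable (Function.uncurry fun (p : ℝ × ℝ) (z : ℝ) =>
        (Iio r).indicator (fun z => ENNReal.ofReal (p.2 - z)) z) := by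
      have e : (Function.uncurry fun (p : ℝ × ℝ) (z : ℝ) =>
        (Iio r).indicator (fun z => ENNReal.ofReal (p.2 - z)) z) =
        (Prod.snd ⁻¹' Iio r : Set ((ℝ × ℝ) × ℝ)).indicator fun q => ENNReal.ofReal (q.1.2 - q.2) := by
        ext q; simp [Function.uncurry, indicator]
      rw [e]
      exact Measurable.indicator (by fun_prop) (measurable_snd measurableSet_Iio)
    exact this.lintegral_kernel_prod_right (κ := κ.comap Prod.fst measurable_fst)
  have mN : Measurable N := Measurable.lintegral_kernel (by fun_prop)
  have hN1 : ∀ x, N x ≠ 0 := by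
    intro x h0
    have : (1 : ℝ≥0∞) ≤ N x := by
      calc (1 : ℝ≥0∞) = ∫⁻ z, 1 ∂(κ x) := by simp
        _ ≤ N x := by
          refine lintegral_mono fun z => ?_
          rw [← ENNReal.ofReal_one]
          exact ENNReal.ofReal_le_ofReal (by have := abs_nonneg z; have := abs_nonneg r; have := abs_nonneg t; linarith)
    simp [h0] at this
  have hMpN : ∀ x y, y ∈ Ioo r t → Mp x y ≤ N x := by
    intro x y hy
    refine lintegral_mono fun z => ?_
    by_cases hz : z ∈ Ioi t
    · rw [indicator_of_mem hz]
      refine ENNReal.ofReal_le_ofReal ?_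
      have := hy.1; have := le_abs_self z; have := neg_abs_le r; have := abs_nonneg t
      linarith
    · rw [indicator_of_notMem hz]; exact zero_le
  have hMmN : ∀ x y, y ∈ Ioo r t → Mm x y ≤ N x := by
    intro x y hy
    refine lintegral_mono fun z => ?_
    by_cases hz : z ∈ Iio r
    · rw [indicator_of_mem hz]
      refine ENNReal.ofReal_le_ofReal ?_
      have := hy.2; have := neg_abs_le z; have := le_abs_self t; have := abs_nonneg r
      linarith
    · rw [indicator_of_notMem hz]; exact zero_le
  have hNfin : ∀ x, Integrable id (κ x) → N x ≠ ∞ := by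
    intro x hx
    have hx' : Integrable (fun z : ℝ => 1 + |z| + |r| + |t|) (κ x) := by
      have : Integrable (fun z : ℝ => |z|) (κ x) := hx.abs
      exact (((integrable_const _).add this).add (integrable_const _)).add (integrable_const _)
    exact (hx'.lintegral_lt_top).ne
  refine ⟨fun x y z => if y ∈ Ioo r t then (if z < r then (Mp x y / N x).toReal else
    if t < z then (Mm x y / N x).toReal else 0) else 0, ?_, ?_, ?_, ?_, ?_⟩
  · refine Measurable.ite (measurableSet_Ioo.preimage (by fun_prop)) ?_ measurable_const
    have m1 : Measurable fun p : ℝ × ℝ × ℝ => (p.1, p.2.1) := by fun_prop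
    refine Measurable.ite (measurableSet_lt (by fun_prop) (by fun_prop)) ?_ ?_
    · exact ((mMp.comp m1).div (mN.comp measurable_fst)).ennreal_toReal
    · refine Measurable.ite (measurableSet_lt (by fun_prop) (by fun_prop)) ?_ measurable_const
      exact ((mMm.comp m1).div (mN.comp measurable_fst)).ennreal_toReal
  · intro x y z
    dsimp only
    split_ifs
    · exact ENNReal.toReal_nonneg
    · exact ENNReal.toReal_nonneg
    · exact le_rfl
    · exact le_rfl
  · intro x y z
    dsimp only
    split_ifs with h1 h2 h3
    · refine ENNReal.toReal_le_of_le_ofReal zero_le_one ?_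
      rw [ENNReal.ofReal_one]
      exact ENNReal.div_le_of_le_mul (by rw [one_mul]; exact hMpN x y h1)
    · refine ENNReal.toReal_le_of_le_ofReal zero_le_one ?_
      rw [ENNReal.ofReal_one]
      exact ENNReal.div_le_of_le_mul (by rw [one_mul]; exact hMmN x y h1)
    · exact zero_le_one
    · exact zero_le_one
  · intro x y hx
    by_cases hy : y ∈ Ioo r t
    · have hx' : Integrable (fun z : ℝ => z - y) (κ x) := hx.sub (integrable_const y)
      have e : ∀ z, (if y ∈ Ioo r t then (if z < r then (Mp x y / N x).toReal else
          if t < z then (Mm x y / N x).toReal else 0) else 0) * (z - y) =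
          (Mp x y / N x).toReal * (Iio r).indicator (fun z => z - y) z +
          (Mm x y / N x).toReal * (Ioi t).indicator (fun z => z - y) z := by
        intro z
        rw [if_pos hy]
        by_cases h1 : z < r
        · have : ¬ t < z := by linarith
          simp [indicator, h1, this]
        · by_cases h2 : t < z <;> simp [indicator, h1, h2]
      simp_rw [e]
      rw [integral_add ((hx'.indicator measurableSet_Iio).const_mul _)
        ((hx'.indicator measurableSet_Ioi).const_mul _), integral_const_mul, integral_const_mul]
      have ep : ∫ z, (Ioi t).indicator (fun z => z - y) z ∂(κ x) = (Mp x y).toReal := by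
        rw [integral_eq_lintegral_of_nonneg_ae]
        · congr 1
          refine lintegral_congr fun z => ?_
          by_cases hz : z ∈ Ioi t
          · rw [indicator_of_mem hz, indicator_of_mem hz]
          · rw [indicator_of_notMem hz, indicator_of_notMem hz]; simp
        · refine Filter.Eventually.of_forall fun z => ?_
          refine indicator_nonneg (fun z hz => ?_) z
          have := hy.2; have : t < z := hz; linarith
        · exact (hx'.indicator measurableSet_Ioi).aestronglyMeasurable
      have em : ∫ z, (Iio r).indicator (fun z => z - y) z ∂(κ x) = -(Mm x y).toReal := by
        rw [← neg_inj, neg_neg, ← integral_neg, integral_eq_lintegral_of_nonneg_ae]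
        · congr 1
          refine lintegral_congr fun z => ?_
          by_cases hz : z ∈ Iio r
          · rw [indicator_of_mem hz, indicator_of_mem hz, neg_sub]
          · rw [indicator_of_notMem hz, indicator_of_notMem hz]; simp
        · refine Filter.Eventually.of_forall fun z => ?_
          by_cases hz : z ∈ Iio r
          · simp only [indicator_of_mem hz]
            have := hy.1; have : z < r := hz
            simp only [Pi.zero_apply]; linarith
          · simp only [indicator_of_notMem hz]; simp
        · exact (hx'.indicator measurableSet_Iio).neg.aestronglyMeasurable
      rw [ep, em, ENNReal.toReal_div, ENNReal.toReal_div]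
      ring
    · simp [hy]
  · intro x y hx hy h1 h2 z hz
    have hz' : z < r := hz
    simp only [hy, if_true, hz']
    refine ENNReal.toReal_pos ?_ ?_
    · refine ENNReal.div_ne_zero.2 ⟨?_, hNfin x hx⟩
      intro h0
      rw [hMp] at h0
      simp only at h0
      rw [lintegral_indicator measurableSet_Ioi, setLIntegral_eq_zero_iff measurableSet_Ioi (by fun_prop)] at h0
      have : κ x (Ioi t) = 0 := by
        refine measure_mono_null (fun w hw => ?_) h0
        intro hc
        have := hc hw
        simp only [ENNReal.ofReal_eq_zero] at this
        have h3 := hy.2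
        have h4 : t < w := hw
        linarith
      exact h2.ne' this
    · exact ENNReal.div_ne_top (ne_top_of_le_ne_top (hNfin x hx) (hMpN x y hy)) (hN1 x)

lemma strict_subgradient {f : ℝ → ℝ} (hf : StrictConvexOn ℝ univ f) (y : ℝ) :
    ∃ a : ℝ, (∀ z, f y + a * (z - y) ≤ f z) ∧ ∀ z, z ≠ y → f y + a * (z - y) < f z := by
  have key : ∀ u v : ℝ, u < y → y < v → (f y - f u) / (y - u) ≤ (f v - f y) / (v - y) :=
    fun u v hu hv => hf.convexOn.slope_mono_adjacent (mem_univ _) (mem_univ _) hu hv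
  set S : Set ℝ := (fun u => (f y - f u) / (y - u)) '' Iio y
  have hne : S.Nonempty := ⟨_, y - 1, by simp, rfl⟩
  have hb : ∀ v, y < v → ∀ s ∈ S, s ≤ (f v - f y) / (v - y) := by
    rintro v hv _ ⟨u, hu, rfl⟩
    exact key u v hu hv
  have hbd : BddAbove S := ⟨_, hb (y + 1) (by linarith)⟩
  have main : ∀ z, f y + sSup S * (z - y) ≤ f z := by
    intro z
    rcases lt_trichotomy z y with h | h | h
    · have h1 : (f y - f z) / (y - z) ≤ sSup S := le_csSup hbd ⟨z, h, rfl⟩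
      rw [div_le_iff₀ (by linarith)] at h1
      nlinarith
    · simp [h]
    · have h1 : sSup S ≤ (f z - f y) / (z - y) := csSup_le hne (hb z h)
      rw [le_div_iff₀ (by linarith)] at h1
      linarith
  refine ⟨sSup S, main, fun z hz => lt_of_le_of_ne (main z) fun he => ?_⟩
  have h1 := hf.2 (mem_univ z) (mem_univ y) hz (show (0 : ℝ) < 1 / 2 by norm_num)
    (show (0 : ℝ) < 1 / 2 by norm_num) (by norm_num)
  have h2 := main ((1 / 2 : ℝ) • z + (1 / 2 : ℝ) • y)
  simp only [smul_eq_mul] at h1 h2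
  nlinarith

lemma integral_pos_of_set {α : Type*} [MeasurableSpace α] {m : Measure α} {f : α → ℝ} {S : Set α}
    (hf : Integrable f m) (h0 : ∀ᵐ x ∂m, 0 ≤ f x) (hS : ∀ᵐ x ∂m, x ∈ S → 0 < f x)
    (hm : 0 < m S) : 0 < ∫ x, f x ∂m := by
  rw [integral_pos_iff_support_of_nonneg_ae h0 hf]
  refine lt_of_lt_of_le hm (measure_mono_ae ?_)
  filter_upwards [hS] with x hx hxS
  exact (hx hxS).ne'

lemma exists_Q {τ : Measure ℝ} [IsFiniteMeasure τ] {κ : Kernel ℝ ℝ} [IsMarkovKernel κ]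
    {c₂ : ℝ × ℝ → ℝ}
    (hInt0 : ∀ᵐ x ∂τ, Integrable id (κ x))
    (hsnd : Integrable (fun p : ℝ × ℝ => p.2) (τ ⊗ₘ κ))
    (hc : Continuous c₂)
    (hstrict : ∀ x : ℝ, StrictConvexOn ℝ Set.univ fun y => c₂ (x, y))
    {v w : ℝ → ℝ} (hv : Integrable (fun p : ℝ × ℝ => v p.1) (τ ⊗ₘ κ))
    (hw : Integrable (fun p : ℝ × ℝ => w p.2) (τ ⊗ₘ κ))
    (hb : ∀ x y, |c₂ (x, y)| ≤ v x + w y) {r t : ℝ} (hrt : r < t)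
    (h1 : 0 < τ {x | 0 < κ x (Iio r) ∧ 0 < κ x (Ioi t)})
    (h2 : 0 < (τ ⊗ₘ κ) (Prod.snd ⁻¹' Ioo r t)) :
    ∃ Q : Measure ((ℝ × ℝ) × (ℝ × ℝ)), Q ≤ (τ ⊗ₘ κ).prod (τ ⊗ₘ κ) ∧
      (∀ B : Set ℝ, MeasurableSet B →
        ∫ q in (fun q => q.1.1) ⁻¹' B, (q.1.2 - q.2.2) ∂Q = 0) ∧
      (∀ B : Set ℝ, MeasurableSet B →
        ∫ q in (fun q => q.2.1) ⁻¹' B, (q.1.2 - q.2.2) ∂Q = 0) ∧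
      0 < ∫ q, (c₂ (q.2.1, q.1.2) - c₂ q.2) ∂Q := by
  obtain ⟨h, hm, h0, hle, hz, hpos⟩ := exists_weight κ r t hrt
  set T := τ ⊗ₘ κ with hT
  set H : (ℝ × ℝ) × (ℝ × ℝ) → ℝ := fun q => h q.1.1 q.2.2 q.1.2 with hH
  have mH : Measurable H := hm.comp (f := fun q : (ℝ × ℝ) × (ℝ × ℝ) => (q.1.1, q.2.2, q.1.2))
    (by fun_prop)
  set Q := (T.prod T).withDensity (fun q => ENNReal.ofReal (H q)) with hQ
  have hQle : Q ≤ T.prod T := by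
    calc Q ≤ (T.prod T).withDensity 1 := withDensity_mono (Filter.Eventually.of_forall fun q => by
          simpa using hle _ _ _)
      _ = T.prod T := withDensity_one
  -- integral formula
  have fint : ∀ F : (ℝ × ℝ) × (ℝ × ℝ) → ℝ, Integrable F (T.prod T) →
      Integrable (fun q => H q * F q) (T.prod T) := by
    intro F hF
    refine hF.bdd_mul (c := 1) mH.aestronglyMeasurable (Filter.Eventually.of_forall fun q => ?_)
    rw [Real.norm_eq_abs, abs_of_nonneg (h0 _ _ _)]; exact hle _ _ _
  have form : ∀ F : (ℝ × ℝ) × (ℝ × ℝ) → ℝ, Integrable F (T.prod T) →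
      ∫ q, F q ∂Q = ∫ u, ∫ p, H (p, u) * F (p, u) ∂T ∂T := by
    intro F hF
    rw [hQ, integral_withDensity_eq_integral_toReal_smul (by fun_prop)
      (Filter.Eventually.of_forall fun q => ENNReal.ofReal_lt_top)]
    have : ∀ q, (ENNReal.ofReal (H q)).toReal • F q = H q * F q := fun q => by
      rw [ENNReal.toReal_ofReal (h0 _ _ _), smul_eq_mul]
    simp_rw [this]
    exact integral_prod_symm _ (fint F hF)
  have iz : Integrable (fun q : (ℝ × ℝ) × (ℝ × ℝ) => q.1.2 - q.2.2) (T.prod T) :=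
    (hsnd.comp_fst T).sub (hsnd.comp_snd T)
  have inner : ∀ F : (ℝ × ℝ) × (ℝ × ℝ) → ℝ, Integrable F (T.prod T) →
      ∀ᵐ u ∂T, Integrable (fun p => H (p, u) * F (p, u)) T ∧
        (∀ᵐ x ∂τ, Integrable (fun z => h x u.2 z * F ((x, z), u)) (κ x)) ∧
        Integrable (fun x => ∫ z, h x u.2 z * F ((x, z), u) ∂(κ x)) τ ∧
        ∫ p, H (p, u) * F (p, u) ∂T = ∫ x, ∫ z, h x u.2 z * F ((x, z), u) ∂(κ x) ∂τ := by
    intro F hF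
    filter_upwards [(fint F hF).prod_left_ae] with u hu
    refine ⟨hu, ((Measure.integrable_compProd_iff hu.aestronglyMeasurable).1 hu).1, ?_, ?_⟩
    · exact Integrable.integral_compProd (κ := Kernel.const Unit τ)
        (η := Kernel.prodMkLeft Unit κ) (a := ()) hu
    · exact Measure.integral_compProd hu
  refine ⟨Q, hQle, fun B hB => ?_, fun B hB => ?_, ?_⟩
  · have mB : MeasurableSet ((fun q : (ℝ × ℝ) × (ℝ × ℝ) => q.1.1) ⁻¹' B) :=
      hB.preimage (by fun_prop)
    rw [← integral_indicator mB, form _ (iz.indicator mB)]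
    refine integral_eq_zero_of_ae ?_
    filter_upwards [inner _ (iz.indicator mB)] with u hu
    rw [hu.2.2.2]
    refine integral_eq_zero_of_ae ?_
    filter_upwards [hInt0] with x hx
    by_cases hxB : x ∈ B
    · simpa [indicator, hxB] using hz x u.2 hx
    · simp [indicator, hxB]
  · have mB : MeasurableSet ((fun q : (ℝ × ℝ) × (ℝ × ℝ) => q.2.1) ⁻¹' B) :=
      hB.preimage (by fun_prop)
    rw [← integral_indicator mB, form _ (iz.indicator mB)]
    refine integral_eq_zero_of_ae ?_
    filter_upwards [inner _ (iz.indicator mB)] with u hu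
    rw [hu.2.2.2]
    refine integral_eq_zero_of_ae ?_
    filter_upwards [hInt0] with x hx
    by_cases hxB : u.1 ∈ B
    · simpa [indicator, hxB] using hz x u.2 hx
    · simp [indicator, hxB]
  · have i1 : Integrable (fun q : (ℝ × ℝ) × (ℝ × ℝ) => c₂ (q.2.1, q.1.2)) (T.prod T) := by
      refine ((hv.comp_snd T).add (hw.comp_fst T)).mono' ?_ ?_
      · exact (hc.comp (by fun_prop)).aestronglyMeasurable
      · exact Filter.Eventually.of_forall fun q => hb _ _
    have i2 : Integrable (fun q : (ℝ × ℝ) × (ℝ × ℝ) => c₂ q.2) (T.prod T) := by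
      refine ((hv.comp_snd T).add (hw.comp_snd T)).mono' ?_ ?_
      · exact (hc.comp (by fun_prop)).aestronglyMeasurable
      · exact Filter.Eventually.of_forall fun q => hb _ _
    have i3 : Integrable (fun q : (ℝ × ℝ) × (ℝ × ℝ) => c₂ (q.2.1, q.1.2) - c₂ q.2) (T.prod T) :=
      i1.sub i2
    rw [form _ i3]
    -- pointwise fibre facts
    have fib : ∀ (u : ℝ × ℝ) (x : ℝ), Integrable id (κ x) →
        Integrable (fun z => h x u.2 z * (c₂ (u.1, z) - c₂ u)) (κ x) →
        0 ≤ ∫ z, h x u.2 z * (c₂ (u.1, z) - c₂ u) ∂(κ x) ∧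
        (u.2 ∈ Ioo r t → 0 < κ x (Iio r) → 0 < κ x (Ioi t) →
          0 < ∫ z, h x u.2 z * (c₂ (u.1, z) - c₂ u) ∂(κ x)) := by
      intro u x hx hi
      obtain ⟨a, ha, ha'⟩ := strict_subgradient (hstrict u.1) u.2
      have hzi : Integrable (fun z => h x u.2 z * (z - u.2)) (κ x) := by
        have hx' : Integrable (fun z : ℝ => z - u.2) (κ x) := hx.sub (integrable_const _)
        have mh : Measurable fun z => h x u.2 z :=
          hm.comp (f := fun z : ℝ => (x, u.2, z)) (by fun_prop)
        refine hx'.bdd_mul (c := 1) mh.aestronglyMeasurable (Filter.Eventually.of_forall fun q => ?_)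
        rw [Real.norm_eq_abs, abs_of_nonneg (h0 _ _ _)]; exact hle _ _ _
      have hi' := hi.sub (hzi.const_mul a)
      have e : ∫ z, h x u.2 z * (c₂ (u.1, z) - c₂ u) ∂(κ x) =
          ∫ z, (h x u.2 z * (c₂ (u.1, z) - c₂ u) - a * (h x u.2 z * (z - u.2))) ∂(κ x) := by
        rw [integral_sub hi (hzi.const_mul a), integral_const_mul, hz x u.2 hx]
        simp
      have nn : ∀ z, 0 ≤ h x u.2 z * (c₂ (u.1, z) - c₂ u) - a * (h x u.2 z * (z - u.2)) := by
        intro z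
        have := mul_nonneg (h0 x u.2 z) (sub_nonneg.2 (ha z))
        linarith
      rw [e]
      refine ⟨integral_nonneg nn, fun hu hl hr => ?_⟩
      refine integral_pos_of_set (S := Iio r) hi' (Filter.Eventually.of_forall nn)
        (Filter.Eventually.of_forall fun z hzr => ?_) hl
      have hzu : z ≠ u.2 := by
        have h3 : z < r := hzr
        have h4 := hu.1
        exact (h3.trans h4).ne
      have := mul_pos (hpos x u.2 hx hu hl hr z hzr) (sub_pos.2 (ha' z hzu))
      linarith
    have hin := inner _ i3
    refine integral_pos_of_set (S := Prod.snd ⁻¹' Ioo r t) ((fint _ i3).integral_prod_right) ?_ ?_ h2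
    · filter_upwards [hin] with u hu
      rw [hu.2.2.2]
      refine integral_nonneg_of_ae ?_
      filter_upwards [hu.2.1, hInt0] with x hx hxi
      exact (fib u x hxi hx).1
    · filter_upwards [hin] with u hu huI
      rw [hu.2.2.2]
      refine integral_pos_of_set hu.2.2.1 ?_ ?_ h1
      · filter_upwards [hu.2.1, hInt0] with x hx hxi
        exact (fib u x hxi hx).1
      · filter_upwards [hu.2.1, hInt0] with x hx hxi hxS
        exact (fib u x hxi hx).2 huI hxS.1 hxS.2

lemma setInt_sub3 {α : Type*} [MeasurableSpace α] {m : Measure α} {f g k : α → ℝ} (s : Set α)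
    (hf : Integrable f m) (hg : Integrable g m) (hk : Integrable k m) :
    ∫ x in s, (f x - g x) ∂m = ∫ x in s, (f x - k x) ∂m - ∫ x in s, (g x - k x) ∂m := by
  rw [integral_sub hf.integrableOn hg.integrableOn, integral_sub hf.integrableOn hk.integrableOn,
    integral_sub hg.integrableOn hk.integrableOn]
  ring

lemma integrable_vw {μ ν : Measure ℝ} {π γ : Measure (ℝ × ℝ)} (hle : γ ≤ π)
    (h1 : π.map Prod.fst = μ) (h2 : π.map Prod.snd = ν) {v w : ℝ → ℝ}
    (hv : Integrable v μ) (hw : Integrable w ν) :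
    Integrable (fun p : ℝ × ℝ => v p.1) γ ∧ Integrable (fun p : ℝ × ℝ => w p.2) γ := by
  rw [← h1] at hv
  rw [← h2] at hw
  exact ⟨(hv.comp_measurable measurable_fst).mono_measure hle,
    (hw.comp_measurable measurable_snd).mono_measure hle⟩

lemma integrable_c {μ ν : Measure ℝ} {c₁ : ℝ → ℝ} {c₂ : ℝ × ℝ → ℝ} (hA : AssumpA μ ν c₁ c₂)
    {π γ : Measure (ℝ × ℝ)} (hle : γ ≤ π)
    (h1 : π.map Prod.fst = μ) (h2 : π.map Prod.snd = ν) :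
    Integrable (fun p : ℝ × ℝ => c₁ p.1) γ ∧ Integrable c₂ γ := by
  obtain ⟨_, _, _, _, hc1, hc2, _, v, w, _, _, hv, hw, hb⟩ := hA
  obtain ⟨iv, iw⟩ := integrable_vw hle h1 h2 hv hw
  constructor
  · refine (iv.add iw).mono' (hc1.comp continuous_fst).aestronglyMeasurable
      (Filter.Eventually.of_forall fun p => ?_)
    have := hb p.1 p.2
    have h3 := abs_nonneg (c₂ (p.1, p.2))
    simp only [Real.norm_eq_abs, Pi.add_apply]
    linarith
  · refine (iv.add iw).mono' hc2.aestronglyMeasurable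
      (Filter.Eventually.of_forall fun p => ?_)
    have := hb p.1 p.2
    have h3 := abs_nonneg (c₁ p.1)
    simp only [Real.norm_eq_abs, Pi.add_apply]
    have : |c₂ p| = |c₂ (p.1, p.2)| := rfl
    linarith

lemma mem_MT_marg {μ ν : Measure ℝ} [IsFiniteMeasure μ] {π : Measure (ℝ × ℝ)} (h : π ∈ MT μ ν) :
    π.map Prod.fst = μ ∧ π.map Prod.snd = ν := by
  obtain ⟨κ, ⟨hM, hs, -⟩, rfl⟩ := h
  exact ⟨Measure.fst_compProd μ κ, hs⟩

lemma relaxed_le {μ ν : Measure ℝ} {c₁ : ℝ → ℝ} {c₂ : ℝ × ℝ → ℝ} (hA : AssumpA μ ν c₁ c₂)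
    {γ₁ γ₂ : Measure (ℝ × ℝ)} (g1 : GoodM γ₁) (g2 : GoodM γ₂)
    (h1 : (γ₁ + γ₂).map Prod.fst = μ) (h2 : (γ₁ + γ₂).map Prod.snd = ν) :
    ∫ p, c₁ p.1 ∂γ₁ + ∫ p, c₂ p ∂γ₂ ≤ RelaxedValue μ ν ![fun p => c₁ p.1, c₂] := by
  have hA' := hA
  obtain ⟨hμ, hν, _, _, hc1, hc2, _, v, w, _, _, hv, hw, hb⟩ := hA'
  refine le_csSup ?_ ⟨![γ₁, γ₂], ⟨?_, ?_⟩, ?_⟩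
  · refine ⟨∫ x, v x ∂μ + ∫ y, w y ∂ν, ?_⟩
    rintro _ ⟨γ, ⟨-, hM⟩, rfl⟩
    obtain ⟨m1, m2⟩ := mem_MT_marg hM
    rw [Fin.sum_univ_two] at hM m1 m2 ⊢
    have l0 : γ 0 ≤ γ 0 + γ 1 := Measure.le_add_right le_rfl
    have l1 : γ 1 ≤ γ 0 + γ 1 := Measure.le_add_left le_rfl
    obtain ⟨v0, w0⟩ := integrable_vw l0 m1 m2 hv hw
    obtain ⟨v1, w1⟩ := integrable_vw l1 m1 m2 hv hw
    obtain ⟨i0, -⟩ := integrable_c hA l0 m1 m2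
    obtain ⟨-, i1⟩ := integrable_c hA l1 m1 m2
    have e1 : ∫ x, v x ∂μ = ∫ p, v p.1 ∂(γ 0) + ∫ p, v p.1 ∂(γ 1) := by
      rw [← integral_add_measure v0 v1]
      conv_lhs => rw [← m1]
      rw [integral_map measurable_fst.aemeasurable]
      rw [m1]; exact hv.aestronglyMeasurable
    have e2 : ∫ x, w x ∂ν = ∫ p, w p.2 ∂(γ 0) + ∫ p, w p.2 ∂(γ 1) := by
      rw [← integral_add_measure w0 w1]
      conv_lhs => rw [← m2]
      rw [integral_map measurable_snd.aemeasurable]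
      rw [m2]; exact hw.aestronglyMeasurable
    have b0 : ∫ p, c₁ p.1 ∂(γ 0) ≤ ∫ p, (v p.1 + w p.2) ∂(γ 0) := by
      refine integral_mono i0 (v0.add w0) fun p => ?_
      have := hb p.1 p.2
      have h3 := abs_nonneg (c₂ (p.1, p.2))
      have h4 := le_abs_self (c₁ p.1)
      simp only
      linarith
    have b1 : ∫ p, c₂ p ∂(γ 1) ≤ ∫ p, (v p.1 + w p.2) ∂(γ 1) := by
      refine integral_mono i1 (v1.add w1) fun p => ?_
      have := hb p.1 p.2
      have h3 := abs_nonneg (c₁ p.1)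
      have h4 : c₂ p ≤ |c₂ (p.1, p.2)| := le_abs_self (c₂ p)
      simp only
      linarith
    rw [integral_add v0 w0] at b0
    rw [integral_add v1 w1] at b1
    simp only [Matrix.cons_val_zero, Matrix.cons_val_one]
    linarith
  · intro l
    fin_cases l
    · exact g1.isSubMart
    · exact g2.isSubMart
  · rw [Fin.sum_univ_two]
    exact (g1.add g2).mem_MT h1 h2
  · rw [Fin.sum_univ_two]; rfl

lemma swap_lemma {μ ν : Measure ℝ} {c₁ : ℝ → ℝ} {c₂ : ℝ × ℝ → ℝ} (hA : AssumpA μ ν c₁ c₂)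
    (hstrict : ∀ x : ℝ, StrictConvexOn ℝ Set.univ fun y => c₂ (x, y))
    {κ : Kernel ℝ ℝ} (hk : MartKernel μ ν κ) {σ₁ σ₂ τ : Measure ℝ} (hσ : σ₁ + σ₂ = μ)
    (hτ1 : τ ≤ σ₁) (hτ2 : τ ≤ σ₂) {r t : ℝ} (hrt : r < t)
    (h1 : 0 < τ {x | 0 < κ x (Iio r) ∧ 0 < κ x (Ioi t)})
    (h2 : 0 < (τ ⊗ₘ κ) (Prod.snd ⁻¹' Ioo r t)) :
    ∫ p, c₁ p.1 ∂(σ₁ ⊗ₘ κ) + ∫ p, c₂ p ∂(σ₂ ⊗ₘ κ) <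
      RelaxedValue μ ν ![fun p => c₁ p.1, c₂] := by
  have hA' := hA
  obtain ⟨hμ, hν, iμ, iν, hc1, hc2, _, v, w, _, _, hv, hw, hb⟩ := hA'
  have hk' := hk
  obtain ⟨hM, hs, hm⟩ := hk'
  have lσ1 : σ₁ ≤ μ := by rw [← hσ]; exact Measure.le_add_right le_rfl
  have lσ2 : σ₂ ≤ μ := by rw [← hσ]; exact Measure.le_add_left le_rfl
  have fσ1 : IsFiniteMeasure σ₁ := isFiniteMeasure_of_le μ lσ1
  have fσ2 : IsFiniteMeasure σ₂ := isFiniteMeasure_of_le μ lσ2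
  have lτ : τ ≤ μ := hτ1.trans lσ1
  have fτ : IsFiniteMeasure τ := isFiniteMeasure_of_le μ lτ
  have hs1 : (μ ⊗ₘ κ).map Prod.fst = μ := Measure.fst_compProd μ κ
  have lT := compProd_left_mono lτ κ
  obtain ⟨vT, wT⟩ := integrable_vw lT hs1 hs hv hw
  have gT := goodM_compProd iμ iν hk lτ
  have hInt0 : ∀ᵐ x ∂τ, Integrable id (κ x) := by
    filter_upwards [ae_mono lτ hm] with x hx using hx.1
  obtain ⟨Q, hQle, hQ1, hQ2, hQ3⟩ := exists_Q hInt0 gT.2.2.1 hc2 hstrict vT wT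
    (fun x y => by have := hb x y; have := abs_nonneg (c₁ x); linarith) hrt h1 h2
  set T := τ ⊗ₘ κ with hT
  have hT1 : T univ ≤ 1 := by
    rw [hT, Measure.compProd_apply_univ]
    exact (lτ univ).trans (by simp)
  have fQ : IsFiniteMeasure Q := isFiniteMeasure_of_le _ hQle
  have Tle : ∀ S : Set (ℝ × ℝ), T univ * T S ≤ T S := fun S => by
    calc T univ * T S ≤ 1 * T S := by gcongr
      _ = T S := one_mul _
  have q1 : Q.map Prod.fst ≤ T := by
    refine (Measure.map_mono hQle measurable_fst).trans ?_
    rw [Measure.map_fst_prod]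
    exact fun S => by simpa using Tle S
  have q2 : Q.map Prod.snd ≤ T := by
    refine (Measure.map_mono hQle measurable_snd).trans ?_
    rw [Measure.map_snd_prod]
    exact fun S => by simpa using Tle S
  set G₁ := σ₁ ⊗ₘ κ with hG1
  set G₂ := σ₂ ⊗ₘ κ with hG2
  have q1' : Q.map Prod.fst ≤ G₁ := q1.trans (compProd_left_mono hτ1 κ)
  have q2' : Q.map Prod.snd ≤ G₂ := q2.trans (compProd_left_mono hτ2 κ)
  set P₁ := Q.map Prod.fst with hP1
  set P₂ := Q.map Prod.snd with hP2
  set s₁ : (ℝ × ℝ) × (ℝ × ℝ) → ℝ × ℝ := fun q => (q.1.1, q.2.2) with hs₁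
  set s₂ : (ℝ × ℝ) × (ℝ × ℝ) → ℝ × ℝ := fun q => (q.2.1, q.1.2) with hs₂
  have ms1 : Measurable s₁ := by fun_prop
  have ms2 : Measurable s₂ := by fun_prop
  set S₁ := Q.map s₁ with hS1
  set S₂ := Q.map s₂ with hS2
  set R₁ := G₁ - P₁ with hR1
  set R₂ := G₂ - P₂ with hR2
  have e1 : R₁ + P₁ = G₁ := Measure.sub_add_cancel_of_le q1'
  have e2 : R₂ + P₂ = G₂ := Measure.sub_add_cancel_of_le q2'
  have eG : G₁ + G₂ = μ ⊗ₘ κ := by rw [hG1, hG2, ← Measure.compProd_add_left, hσ]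
  have gG1 : GoodM G₁ := goodM_compProd iμ iν hk lσ1
  have gG2 : GoodM G₂ := goodM_compProd iμ iν hk lσ2
  -- marginals
  have mS1f : S₁.map Prod.fst = P₁.map Prod.fst := by
    rw [hS1, hP1, Measure.map_map measurable_fst ms1, Measure.map_map measurable_fst measurable_fst]
    rfl
  have mS2f : S₂.map Prod.fst = P₂.map Prod.fst := by
    rw [hS2, hP2, Measure.map_map measurable_fst ms2, Measure.map_map measurable_fst measurable_snd]
    rfl
  have mS1s : S₁.map Prod.snd = P₂.map Prod.snd := by
    rw [hS1, hP2, Measure.map_map measurable_snd ms1, Measure.map_map measurable_snd measurable_snd]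
    rfl
  have mS2s : S₂.map Prod.snd = P₁.map Prod.snd := by
    rw [hS2, hP1, Measure.map_map measurable_snd ms2, Measure.map_map measurable_snd measurable_fst]
    rfl
  have M1 : ((R₁ + S₁) + (R₂ + S₂)).map Prod.fst = μ := by
    rw [← hs1, ← eG, ← e1, ← e2]
    simp only [Measure.map_add _ _ measurable_fst, mS1f, mS2f]
  have M2 : ((R₁ + S₁) + (R₂ + S₂)).map Prod.snd = ν := by
    rw [← hs, ← eG, ← e1, ← e2]
    simp only [Measure.map_add _ _ measurable_snd, mS1s, mS2s]
    abel
  -- integrability of coordinates on Q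
  have iT := gT.2
  have ix' : Integrable (fun q : (ℝ × ℝ) × (ℝ × ℝ) => q.1.1) Q :=
    (iT.1.comp_fst T).mono_measure hQle
  have iz' : Integrable (fun q : (ℝ × ℝ) × (ℝ × ℝ) => q.1.2) Q :=
    (iT.2.1.comp_fst T).mono_measure hQle
  have ix : Integrable (fun q : (ℝ × ℝ) × (ℝ × ℝ) => q.2.1) Q :=
    (iT.1.comp_snd T).mono_measure hQle
  have iy : Integrable (fun q : (ℝ × ℝ) × (ℝ × ℝ) => q.2.2) Q :=
    (iT.2.1.comp_snd T).mono_measure hQle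
  have gR1 : GoodM (R₁ + S₁) := by
    have : IsFiniteMeasure S₁ := by rw [hS1]; infer_instance
    refine GoodM.swap (P := P₁) (by rw [e1]; exact gG1) ?_ ?_ fun B hB => ?_
    · exact (integrable_map_measure (by fun_prop) ms1.aemeasurable).2 ix'
    · exact (integrable_map_measure (by fun_prop) ms1.aemeasurable).2 iy
    · rw [hS1, hP1, setIntegral_map (hB.preimage measurable_fst) (by fun_prop) ms1.aemeasurable,
        setIntegral_map (hB.preimage measurable_fst) (by fun_prop) measurable_fst.aemeasurable]
      have := hQ1 B hB
      have e : ∫ q in (fun q : (ℝ × ℝ) × (ℝ × ℝ) => q.1.1) ⁻¹' B, (q.1.2 - q.2.2) ∂Q =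
        ∫ q in (fun q : (ℝ × ℝ) × (ℝ × ℝ) => q.1.1) ⁻¹' B, (q.1.2 - q.1.1) ∂Q -
        ∫ q in (fun q : (ℝ × ℝ) × (ℝ × ℝ) => q.1.1) ⁻¹' B, (q.2.2 - q.1.1) ∂Q := by
        exact setInt_sub3 _ iz' iy ix'
      rw [e] at this
      exact (sub_eq_zero.1 this).symm
  have gR2 : GoodM (R₂ + S₂) := by
    have : IsFiniteMeasure S₂ := by rw [hS2]; infer_instance
    refine GoodM.swap (P := P₂) (by rw [e2]; exact gG2) ?_ ?_ fun B hB => ?_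
    · exact (integrable_map_measure (by fun_prop) ms2.aemeasurable).2 ix
    · exact (integrable_map_measure (by fun_prop) ms2.aemeasurable).2 iz'
    · rw [hS2, hP2, setIntegral_map (hB.preimage measurable_fst) (by fun_prop) ms2.aemeasurable,
        setIntegral_map (hB.preimage measurable_fst) (by fun_prop) measurable_snd.aemeasurable]
      have := hQ2 B hB
      have e : ∫ q in (fun q : (ℝ × ℝ) × (ℝ × ℝ) => q.2.1) ⁻¹' B, (q.1.2 - q.2.2) ∂Q =
        ∫ q in (fun q : (ℝ × ℝ) × (ℝ × ℝ) => q.2.1) ⁻¹' B, (q.1.2 - q.2.1) ∂Q -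
        ∫ q in (fun q : (ℝ × ℝ) × (ℝ × ℝ) => q.2.1) ⁻¹' B, (q.2.2 - q.2.1) ∂Q := by
        exact setInt_sub3 _ iz' iy ix
      rw [e] at this
      exact sub_eq_zero.1 this
  refine lt_of_lt_of_le ?_ (relaxed_le hA gR1 gR2 M1 M2)
  -- values
  have lR1 : R₁ + S₁ ≤ (R₁ + S₁) + (R₂ + S₂) := Measure.le_add_right le_rfl
  have lR2 : R₂ + S₂ ≤ (R₁ + S₁) + (R₂ + S₂) := Measure.le_add_left le_rfl
  have I1 := (integrable_c hA lR1 M1 M2).1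
  have I2 := (integrable_c hA lR2 M1 M2).2
  have lG1 : G₁ ≤ μ ⊗ₘ κ := by rw [← eG]; exact Measure.le_add_right le_rfl
  have lG2 : G₂ ≤ μ ⊗ₘ κ := by rw [← eG]; exact Measure.le_add_left le_rfl
  have J1 := (integrable_c hA lG1 hs1 hs).1
  have J2 := (integrable_c hA lG2 hs1 hs).2
  rw [← e1] at J1 ⊢
  rw [← e2] at J2 ⊢
  rw [integral_add_measure J1.left_of_add_measure J1.right_of_add_measure,
    integral_add_measure J2.left_of_add_measure J2.right_of_add_measure,
    integral_add_measure I1.left_of_add_measure I1.right_of_add_measure,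
    integral_add_measure I2.left_of_add_measure I2.right_of_add_measure]
  have mc1 : Measurable fun p : ℝ × ℝ => c₁ p.1 := hc1.measurable.comp measurable_fst
  have v1 : ∫ p, c₁ p.1 ∂S₁ = ∫ p, c₁ p.1 ∂P₁ := by
    rw [hS1, hP1, integral_map ms1.aemeasurable mc1.aestronglyMeasurable,
      integral_map measurable_fst.aemeasurable mc1.aestronglyMeasurable]
  have mc2 : Measurable c₂ := hc2.measurable
  have v2 : ∫ q, (c₂ (q.2.1, q.1.2) - c₂ q.2) ∂Q = ∫ p, c₂ p ∂S₂ - ∫ p, c₂ p ∂P₂ := by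
    rw [hS2, hP2, integral_map ms2.aemeasurable mc2.aestronglyMeasurable,
      integral_map measurable_snd.aemeasurable mc2.aestronglyMeasurable]
    refine integral_sub ?_ ?_
    · exact (integrable_map_measure mc2.aestronglyMeasurable ms2.aemeasurable).1
        I2.right_of_add_measure
    · exact (integrable_map_measure mc2.aestronglyMeasurable measurable_snd.aemeasurable).1
        J2.right_of_add_measure
  rw [v2] at hQ3
  linarith

/-- A nonatomic measure charging `Ioi r` can be split by a point `t`. -/
lemma exists_split {l : Measure ℝ} (hl : ∀ y, l {y} = 0) {r : ℝ} (h : 0 < l (Ioi r)) :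
    ∃ t, r < t ∧ 0 < l (Ioo r t) ∧ 0 < l (Ioi t) := by
  have h1 : 0 < l (Ioi r ∩ l.support) := by
    rw [measure_inter_conull' (by
      exact measure_mono_null (fun x hx => hx.2) (Measure.measure_compl_support (μ := l)))]
    exact h
  have h2 : ¬ (Ioi r ∩ l.support).Subsingleton := by
    intro hs
    rcases hs.eq_empty_or_singleton with h3 | ⟨y, h3⟩
    · rw [h3] at h1; simp at h1
    · rw [h3, hl] at h1; simp at h1
  rw [Set.not_subsingleton_iff] at h2
  obtain ⟨a, ha, b, hb, hab⟩ := h2.exists_lt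
  refine ⟨(a + b) / 2, ?_, ?_, ?_⟩
  · have : r < a := ha.1
    linarith
  · exact (Measure.mem_support_iff_forall a).1 ha.2 _ (Ioo_mem_nhds ha.1 (by linarith))
  · exact (Measure.mem_support_iff_forall b).1 hb.2 _ (Ioi_mem_nhds (by linarith))

/-- A non-Dirac probability measure charges both sides of its barycenter. -/
lemma charges_sides {m : Measure ℝ} [IsProbabilityMeasure m] {x : ℝ} (hi : Integrable id m)
    (hx : ∫ y, y ∂m = x) (hd : m ≠ Measure.dirac x) : 0 < m (Iio x) ∧ 0 < m (Ioi x) := by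
  have hi' : Integrable (fun y : ℝ => y - x) m := hi.sub (integrable_const x)
  have hid : Integrable (fun y : ℝ => y) m := hi
  have h0 : ∫ y, (y - x) ∂m = 0 := by
    rw [integral_sub hid (integrable_const _), hx]; simp
  have key : (fun y : ℝ => y - x) =ᵐ[m] 0 → False := by
    intro h
    apply hd
    have h3 : ∀ᵐ y ∂m, y = x := by
      filter_upwards [h] with y hy
      have : y - x = 0 := hy
      linarith
    have : m.map id = m.map (fun _ => x) := Measure.map_congr h3
    simpa using this
  constructor
  · by_contra hc
    have hc : m (Iio x) = 0 := by simpa using hc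
    apply key
    refine (integral_eq_zero_iff_of_nonneg_ae ?_ hi').1 h0
    filter_upwards [measure_eq_zero_iff_ae_notMem.1 hc] with y hy
    simpa using hy
  · by_contra hc
    have hc : m (Ioi x) = 0 := by simpa using hc
    apply key
    have hn : ∫ y, -(y - x) ∂m = 0 := by rw [integral_neg, h0, neg_zero]
    have := (integral_eq_zero_iff_of_nonneg_ae (f := fun y => -(y - x)) ?_ hi'.neg).1 hn
    · filter_upwards [this] with y hy
      have : -(y - x) = 0 := hy
      have h5 : y - x = 0 := by linarith
      exact h5
    · filter_upwards [measure_eq_zero_iff_ae_notMem.1 hc] with y hy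
      have : y ≤ x := by simpa using hy
      simp only [Pi.zero_apply]
      linarith

/-- No measure can sit strictly below both exercise and continuation at an optimum. -/
lemma tau_zero {μ ν : Measure ℝ} {c₁ : ℝ → ℝ} {c₂ : ℝ × ℝ → ℝ} (hA : AssumpA μ ν c₁ c₂)
    (hstrict : ∀ x : ℝ, StrictConvexOn ℝ Set.univ fun y => c₂ (x, y))
    (hne : ∀ᵐ x ∂μ, c₁ x ≠ c₂ (x, x))
    (hac : ν ≪ (volume : Measure ℝ))
    {κ : Kernel ℝ ℝ} (hk : MartKernel μ ν κ) {σ₁ σ₂ τ : Measure ℝ} (hσ : σ₁ + σ₂ = μ)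
    (hτ1 : τ ≤ σ₁) (hτ2 : τ ≤ σ₂)
    (hopt : ∫ p, c₁ p.1 ∂(σ₁ ⊗ₘ κ) + ∫ p, c₂ p ∂(σ₂ ⊗ₘ κ) =
      RelaxedValue μ ν ![fun p => c₁ p.1, c₂]) : τ = 0 := by
  have hA' := hA
  obtain ⟨hμ, hν, iμ, iν, hc1, hc2, _, -⟩ := hA'
  have hk' := hk
  obtain ⟨hM, hs, hm⟩ := hk'
  have lσ1 : σ₁ ≤ μ := by rw [← hσ]; exact Measure.le_add_right le_rfl
  have lσ2 : σ₂ ≤ μ := by rw [← hσ]; exact Measure.le_add_left le_rfl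
  have fσ1 : IsFiniteMeasure σ₁ := isFiniteMeasure_of_le μ lσ1
  have fσ2 : IsFiniteMeasure σ₂ := isFiniteMeasure_of_le μ lσ2
  have lτ : τ ≤ μ := hτ1.trans lσ1
  have fτ : IsFiniteMeasure τ := isFiniteMeasure_of_le μ lτ
  have hs1 : (μ ⊗ₘ κ).map Prod.fst = μ := Measure.fst_compProd μ κ
  have val : ∀ ρ₁ ρ₂ : Measure ℝ, ρ₁ + ρ₂ = μ →
      ∫ p, c₁ p.1 ∂(ρ₁ ⊗ₘ κ) + ∫ p, c₂ p ∂(ρ₂ ⊗ₘ κ) ≤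
        RelaxedValue μ ν ![fun p => c₁ p.1, c₂] := by
    intro ρ₁ ρ₂ hρ
    have l1 : ρ₁ ≤ μ := by rw [← hρ]; exact Measure.le_add_right le_rfl
    have l2 : ρ₂ ≤ μ := by rw [← hρ]; exact Measure.le_add_left le_rfl
    have f1 : IsFiniteMeasure ρ₁ := isFiniteMeasure_of_le μ l1
    have f2 : IsFiniteMeasure ρ₂ := isFiniteMeasure_of_le μ l2
    have e : ρ₁ ⊗ₘ κ + ρ₂ ⊗ₘ κ = μ ⊗ₘ κ := by rw [← Measure.compProd_add_left, hρ]
    exact relaxed_le hA (goodM_compProd iμ iν hk l1) (goodM_compProd iμ iν hk l2)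
      (by rw [e, hs1]) (by rw [e, hs])
  have intc : ∀ ρ : Measure ℝ, ρ ≤ μ → Integrable (fun p : ℝ × ℝ => c₁ p.1) (ρ ⊗ₘ κ) ∧
      Integrable c₂ (ρ ⊗ₘ κ) := fun ρ hρ => integrable_c hA (compProd_left_mono hρ κ) hs1 hs
  -- moving mass both ways
  have bal : ∀ B : Set ℝ, ∫ p, c₁ p.1 ∂(τ.restrict B ⊗ₘ κ) = ∫ p, c₂ p ∂(τ.restrict B ⊗ₘ κ) := by
    intro B
    set β := τ.restrict B with hβ
    have lβ : β ≤ τ := Measure.restrict_le_self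
    have fβ : IsFiniteMeasure β := isFiniteMeasure_of_le τ lβ
    have bβ := intc β (lβ.trans lτ)
    have split : ∀ σ : Measure ℝ, β ≤ σ → σ ≤ μ → IsFiniteMeasure (σ - β) ∧ σ - β + β = σ ∧
        (∫ p, c₁ p.1 ∂(σ ⊗ₘ κ) = ∫ p, c₁ p.1 ∂((σ - β) ⊗ₘ κ) + ∫ p, c₁ p.1 ∂(β ⊗ₘ κ)) ∧
        (∫ p, c₂ p ∂(σ ⊗ₘ κ) = ∫ p, c₂ p ∂((σ - β) ⊗ₘ κ) + ∫ p, c₂ p ∂(β ⊗ₘ κ)) := by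
      intro σ h1 h2
      have l1 : σ - β ≤ μ := Measure.sub_le.trans h2
      have f1 : IsFiniteMeasure (σ - β) := isFiniteMeasure_of_le μ l1
      have e := Measure.sub_add_cancel_of_le h1
      have i1 := intc _ l1
      refine ⟨f1, e, ?_, ?_⟩
      · rw [← integral_add_measure i1.1 bβ.1, ← Measure.compProd_add_left, e]
      · rw [← integral_add_measure i1.2 bβ.2, ← Measure.compProd_add_left, e]
    have joinc : ∀ σ : Measure ℝ, σ ≤ μ →
        (∫ p, c₁ p.1 ∂((σ + β) ⊗ₘ κ) = ∫ p, c₁ p.1 ∂(σ ⊗ₘ κ) + ∫ p, c₁ p.1 ∂(β ⊗ₘ κ)) ∧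
        (∫ p, c₂ p ∂((σ + β) ⊗ₘ κ) = ∫ p, c₂ p ∂(σ ⊗ₘ κ) + ∫ p, c₂ p ∂(β ⊗ₘ κ)) := by
      intro σ h2
      have f1 : IsFiniteMeasure σ := isFiniteMeasure_of_le μ h2
      have i1 := intc _ h2
      rw [Measure.compProd_add_left]
      exact ⟨integral_add_measure i1.1 bβ.1, integral_add_measure i1.2 bβ.2⟩
    obtain ⟨_, a1, a2, a3⟩ := split σ₁ (lβ.trans hτ1) lσ1
    obtain ⟨_, b1, b2, b3⟩ := split σ₂ (lβ.trans hτ2) lσ2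
    have v1 := val (σ₁ + β) (σ₂ - β) (by rw [← hσ]; conv_rhs => rw [← b1]
                                         ac_rfl)
    have v2 := val (σ₁ - β) (σ₂ + β) (by rw [← hσ]; conv_rhs => rw [← a1]
                                         ac_rfl)
    rw [(joinc σ₁ lσ1).1] at v1
    rw [(joinc σ₂ lσ2).2] at v2
    linarith
  have iT := intc τ lτ
  have iD : Integrable (fun p : ℝ × ℝ => c₁ p.1 - c₂ p) (τ ⊗ₘ κ) := iT.1.sub iT.2
  have hI : Integrable (fun x => ∫ y, (c₁ x - c₂ (x, y)) ∂(κ x)) τ :=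
    Integrable.integral_compProd (κ := Kernel.const Unit τ)
      (η := Kernel.prodMkLeft Unit κ) (a := ()) iD
  have hz : (fun x => ∫ y, (c₁ x - c₂ (x, y)) ∂(κ x)) =ᵐ[τ] 0 := by
    refine hI.ae_eq_zero_of_forall_setIntegral_eq_zero fun B hBm _ => ?_
    have iB := intc (τ.restrict B) (Measure.restrict_le_self.trans lτ)
    have iDB : Integrable (fun p : ℝ × ℝ => c₁ p.1 - c₂ p) (τ.restrict B ⊗ₘ κ) := iB.1.sub iB.2
    rw [← Measure.integral_compProd iDB, integral_sub iB.1 iB.2, bal B, sub_self]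
  have hpos : ∀ᵐ x ∂τ, 0 < κ x (Iio x) ∧ 0 < κ x (Ioi x) := by
    filter_upwards [hz, ae_mono lτ hm, ae_mono lτ hne] with x h1 h2 h3
    refine charges_sides h2.1 h2.2 fun hd => h3 ?_
    have h1' : ∫ y, (c₁ x - c₂ (x, y)) ∂(κ x) = 0 := h1
    rw [hd, integral_dirac] at h1'
    linarith
  by_contra hτ0
  -- a rational separating point
  have hq : ∃ q : ℚ, 0 < τ {x | 0 < κ x (Iio (q : ℝ)) ∧ 0 < κ x (Ioi (q : ℝ))} := by
    by_contra hc
    push Not at hc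
    have hall : ∀ᵐ x ∂τ, ∀ q : ℚ, ¬ (0 < κ x (Iio (q : ℝ)) ∧ 0 < κ x (Ioi (q : ℝ))) := by
      rw [ae_all_iff]
      intro q
      have := measure_eq_zero_iff_ae_notMem.1 (nonpos_iff_eq_zero.1 (hc q))
      simpa using this
    have : ∀ᵐ x ∂τ, False := by
      filter_upwards [hall, hpos] with x h1 h2
      have hu : Iio x = ⋃ q : {q : ℚ // (q : ℝ) < x}, Iio ((q : ℚ) : ℝ) := by
        ext y
        simp only [mem_Iio, mem_iUnion, Subtype.exists, exists_prop]
        constructor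
        · intro hy
          obtain ⟨q, hq1, hq2⟩ := exists_rat_btwn hy
          exact ⟨q, hq2, hq1⟩
        · rintro ⟨q, hq1, hq2⟩
          exact hq2.trans hq1
      have h4 := h2.1
      rw [hu] at h4
      obtain ⟨⟨q, hq⟩, hq'⟩ : ∃ q : {q : ℚ // (q : ℝ) < x}, 0 < κ x (Iio ((q : ℚ) : ℝ)) := by
        by_contra hcc
        push Not at hcc
        have : κ x (⋃ q : {q : ℚ // (q : ℝ) < x}, Iio ((q : ℚ) : ℝ)) = 0 :=
          measure_iUnion_null fun q => nonpos_iff_eq_zero.1 (hcc q)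
        rw [this] at h4
        exact lt_irrefl _ h4
      exact h1 q ⟨hq', h2.2.trans_le (measure_mono (Ioi_subset_Ioi hq.le))⟩
    rw [Filter.eventually_false_iff_eq_bot, ae_eq_bot] at this
    exact hτ0 this
  obtain ⟨q, hq⟩ := hq
  set r : ℝ := (q : ℝ) with hr
  set A : Set ℝ := {x | 0 < κ x (Iio r) ∧ 0 < κ x (Ioi r)} with hAd
  have mk : ∀ s : Set ℝ, MeasurableSet s → MeasurableSet {x | 0 < κ x s} := fun s hs =>
    measurableSet_lt measurable_const (κ.measurable_coe hs)
  have mA : MeasurableSet A := (mk _ measurableSet_Iio).inter (mk _ measurableSet_Ioi)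
  set α := τ.restrict A with hα
  have lα : α ≤ τ := Measure.restrict_le_self
  have fα : IsFiniteMeasure α := isFiniteMeasure_of_le τ lα
  set l : Measure ℝ := (α ⊗ₘ κ).map Prod.snd with hl
  have lapp : ∀ s : Set ℝ, MeasurableSet s → l s = ∫⁻ x, κ x s ∂α := by
    intro s hs
    rw [hl, Measure.map_apply measurable_snd hs, Measure.compProd_apply (measurable_snd hs)]
    rfl
  have lν : l ≤ ν := by
    rw [← hs]
    exact Measure.map_mono (compProd_left_mono (lα.trans lτ) κ) measurable_snd
  have latom : ∀ y, l {y} = 0 := fun y =>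
    nonpos_iff_eq_zero.1 ((lν {y}).trans (by rw [hac (Real.volume_singleton)]))
  have lr : 0 < l (Ioi r) := by
    rw [lapp _ measurableSet_Ioi, pos_iff_ne_zero]
    intro h0
    rw [lintegral_eq_zero_iff (κ.measurable_coe measurableSet_Ioi)] at h0
    have : τ A = 0 := by
      rw [hα, Filter.EventuallyEq, ae_restrict_iff' mA] at h0
      refine measure_eq_zero_iff_ae_notMem.2 ?_
      filter_upwards [h0] with x hx hxA
      have := hx hxA
      exact hxA.2.ne' this
    exact hq.ne' this
  obtain ⟨t, hrt, ht1, ht2⟩ := exists_split latom lr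
  have hlt := swap_lemma hA hstrict hk hσ hτ1 hτ2 hrt (by
      rw [pos_iff_ne_zero]
      intro h0
      apply ht2.ne'
      rw [lapp _ measurableSet_Ioi, lintegral_eq_zero_iff (κ.measurable_coe measurableSet_Ioi),
        hα, Filter.EventuallyEq, ae_restrict_iff' mA]
      filter_upwards [measure_eq_zero_iff_ae_notMem.1 h0] with x hx hxA
      by_contra hc
      exact hx ⟨hxA.1, pos_iff_ne_zero.2 hc⟩) (by
      refine lt_of_lt_of_le ht1 ?_
      rw [hl, Measure.map_apply measurable_snd measurableSet_Ioo]
      exact compProd_left_mono lα κ _)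
  exact absurd hopt hlt.ne

lemma sub_zero_of_optimal {μ ν : Measure ℝ} {c₁ : ℝ → ℝ} {c₂ : ℝ × ℝ → ℝ}
    (hA : AssumpA μ ν c₁ c₂)
    (hstrict : ∀ x : ℝ, StrictConvexOn ℝ Set.univ fun y => c₂ (x, y))
    (hne : ∀ᵐ x ∂μ, c₁ x ≠ c₂ (x, x))
    (hac : ν ≪ (volume : Measure ℝ))
    {κ : Kernel ℝ ℝ} (hk : MartKernel μ ν κ) {μ₁ μ₁' : Measure ℝ} (h1 : μ₁ ≤ μ) (h1' : μ₁' ≤ μ)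
    (ho : ∫ p, c₁ p.1 ∂(μ₁ ⊗ₘ κ) + ∫ p, c₂ p ∂((μ - μ₁) ⊗ₘ κ) =
      RelaxedValue μ ν ![fun p => c₁ p.1, c₂])
    (ho' : ∫ p, c₁ p.1 ∂(μ₁' ⊗ₘ κ) + ∫ p, c₂ p ∂((μ - μ₁') ⊗ₘ κ) =
      RelaxedValue μ ν ![fun p => c₁ p.1, c₂]) : μ₁ ≤ μ₁' := by
  have hA' := hA
  obtain ⟨hμ, hν, iμ, iν, hc1, hc2, _, -⟩ := hA'
  have hk' := hk
  obtain ⟨hM, hs, hm⟩ := hk'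
  have hs1 : (μ ⊗ₘ κ).map Prod.fst = μ := Measure.fst_compProd μ κ
  have intc : ∀ ρ : Measure ℝ, ρ ≤ μ → Integrable (fun p : ℝ × ℝ => c₁ p.1) (ρ ⊗ₘ κ) ∧
      Integrable c₂ (ρ ⊗ₘ κ) := fun ρ hρ => integrable_c hA (compProd_left_mono hρ κ) hs1 hs
  have f1 : IsFiniteMeasure μ₁ := isFiniteMeasure_of_le μ h1
  have f1' : IsFiniteMeasure μ₁' := isFiniteMeasure_of_le μ h1'
  have f2 : IsFiniteMeasure (μ - μ₁) := isFiniteMeasure_of_le μ Measure.sub_le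
  have f2' : IsFiniteMeasure (μ - μ₁') := isFiniteMeasure_of_le μ Measure.sub_le
  have e := Measure.sub_add_cancel_of_le h1
  have e' := Measure.sub_add_cancel_of_le h1'
  obtain ⟨S, hS, hS1, hS2⟩ := hahn_decomposition (μ := μ₁) (ν := μ₁')
  have hτ := tau_zero hA hstrict hne hac hk (σ₁ := (2⁻¹ : ℝ≥0∞) • (μ₁ + μ₁'))
    (σ₂ := (2⁻¹ : ℝ≥0∞) • ((μ - μ₁) + (μ - μ₁'))) (τ := (2⁻¹ : ℝ≥0∞) • (μ₁ - μ₁')) ?_ ?_ ?_ ?_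
  · have h0 : μ₁ - μ₁' = 0 := by
      have := congrArg (fun m => (2 : ℝ≥0∞) • m) hτ
      simpa [smul_smul, ENNReal.mul_inv_cancel] using this
    have hr : μ₁.restrict S - μ₁'.restrict S = 0 := by
      rw [← Measure.restrict_sub_eq_restrict_sub_restrict hS, h0, Measure.restrict_zero]
    have hle : μ₁'.restrict S ≤ μ₁.restrict S := by
      refine Measure.le_iff.2 fun B hB => ?_
      rw [Measure.restrict_apply hB, Measure.restrict_apply hB]
      exact hS1 _ (hB.inter hS) inter_subset_right
    have he : μ₁.restrict S = μ₁'.restrict S := by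
      have := Measure.sub_add_cancel_of_le hle
      rw [hr, zero_add] at this
      exact this.symm
    refine Measure.le_iff.2 fun B hB => ?_
    rw [← measure_inter_add_sdiff B hS, ← measure_inter_add_sdiff (μ := μ₁') B hS]
    have h3 : μ₁ (B ∩ S) = μ₁' (B ∩ S) := by
      have := congrArg (fun m => m B) he
      simpa [Measure.restrict_apply hB] using this
    rw [h3]
    gcongr 1
    exact hS2 _ (hB.diff hS) (fun x hx => hx.2)
  · rw [← smul_add]
    have : μ₁ + μ₁' + (μ - μ₁ + (μ - μ₁')) = (2 : ℝ≥0∞) • μ := by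
      calc μ₁ + μ₁' + (μ - μ₁ + (μ - μ₁')) = (μ - μ₁ + μ₁) + (μ - μ₁' + μ₁') := by ac_rfl
        _ = μ + μ := by rw [e, e']
        _ = (2 : ℝ≥0∞) • μ := by rw [two_smul]
    rw [this, smul_smul, ENNReal.inv_mul_cancel (by norm_num) (by norm_num), one_smul]
  · gcongr
    exact Measure.sub_le.trans (Measure.le_add_right le_rfl)
  · gcongr
    refine Measure.sub_le_of_le_add ?_
    calc μ₁ ≤ μ := h1
      _ = μ - μ₁' + μ₁' := e'.symm
      _ ≤ _ := by gcongr; exact Measure.le_add_left le_rfl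
  · have i1 := intc _ h1
    have i1' := intc _ h1'
    have i2 := intc _ (Measure.sub_le : μ - μ₁ ≤ μ)
    have i2' := intc _ (Measure.sub_le : μ - μ₁' ≤ μ)
    rw [Measure.compProd_smul_left, Measure.compProd_smul_left, integral_smul_measure,
      integral_smul_measure, Measure.compProd_add_left, Measure.compProd_add_left,
      integral_add_measure i1.1 i1'.1, integral_add_measure i2.2 i2'.2]
    simp only [ENNReal.toReal_inv, ENNReal.toReal_ofNat, smul_eq_mul]
    linarith

/-- Given a fixed optimal model `π` (presented through its disintegration kernel `κ`),
the optimal exercise measure `μ₁` is unique. -/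
theorem optimal_exercise_unique
    (μ ν : Measure ℝ) (c₁ : ℝ → ℝ) (c₂ : ℝ × ℝ → ℝ)
    (hA : AssumpA μ ν c₁ c₂)
    (hstrict : ∀ x : ℝ, StrictConvexOn ℝ Set.univ fun y => c₂ (x, y))
    (hne : ∀ᵐ x ∂μ, c₁ x ≠ c₂ (x, x))
    (hac : ν ≪ (volume : Measure ℝ))
    (heq : PrimalValue μ ν c₁ c₂ = RelaxedValue μ ν ![fun p => c₁ p.1, c₂]) :
    ∀ (κ : Kernel ℝ ℝ) (μ₁ μ₁' : Measure ℝ), MartKernel μ ν κ → μ₁ ≤ μ → μ₁' ≤ μ →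
      ∫ p, c₁ p.1 ∂(μ₁ ⊗ₘ κ) + ∫ p, c₂ p ∂((μ - μ₁) ⊗ₘ κ) = PrimalValue μ ν c₁ c₂ →
      ∫ p, c₁ p.1 ∂(μ₁' ⊗ₘ κ) + ∫ p, c₂ p ∂((μ - μ₁') ⊗ₘ κ) = PrimalValue μ ν c₁ c₂ →
      μ₁ = μ₁' := by
  intro κ μ₁ μ₁' hk h1 h1' ho ho'
  rw [heq] at ho ho'
  exact le_antisymm (sub_zero_of_optimal hA hstrict hne hac hk h1 h1' ho ho')
    (sub_zero_of_optimal hA hstrict hne hac hk h1' h1 ho' ho)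

end
end

section
/- (Duality) Assume [A']. Then P̄_c = D̄_c: the supremum of Σ_{l=1}^L ∫c_l dγ_l over (γ₁,…,γ_L) ∈ ℳ_L(μ,ν) equals the infimum of ∫φ dμ + ∫ψ dν over (φ, ψ, θ₁,…,θ_L) ∈ Ψ̄_c. -/
open MeasureTheory ProbabilityTheory Set
open scoped ENNReal

noncomputable section

/-- Continuous functions on the plane of growth at most `G`. -/
def growthSpace (G : ℝ × ℝ → ℝ) : Submodule ℝ (ℝ × ℝ → ℝ) where
  carrier := {f | Continuous f ∧ ∃ K, ∀ p, |f p| ≤ K * G p}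
  add_mem' := by
    rintro f g ⟨hf, K, hK⟩ ⟨hg, K', hK'⟩
    refine ⟨hf.add hg, K + K', fun p => ?_⟩
    have := abs_add_le (f p) (g p)
    have h1 := hK p
    have h2 := hK' p
    simp only [Pi.add_apply]
    linarith
  zero_mem' := ⟨continuous_const, 0, fun p => by simp⟩
  smul_mem' := by
    rintro t f ⟨hf, K, hK⟩
    refine ⟨hf.const_smul t, |t| * K, fun p => ?_⟩
    simp only [Pi.smul_apply, smul_eq_mul, abs_mul, mul_assoc]
    exact mul_le_mul_of_nonneg_left (hK p) (abs_nonneg t)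

lemma mem_growthSpace {G f : ℝ × ℝ → ℝ} :
    f ∈ growthSpace G ↔ Continuous f ∧ ∃ K, ∀ p, |f p| ≤ K * G p := Iff.rfl

/-- Cut-off function adapted to `G`. -/
def cutoff (G : ℝ × ℝ → ℝ) (n : ℕ) (p : ℝ × ℝ) : ℝ :=
  max 0 (min 1 (2 - G p / (2 * ((n : ℝ) + 1))))

lemma cutoff_nonneg (G : ℝ × ℝ → ℝ) (n : ℕ) (p : ℝ × ℝ) : 0 ≤ cutoff G n p := le_max_left _ _

lemma cutoff_le_one (G : ℝ × ℝ → ℝ) (n : ℕ) (p : ℝ × ℝ) : cutoff G n p ≤ 1 :=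
  max_le zero_le_one (min_le_left _ _)

lemma cutoff_continuous {G : ℝ × ℝ → ℝ} (hG : Continuous G) (n : ℕ) :
    Continuous (cutoff G n) := by
  unfold cutoff
  fun_prop

lemma cutoff_eq_one {G : ℝ × ℝ → ℝ} {n : ℕ} {p : ℝ × ℝ} (h : G p ≤ 2 * ((n : ℝ) + 1)) :
    cutoff G n p = 1 := by
  have : G p / (2 * ((n : ℝ) + 1)) ≤ 1 := by
    rw [div_le_one (by positivity)]; exact h
  unfold cutoff
  rw [min_eq_left (by linarith), max_eq_right zero_le_one]

lemma cutoff_eq_zero {G : ℝ × ℝ → ℝ} {n : ℕ} {p : ℝ × ℝ} (h : 4 * ((n : ℝ) + 1) < G p) :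
    cutoff G n p = 0 := by
  have : 2 ≤ G p / (2 * ((n : ℝ) + 1)) := by
    rw [le_div_iff₀ (by positivity)]; linarith
  unfold cutoff
  exact max_eq_left ((min_le_right _ _).trans (by linarith))

lemma cutoff_tendsto (G : ℝ × ℝ → ℝ) (p : ℝ × ℝ) :
    Filter.Tendsto (fun n => cutoff G n p) Filter.atTop (nhds 1) := by
  obtain ⟨N, hN⟩ := exists_nat_ge (G p)
  refine tendsto_const_nhds.congr' ?_
  filter_upwards [Filter.eventually_ge_atTop N] with n hn
  have : (N : ℝ) ≤ n := by exact_mod_cast hn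
  have h0 : (0 : ℝ) ≤ n := by positivity
  exact (cutoff_eq_one (by linarith)).symm

lemma cutoff_mul_mem {G : ℝ × ℝ → ℝ} (hG : Continuous G) {f : ℝ × ℝ → ℝ}
    (hf : f ∈ growthSpace G) (n : ℕ) : (fun p => cutoff G n p * f p) ∈ growthSpace G := by
  obtain ⟨hc, K, hK⟩ := hf
  refine ⟨(cutoff_continuous hG n).mul hc, K, fun p => ?_⟩
  rw [abs_mul, abs_of_nonneg (cutoff_nonneg G n p)]
  exact (mul_le_of_le_one_left (abs_nonneg _) (cutoff_le_one G n p)).trans (hK p)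

open CompactlySupported in
lemma compact_mem {G : ℝ × ℝ → ℝ} (h1 : ∀ p, 1 ≤ G p) (f : C_c(ℝ × ℝ, ℝ)) :
    (f : ℝ × ℝ → ℝ) ∈ growthSpace G := by
  obtain ⟨C, hC⟩ := f.hasCompactSupport.exists_bound_of_continuous f.continuous
  refine ⟨f.continuous, C, fun p => ?_⟩
  have h := hC p
  rw [Real.norm_eq_abs] at h
  have : 0 ≤ C := (abs_nonneg _).trans h
  nlinarith [h1 p]

open CompactlySupported in
lemma riesz_growth {G : ℝ × ℝ → ℝ} (hG : Continuous G) (h1 : ∀ p, 1 ≤ G p)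
    (hcomp : ∀ R, IsCompact {p | G p ≤ R})
    (Λ : growthSpace G →ₗ[ℝ] ℝ) (hpos : ∀ f : growthSpace G, (∀ p, 0 ≤ f.1 p) → 0 ≤ Λ f)
    (htight : ∀ ε > 0, ∃ R : ℝ, ∀ f : growthSpace G,
      (∀ p, f.1 p ≤ 2 * max (G p - R) 0) → Λ f ≤ ε) :
    ∃ γ : Measure (ℝ × ℝ), ∀ f : growthSpace G, Integrable f.1 γ ∧ ∫ p, f.1 p ∂γ = Λ f := by
  have hmono : ∀ f g : growthSpace G, (∀ p, f.1 p ≤ g.1 p) → Λ f ≤ Λ g := by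
    intro f g h
    have := hpos (g - f) (fun p => by simpa using h p)
    rw [map_sub] at this
    linarith
  let L0 : C_c(ℝ × ℝ, ℝ) →ₗ[ℝ] ℝ :=
    { toFun := fun f => Λ ⟨f, compact_mem h1 f⟩
      map_add' := fun f g => by rw [← map_add]; rfl
      map_smul' := fun t f => by rw [← map_smul]; rfl }
  let L1 : C_c(ℝ × ℝ, ℝ) →ₚ[ℝ] ℝ := PositiveLinearMap.mk₀ L0 (fun f hf => hpos _ hf)
  let γ := RealRMK.rieszMeasure L1
  have hcut : ∀ (f : growthSpace G) (n : ℕ), 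
      Integrable (fun p => cutoff G n p * f.1 p) γ ∧ 
      ∫ p, cutoff G n p * f.1 p ∂γ = Λ ⟨_, cutoff_mul_mem hG f.2 n⟩ := by
    intro f n
    have hsup : HasCompactSupport (fun p => cutoff G n p * f.1 p) := by
      refine HasCompactSupport.intro (hcomp (4 * ((n : ℝ) + 1))) (fun p hp => ?_)
      simp only [mem_ofPred_eq, not_le] at hp
      rw [cutoff_eq_zero hp, zero_mul]
    let F : C_c(ℝ × ℝ, ℝ) := ⟨⟨fun p => cutoff G n p * f.1 p, (cutoff_mul_mem hG f.2 n).1⟩, hsup⟩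
    exact ⟨(cutoff_mul_mem hG f.2 n).1.integrable_of_hasCompactSupport hsup,
      RealRMK.integral_rieszMeasure L1 F⟩
  have hGm : G ∈ growthSpace G := ⟨hG, 1, fun p => by
    rw [abs_of_nonneg (by linarith [h1 p]), one_mul]⟩
  have hGint : Integrable G γ := by
    refine ⟨hG.aestronglyMeasurable, ?_⟩
    rw [hasFiniteIntegral_iff_ofReal (Filter.Eventually.of_forall fun p => by
      simp only [Pi.zero_apply]; linarith [h1 p])]
    have key : ∫⁻ p, ENNReal.ofReal (G p) ∂γ ≤ ENNReal.ofReal (Λ ⟨G, hGm⟩) := by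
      calc ∫⁻ p, ENNReal.ofReal (G p) ∂γ 
          = ∫⁻ p, Filter.liminf (fun n => ENNReal.ofReal (cutoff G n p * G p)) Filter.atTop ∂γ := by
            refine lintegral_congr fun p => ?_
            refine (Filter.Tendsto.liminf_eq ?_).symm
            refine (ENNReal.continuous_ofReal.tendsto _).comp ?_
            simpa using (cutoff_tendsto G p).mul_const (G p)
        _ ≤ Filter.liminf (fun n => ∫⁻ p, ENNReal.ofReal (cutoff G n p * G p) ∂γ) Filter.atTop := by
            refine lintegral_liminf_le fun n => ?_
            exact (((cutoff_continuous hG n).mul hG).measurable).ennreal_ofReal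
        _ ≤ ENNReal.ofReal (Λ ⟨G, hGm⟩) := by
            refine Filter.liminf_le_of_le ?_ ?_
            · isBoundedDefault
            · intro b hb
              obtain ⟨n, hn⟩ := hb.exists
              refine hn.trans ?_
              rw [← ofReal_integral_eq_lintegral_ofReal (hcut ⟨G, hGm⟩ n).1
                (Filter.Eventually.of_forall fun p => 
                  mul_nonneg (cutoff_nonneg G n p) (by linarith [h1 p])), (hcut ⟨G, hGm⟩ n).2]
              refine ENNReal.ofReal_le_ofReal (hmono _ _ fun p => ?_)
              exact mul_le_of_le_one_left (by linarith [h1 p]) (cutoff_le_one G n p)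
    exact key.trans_lt ENNReal.ofReal_lt_top
  have hupper : ∀ f : growthSpace G, ∀ ε > 0, ∃ N : ℕ, ∀ n ≥ N, 
      Λ f - Λ ⟨_, cutoff_mul_mem hG f.2 n⟩ ≤ ε := by
    intro f ε hε
    obtain ⟨hc, K, hK⟩ := f.2
    have hK' : ∀ p, |f.1 p| ≤ (max K 1) * G p := fun p => (hK p).trans
      (mul_le_mul_of_nonneg_right (le_max_left _ _) (by linarith [h1 p]))
    have hKpos : 0 < max K 1 := lt_max_of_lt_right one_pos
    set K' := max K 1
    obtain ⟨R, hR⟩ := htight (ε / K') (by positivity)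
    obtain ⟨N, hN⟩ := exists_nat_ge R
    refine ⟨N, fun n hn => ?_⟩
    have hRn : R ≤ n := hN.trans (by exact_mod_cast hn)
    have h := hR (K'⁻¹ • (f - ⟨_, cutoff_mul_mem hG f.2 n⟩)) (fun p => ?_)
    · rw [map_smul, map_sub, smul_eq_mul, inv_mul_le_iff₀ hKpos, mul_div_cancel₀ _ hKpos.ne'] at h
      exact h
    · change K'⁻¹ * (f.1 p - cutoff G n p * f.1 p) ≤ _
      rw [inv_mul_le_iff₀ hKpos]
      by_cases hp : G p ≤ 2 * ((n : ℝ) + 1)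
      · rw [cutoff_eq_one hp, one_mul, sub_self]
        positivity
      · push Not at hp
        have e1 : f.1 p - cutoff G n p * f.1 p ≤ |f.1 p| := by
          have := cutoff_nonneg G n p
          have h3 := cutoff_le_one G n p
          have : f.1 p - cutoff G n p * f.1 p = (1 - cutoff G n p) * f.1 p := by ring
          rw [this]
          exact (mul_le_mul_of_nonneg_left (le_abs_self _) (by linarith)).trans
            (mul_le_of_le_one_left (abs_nonneg _) (by linarith))
        refine e1.trans ((hK' p).trans (mul_le_mul_of_nonneg_left ?_ hKpos.le))
        have := le_max_left (G p - R) 0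
        linarith
  have hlim : ∀ f : growthSpace G, Filter.Tendsto 
      (fun n => Λ ⟨_, cutoff_mul_mem hG f.2 n⟩) Filter.atTop (nhds (Λ f)) := by
    intro f
    rw [Metric.tendsto_atTop]
    intro ε hε
    obtain ⟨N, hN⟩ := hupper f (ε / 2) (by positivity)
    obtain ⟨N', hN'⟩ := hupper (-f) (ε / 2) (by positivity)
    refine ⟨max N N', fun n hn => ?_⟩
    have h2 := hN n (le_trans (le_max_left _ _) hn)
    have h3 := hN' n (le_trans (le_max_right _ _) hn)
    have e : (⟨_, cutoff_mul_mem hG (-f).2 n⟩ : growthSpace G) = 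
        - ⟨_, cutoff_mul_mem hG f.2 n⟩ := by
      ext p
      simp
    rw [e, map_neg, map_neg] at h3
    rw [Real.dist_eq, abs_lt]
    constructor <;> linarith
  refine ⟨γ, fun f => ?_⟩
  obtain ⟨hc, K, hK⟩ := f.2
  have hint : Integrable f.1 γ := (hGint.const_mul K).mono' hc.aestronglyMeasurable
    (Filter.Eventually.of_forall hK)
  refine ⟨hint, tendsto_nhds_unique ?_ (hlim f)⟩
  have : Filter.Tendsto (fun n => ∫ p, cutoff G n p * f.1 p ∂γ) Filter.atTop 
      (nhds (∫ p, f.1 p ∂γ)) := by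
    refine tendsto_integral_of_dominated_convergence (fun p => |f.1 p|) 
      (fun n => (hcut f n).1.1) hint.abs (fun n => Filter.Eventually.of_forall fun p => ?_)
      (Filter.Eventually.of_forall fun p => ?_)
    · rw [Real.norm_eq_abs, abs_mul, abs_of_nonneg (cutoff_nonneg G n p)]
      exact mul_le_of_le_one_left (abs_nonneg _) (cutoff_le_one G n p)
    · simpa using (cutoff_tendsto G p).mul_const (f.1 p)
  exact this.congr fun n => (hcut f n).2

lemma mart_of_integral (γ : Measure (ℝ × ℝ)) [IsFiniteMeasure γ]
    (hx : Integrable (fun p : ℝ × ℝ => p.1) γ) (hy : Integrable (fun p : ℝ × ℝ => p.2) γ)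
    (h : ∀ θ : ℝ → ℝ, Continuous θ → (∃ M, ∀ x, |θ x| ≤ M) →
      ∫ p, θ p.1 * (p.2 - p.1) ∂γ = 0) :
    ∃ κ : Kernel ℝ ℝ, IsMarkovKernel κ ∧ γ.map Prod.fst ⊗ₘ κ = γ ∧
      ∀ᵐ x ∂(γ.map Prod.fst), Integrable id (κ x) ∧ ∫ y, y ∂(κ x) = x := by
  have hdis : γ.fst ⊗ₘ γ.condKernel = γ := γ.disintegrate γ.condKernel
  refine ⟨γ.condKernel, inferInstance, hdis, ?_⟩
  change ∀ᵐ x ∂γ.fst, _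
  have hy' : Integrable (fun p : ℝ × ℝ => p.2) (γ.fst ⊗ₘ γ.condKernel) := by rwa [hdis]
  have hd' : Integrable (fun p : ℝ × ℝ => p.2 - p.1) (γ.fst ⊗ₘ γ.condKernel) := by
    rw [hdis]; exact hy.sub hx
  have hae : ∀ᵐ x ∂γ.fst, Integrable (fun y => y) (γ.condKernel x) :=
    ((Measure.integrable_compProd_iff hy'.1).1 hy').1
  have hdint : Integrable (fun x => ∫ y, (y - x) ∂γ.condKernel x) γ.fst :=
    MeasureTheory.Integrable.integral_compProd hd'
  have hzero : ∀ᵐ x ∂γ.fst, ∫ y, (y - x) ∂γ.condKernel x = 0 := by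
    refine ae_eq_zero_of_integral_contDiff_smul_eq_zero hdint.locallyIntegrable ?_
    intro g hg hgs
    obtain ⟨C, hC⟩ := hgs.exists_bound_of_continuous hg.continuous
    have e := h g hg.continuous ⟨C, hC⟩
    have hi : Integrable (fun p : ℝ × ℝ => g p.1 * (p.2 - p.1)) (γ.fst ⊗ₘ γ.condKernel) := by
      refine hd'.bdd_mul (c := C) (hg.continuous.comp continuous_fst).aestronglyMeasurable 
        (Filter.Eventually.of_forall fun p => hC p.1)
    rw [← hdis, Measure.integral_compProd hi] at e
    rw [← e]
    refine integral_congr_ae (Filter.Eventually.of_forall fun x => ?_)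
    simp only [smul_eq_mul]
    rw [integral_const_mul]
  filter_upwards [hae, hzero] with x h1 h2
  refine ⟨h1, ?_⟩
  rw [integral_sub h1 (integrable_const x)] at h2
  simp at h2
  linarith

lemma integral_mart {ρ : Measure ℝ} [IsFiniteMeasure ρ] {κ : Kernel ℝ ℝ} [IsMarkovKernel κ]
    (hx : Integrable (fun p : ℝ × ℝ => p.1) (ρ ⊗ₘ κ))
    (hy : Integrable (fun p : ℝ × ℝ => p.2) (ρ ⊗ₘ κ))
    (h : ∀ᵐ x ∂ρ, Integrable id (κ x) ∧ ∫ y, y ∂(κ x) = x)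
    {θ : ℝ → ℝ} (hθ : Continuous θ) {M : ℝ} (hM : ∀ x, |θ x| ≤ M) :
    Integrable (fun p : ℝ × ℝ => θ p.1 * (p.2 - p.1)) (ρ ⊗ₘ κ) ∧
    ∫ p, θ p.1 * (p.2 - p.1) ∂(ρ ⊗ₘ κ) = 0 := by
  have hi : Integrable (fun p : ℝ × ℝ => θ p.1 * (p.2 - p.1)) (ρ ⊗ₘ κ) := 
    (hy.sub hx).bdd_mul (c := M) (hθ.comp continuous_fst).aestronglyMeasurable 
        (Filter.Eventually.of_forall fun p => hM p.1)
  refine ⟨hi, ?_⟩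
  rw [Measure.integral_compProd hi]
  refine integral_eq_zero_of_ae ?_
  filter_upwards [h] with x hx
  simp only [Pi.zero_apply]
  have hx1 : Integrable (fun y : ℝ => y) (κ x) := hx.1
  rw [integral_const_mul, integral_sub hx1 (integrable_const x)]
  simp [hx.2]

lemma weak_duality {μ ν : Measure ℝ} {L : ℕ} {c : Fin L → ℝ × ℝ → ℝ}
    (hA : AssumpA' μ ν c) {γ : Fin L → Measure (ℝ × ℝ)} (hγ : MLfeasible μ ν γ)
    {φ ψ : ℝ → ℝ} {θ : Fin L → ℝ → ℝ} (hd : DualFeasible μ ν c φ ψ θ) :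
    ∑ l, ∫ p, c l p ∂(γ l) ≤ ∫ x, φ x ∂μ + ∫ y, ψ y ∂ν := by
  obtain ⟨hμ, hν, hμi, hνi, hc, -, v, w, hv, hw, hvi, hwi, hb⟩ := hA
  obtain ⟨hφ, hφi, hψ, hψi, hθ, hineq⟩ := hd
  obtain ⟨hsub, κ, ⟨hκ, hsnd, hκm⟩, hsum⟩ := hγ
  have hfst : (∑ l, γ l).map Prod.fst = μ := by
    rw [hsum]; exact Measure.fst_compProd μ κ
  rw [← hsum] at hsnd
  have hle : ∀ l, γ l ≤ ∑ l, γ l := fun l =>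
    Finset.single_le_sum (f := γ) (fun i _ => Measure.zero_le _) (Finset.mem_univ l)
  have hI1 : ∀ f : ℝ → ℝ, Integrable f μ → Integrable (fun p : ℝ × ℝ => f p.1) (∑ l, γ l) := by
    intro f hf
    rw [← hfst] at hf
    exact hf.comp_measurable measurable_fst
  have hI2 : ∀ f : ℝ → ℝ, Integrable f ν → Integrable (fun p : ℝ × ℝ => f p.2) (∑ l, γ l) := by
    intro f hf
    rw [← hsnd] at hf
    exact hf.comp_measurable measurable_snd
  have hl : ∀ l, ∫ p, c l p ∂(γ l) ≤ ∫ p, (φ p.1 + ψ p.2) ∂(γ l) := by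
    intro l
    have hx := (hI1 _ hμi).mono_measure (hle l)
    have hy := (hI2 _ hνi).mono_measure (hle l)
    have i1 : Integrable (fun p : ℝ × ℝ => φ p.1 + ψ p.2) (γ l) := ((hI1 _ hφi).add (hI2 _ hψi)).mono_measure (hle l)
    have i2 : Integrable (c l) (γ l) := by
      refine (((hI1 _ hvi).add (hI2 _ hwi)).mono_measure (hle l)).mono' 
        (hc l).aestronglyMeasurable (Filter.Eventually.of_forall fun p => ?_)
      refine le_trans ?_ (hb p.1 p.2)
      exact Finset.single_le_sum (f := fun l => |c l (p.1, p.2)|) (fun i _ => abs_nonneg _) 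
        (Finset.mem_univ l)
    have h3 : Integrable (fun p : ℝ × ℝ => θ l p.1 * (p.2 - p.1)) (γ l) ∧
        ∫ p, θ l p.1 * (p.2 - p.1) ∂(γ l) = 0 := by
      obtain ⟨hfin, h0 | ⟨κ', hκ', hdis, hm⟩⟩ := hsub l
      · simp [h0]
      · obtain ⟨M, hM⟩ := (hθ l).2
        rw [← hdis]
        rw [← hdis] at hx hy
        exact integral_mart hx hy hm (hθ l).1 hM
    calc ∫ p, c l p ∂(γ l) ≤ ∫ p, ((φ p.1 + ψ p.2) + θ l p.1 * (p.2 - p.1)) ∂(γ l) := 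
          integral_mono i2 (i1.add h3.1) (fun p => hineq l p.1 p.2)
      _ = _ := by rw [integral_add i1 h3.1, h3.2, add_zero]
  calc ∑ l, ∫ p, c l p ∂(γ l) ≤ ∑ l, ∫ p, (φ p.1 + ψ p.2) ∂(γ l) := 
        Finset.sum_le_sum fun l _ => hl l
    _ = ∫ p, (φ p.1 + ψ p.2) ∂(∑ l, γ l) := by
        rw [integral_finsetSum_measure]
        exact fun l _ => ((hI1 _ hφi).add (hI2 _ hψi)).mono_measure (hle l)
    _ = _ := by
        rw [integral_add (hI1 _ hφi) (hI2 _ hψi)]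
        congr 1
        · rw [← hfst, integral_map measurable_fst.aemeasurable hφ.aestronglyMeasurable]
        · rw [← hsnd, integral_map measurable_snd.aemeasurable hψ.aestronglyMeasurable]

/-- The convex order yields nonnegativity of superhedging costs of zero. -/
lemma dual_nonneg {μ ν : Measure ℝ} [IsProbabilityMeasure μ] [IsProbabilityMeasure ν]
    (hνi : Integrable id ν) (hco : ConvexOrder μ ν) {φ ψ θ : ℝ → ℝ}
    (hφi : Integrable φ μ) (hψi : Integrable ψ ν)
    (h : ∀ x y : ℝ, 0 ≤ φ x + ψ y + θ x * (y - x)) :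
    0 ≤ ∫ x, φ x ∂μ + ∫ y, ψ y ∂ν := by
  let g : ℝ → ℝ := fun y => ⨆ x, (-φ x - θ x * (y - x))
  have hbdd : ∀ y, BddAbove (Set.range fun x => (-φ x - θ x * (y - x))) := by
    intro y
    refine ⟨ψ y, ?_⟩
    rintro _ ⟨x, rfl⟩
    linarith [h x y]
  have hlow : ∀ x y, -φ x - θ x * (y - x) ≤ g y := fun x y => le_ciSup (hbdd y) x
  have hup : ∀ y, g y ≤ ψ y := fun y => ciSup_le fun x => by linarith [h x y]
  have hconv : ConvexOn ℝ Set.univ g := by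
    refine ⟨convex_univ, fun y _ z _ a b ha hb hab => ?_⟩
    refine ciSup_le fun x => ?_
    have h1 := mul_le_mul_of_nonneg_left (hlow x y) ha
    have h2 := mul_le_mul_of_nonneg_left (hlow x z) hb
    simp only [smul_eq_mul]
    refine le_trans (le_of_eq ?_) (add_le_add h1 h2)
    have : b = 1 - a := by linarith
    subst this
    ring
  have hgc : Continuous g := continuousOn_univ.1 (hconv.continuousOn isOpen_univ)
  have hgi : Integrable g ν := by
    have hlin : Integrable (fun y => -φ 0 - θ 0 * (y - 0)) ν := by
      refine (integrable_const _).sub (Integrable.const_mul ?_ _)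
      exact hνi.sub (integrable_const _)
    refine (hψi.abs.add hlin.abs).mono' hgc.aestronglyMeasurable 
      (Filter.Eventually.of_forall fun y => ?_)
    simp only [Real.norm_eq_abs, Pi.add_apply]
    have h1 := hup y
    have h2 := hlow 0 y
    rw [abs_le]
    have h3 := neg_abs_le (-φ 0 - θ 0 * (y - 0))
    have h4 := abs_nonneg (ψ y)
    have h5 := abs_nonneg (-φ 0 - θ 0 * (y - 0))
    have h6 := le_abs_self (ψ y)
    constructor <;> linarith
  obtain ⟨hgμ, hle⟩ := hco g hconv hgi
  have h1 : ∫ x, -φ x ∂μ ≤ ∫ x, g x ∂μ := integral_mono hφi.neg hgμ fun x => by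
    simpa using hlow x x
  have h2 : ∫ x, g x ∂ν ≤ ∫ x, ψ x ∂ν := integral_mono hgi hψi hup
  rw [integral_neg] at h1
  linarith

lemma dualSet_bddBelow {μ ν : Measure ℝ} [IsProbabilityMeasure μ] [IsProbabilityMeasure ν]
    (hνi : Integrable id ν) (hco : ConvexOrder μ ν) {V W : ℝ → ℝ}
    (hVi : Integrable V μ) (hWi : Integrable W ν)
    {L : ℕ} (l₀ : Fin L) (f : Fin L → growthSpace (fun p => V p.1 + W p.2)) :
    BddBelow {r | ∃ φ ψ θ, DualFeasible μ ν (fun l => (f l).1) φ ψ θ ∧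
      r = ∫ x, φ x ∂μ + ∫ y, ψ y ∂ν} := by
  obtain ⟨hc, K, hK⟩ := (f l₀).2
  refine ⟨-(K * ∫ x, V x ∂μ + K * ∫ y, W y ∂ν), ?_⟩
  rintro r ⟨φ, ψ, θ, ⟨hφ, hφi, hψ, hψi, hθ, hineq⟩, rfl⟩
  have h := dual_nonneg (μ := μ) (ν := ν) (φ := fun x => φ x + K * V x)
    (ψ := fun y => ψ y + K * W y) (θ := θ l₀) hνi hco 
    (hφi.add (hVi.const_mul K)) (hψi.add (hWi.const_mul K)) (fun x y => by
      have h1 := hineq l₀ x y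
      have h2 := (abs_le.1 (hK (x, y))).1
      simp only at h1 h2
      linarith)
  rw [integral_add hφi (hVi.const_mul K), integral_add hψi (hWi.const_mul K),
    integral_const_mul, integral_const_mul] at h
  linarith

lemma dualSet_nonempty {μ ν : Measure ℝ} {V W : ℝ → ℝ}
    (hV : Continuous V) (hW : Continuous W) (hV1 : ∀ x, 1 ≤ V x) (hW1 : ∀ x, 1 ≤ W x)
    (hVi : Integrable V μ) (hWi : Integrable W ν)
    {L : ℕ} (f : Fin L → growthSpace (fun p => V p.1 + W p.2)) :
    {r | ∃ φ ψ θ, DualFeasible μ ν (fun l => (f l).1) φ ψ θ ∧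
      r = ∫ x, φ x ∂μ + ∫ y, ψ y ∂ν}.Nonempty := by
  choose hc K hK using fun l => (f l).2
  have hKle : ∀ l, K l ≤ ∑ l, |K l| := fun l => (le_abs_self _).trans
    (Finset.single_le_sum (f := fun l => |K l|) (fun i _ => abs_nonneg _) (Finset.mem_univ l))
  refine ⟨_, fun x => (∑ l, |K l|) * V x, fun x => (∑ l, |K l|) * W x, fun _ _ => 0,
    ⟨continuous_const.mul hV, hVi.const_mul _, continuous_const.mul hW, hWi.const_mul _,
      fun l => ⟨continuous_const, 0, fun x => by simp⟩, fun l x y => ?_⟩, rfl⟩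
  have h1 := (le_abs_self _).trans (hK l (x, y))
  have h2 := mul_le_mul_of_nonneg_right (hKle l) (by linarith [hV1 x, hW1 y] : 0 ≤ V x + W y)
  simp only at h1
  linarith

lemma DualFeasible.add {μ ν : Measure ℝ} {L : ℕ} {c c' : Fin L → ℝ × ℝ → ℝ} {φ ψ φ' ψ' : ℝ → ℝ}
    {θ θ' : Fin L → ℝ → ℝ} (h : DualFeasible μ ν c φ ψ θ) (h' : DualFeasible μ ν c' φ' ψ' θ') :
    DualFeasible μ ν (fun l p => c l p + c' l p) (fun x => φ x + φ' x) (fun x => ψ x + ψ' x)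
      (fun l x => θ l x + θ' l x) := by
  obtain ⟨hφ, hφi, hψ, hψi, hθ, hineq⟩ := h
  obtain ⟨hφ', hφi', hψ', hψi', hθ', hineq'⟩ := h'
  refine ⟨hφ.add hφ', hφi.add hφi', hψ.add hψ', hψi.add hψi', fun l => ⟨(hθ l).1.add (hθ' l).1, ?_⟩,
    fun l x y => ?_⟩
  · obtain ⟨M, hM⟩ := (hθ l).2
    obtain ⟨M', hM'⟩ := (hθ' l).2
    exact ⟨M + M', fun x => (abs_add_le _ _).trans (add_le_add (hM x) (hM' x))⟩
  · have h1 := hineq l x y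
    have h2 := hineq' l x y
    simp only
    linarith

lemma DualFeasible.smul {μ ν : Measure ℝ} {L : ℕ} {c : Fin L → ℝ × ℝ → ℝ} {φ ψ : ℝ → ℝ}
    {θ : Fin L → ℝ → ℝ} (h : DualFeasible μ ν c φ ψ θ) {t : ℝ} (ht : 0 ≤ t) :
    DualFeasible μ ν (fun l p => t * c l p) (fun x => t * φ x) (fun x => t * ψ x)
      (fun l x => t * θ l x) := by
  obtain ⟨hφ, hφi, hψ, hψi, hθ, hineq⟩ := h
  refine ⟨continuous_const.mul hφ, hφi.const_mul t, continuous_const.mul hψ, hψi.const_mul t, 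
    fun l => ⟨continuous_const.mul (hθ l).1, ?_⟩, fun l x y => ?_⟩
  · obtain ⟨M, hM⟩ := (hθ l).2
    refine ⟨t * M, fun x => ?_⟩
    rw [abs_mul, abs_of_nonneg ht]
    exact mul_le_mul_of_nonneg_left (hM x) ht
  · have h1 := mul_le_mul_of_nonneg_left (hineq l x y) ht
    simp only
    linarith

lemma hahn_banach {μ ν : Measure ℝ} [IsProbabilityMeasure μ] [IsProbabilityMeasure ν]
    (hνi : Integrable id ν) (hco : ConvexOrder μ ν) {V W : ℝ → ℝ}
    (hV : Continuous V) (hW : Continuous W) (hV1 : ∀ x, 1 ≤ V x) (hW1 : ∀ x, 1 ≤ W x)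
    (hVi : Integrable V μ) (hWi : Integrable W ν)
    {L : ℕ} (l₀ : Fin L) (c : Fin L → growthSpace (fun p => V p.1 + W p.2)) :
    ∃ Λ : (Fin L → growthSpace (fun p => V p.1 + W p.2)) →ₗ[ℝ] ℝ,
      Λ c = DualValue μ ν (fun l => (c l).1) ∧
      ∀ f φ ψ θ, DualFeasible μ ν (fun l => (f l).1) φ ψ θ → 
        Λ f ≤ ∫ x, φ x ∂μ + ∫ y, ψ y ∂ν := by
  let N : (Fin L → growthSpace (fun p => V p.1 + W p.2)) → ℝ :=
    fun f => DualValue μ ν (fun l => (f l).1)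
  have hbdd := fun f => dualSet_bddBelow hνi hco hVi hWi l₀ f
  have hne := fun f : Fin L → growthSpace (fun p => V p.1 + W p.2) => 
    dualSet_nonempty (μ := μ) (ν := ν) hV hW hV1 hW1 hVi hWi f
  have hNle : ∀ f φ ψ θ, DualFeasible μ ν (fun l => (f l).1) φ ψ θ → 
        N f ≤ ∫ x, φ x ∂μ + ∫ y, ψ y ∂ν := fun f φ ψ θ h => 
    csInf_le (hbdd f) ⟨φ, ψ, θ, h, rfl⟩
  have hadd : ∀ f g, N (f + g) ≤ N f + N g := by
    intro f g
    refine le_of_forall_pos_le_add fun ε hε => ?_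
    obtain ⟨r, ⟨φ, ψ, θ, h, rfl⟩, hr⟩ := 
      exists_lt_of_csInf_lt (hne f) (lt_add_of_pos_right (N f) (half_pos hε))
    obtain ⟨r', ⟨φ', ψ', θ', h', rfl⟩, hr'⟩ := 
      exists_lt_of_csInf_lt (hne g) (lt_add_of_pos_right (N g) (half_pos hε))
    have := hNle (f + g) _ _ _ (h.add h')
    rw [integral_add h.2.1 h'.2.1, integral_add h.2.2.2.1 h'.2.2.2.1] at this
    linarith
  have hsm_le : ∀ t : ℝ, 0 < t → ∀ f, N (t • f) ≤ t * N f := by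
    intro t ht f
    rw [← div_le_iff₀' ht]
    refine le_csInf (hne f) ?_
    rintro r ⟨φ, ψ, θ, h, rfl⟩
    rw [div_le_iff₀' ht]
    have := hNle (t • f) _ _ _ (h.smul ht.le)
    rw [integral_const_mul, integral_const_mul] at this
    linarith
  have hsm : ∀ t : ℝ, 0 < t → ∀ f, N (t • f) = t * N f := by
    intro t ht f
    refine le_antisymm (hsm_le t ht f) ?_
    have h := hsm_le t⁻¹ (inv_pos.2 ht) (t • f)
    rw [inv_smul_smul₀ ht.ne'] at h
    rwa [le_inv_mul_iff₀ ht] at h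
  have hN0 : N 0 = 0 := by
    have h := hsm 2 two_pos 0
    rw [smul_zero] at h
    linarith
  have hH : ∀ t : ℝ, t • c = 0 → (RingHom.id ℝ) t • N c = 0 := by
    intro t ht
    rcases smul_eq_zero.1 ht with h | h
    · simp [h]
    · simp [h, hN0]
  obtain ⟨Λ, hΛ, hΛN⟩ := exists_extension_of_le_sublinear
    (LinearPMap.mkSpanSingleton' c (N c) hH) N hsm hadd (by
      rintro ⟨x, hx⟩
      obtain ⟨t, rfl⟩ := Submodule.mem_span_singleton.1 hx
      rw [LinearPMap.mkSpanSingleton'_apply]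
      simp only [RingHom.id_apply, smul_eq_mul]
      rcases lt_trichotomy t 0 with ht | rfl | ht
      · have h1 := hadd (t • c) ((-t) • c)
        rw [← add_smul, add_neg_cancel, zero_smul, hN0, hsm (-t) (by linarith)] at h1
        linarith
      · rw [zero_smul, hN0, zero_mul]
      · exact (hsm t ht c).ge)
  refine ⟨Λ, ?_, fun f φ ψ θ h => (hΛN f).trans (hNle f φ ψ θ h)⟩
  have := hΛ ⟨c, Submodule.mem_span_singleton_self c⟩
  exact this.trans (LinearPMap.mkSpanSingleton'_apply_self c (N c) hH _)

lemma tail_tendsto {μ : Measure ℝ} {V : ℝ → ℝ} (hV : Continuous V) (hVi : Integrable V μ) :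
    Filter.Tendsto (fun n : ℕ => ∫ x, 2 * max (V x - n) 0 ∂μ) Filter.atTop (nhds 0) := by
  have : Filter.Tendsto (fun n : ℕ => ∫ x, 2 * max (V x - n) 0 ∂μ) Filter.atTop 
      (nhds (∫ _, (0 : ℝ) ∂μ)) := by
    refine tendsto_integral_of_dominated_convergence (fun x => 2 * |V x|) 
      (fun n => by fun_prop) (hVi.abs.const_mul 2)
      (fun n => Filter.Eventually.of_forall fun x => ?_)
      (Filter.Eventually.of_forall fun x => ?_)
    · have h0 : (0 : ℝ) ≤ n := by positivity
      have h1 : max (V x - n) 0 ≤ |V x| := 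
        max_le (by linarith [le_abs_self (V x)]) (abs_nonneg _)
      rw [Real.norm_eq_abs, abs_of_nonneg (by positivity)]
      linarith
    · obtain ⟨N, hN⟩ := exists_nat_ge (V x)
      refine tendsto_const_nhds.congr' ?_
      filter_upwards [Filter.eventually_ge_atTop N] with n hn
      have : (N : ℝ) ≤ n := by exact_mod_cast hn
      rw [max_eq_right (by linarith), mul_zero]
  simpa using this

lemma strong_duality {μ ν : Measure ℝ} {L : ℕ} {c : Fin L → ℝ × ℝ → ℝ}
    (hA : AssumpA' μ ν c) (l₀ : Fin L) :
    ∃ γ : Fin L → Measure (ℝ × ℝ), MLfeasible μ ν γ ∧ 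
      DualValue μ ν c = ∑ l, ∫ p, c l p ∂(γ l) := by
  obtain ⟨hμ, hν, hμi, hνi, hc, hco, v, w, hv, hw, hvi, hwi, hb⟩ := hA
  obtain ⟨V, hVdef⟩ : ∃ V : ℝ → ℝ, V = fun x => |v x| + 1 + |x| := ⟨_, rfl⟩
  obtain ⟨W, hWdef⟩ : ∃ W : ℝ → ℝ, W = fun x => |w x| + 1 + |x| := ⟨_, rfl⟩
  have hV : Continuous V := by rw [hVdef]; fun_prop
  have hW : Continuous W := by rw [hWdef]; fun_prop
  have hVi : Integrable V μ := by
    rw [hVdef]; exact (hvi.abs.add (integrable_const _)).add hμi.abs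
  have hWi : Integrable W ν := by
    rw [hWdef]; exact (hwi.abs.add (integrable_const _)).add hνi.abs
  have hVx : ∀ x, 1 + |x| ≤ V x := fun x => by rw [hVdef]; linarith [abs_nonneg (v x)]
  have hWx : ∀ x, 1 + |x| ≤ W x := fun x => by rw [hWdef]; linarith [abs_nonneg (w x)]
  have hVv : ∀ x, v x ≤ V x := fun x => by
    rw [hVdef]; linarith [le_abs_self (v x), abs_nonneg x]
  have hWw : ∀ x, w x ≤ W x := fun x => by
    rw [hWdef]; linarith [le_abs_self (w x), abs_nonneg x]
  clear hVdef hWdef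
  have hV1 : ∀ x, 1 ≤ V x := fun x => by linarith [hVx x, abs_nonneg x]
  have hW1 : ∀ x, 1 ≤ W x := fun x => by linarith [hWx x, abs_nonneg x]
  let G : ℝ × ℝ → ℝ := fun p => V p.1 + W p.2
  have hG : Continuous G := (hV.comp continuous_fst).add (hW.comp continuous_snd)
  have hG1 : ∀ p, 1 ≤ G p := fun p => by
    have h1 := hV1 p.1
    have h2 := hW1 p.2
    change 1 ≤ V p.1 + W p.2
    linarith
  have hGx : ∀ p : ℝ × ℝ, 1 + |p.1| + |p.2| ≤ G p := fun p => by
    have h1 := hVx p.1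
    have h2 := hWx p.2
    change _ ≤ V p.1 + W p.2
    linarith
  have hcomp : ∀ R, IsCompact {p | G p ≤ R} := by
    intro R
    refine (isCompact_closedBall (0 : ℝ × ℝ) R).of_isClosed_subset 
      (isClosed_le hG continuous_const) (fun p hp => ?_)
    have h1 := hGx p
    have h2 : G p ≤ R := hp
    have h3 := abs_nonneg p.1
    have h4 := abs_nonneg p.2
    rw [mem_closedBall_zero_iff, Prod.norm_def, Real.norm_eq_abs, Real.norm_eq_abs]
    exact max_le (by linarith) (by linarith)
  have hcm : ∀ l, c l ∈ growthSpace G := by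
    refine fun l => ⟨hc l, 1, fun p => ?_⟩
    have h1 := hb p.1 p.2
    have h2 := Finset.single_le_sum (f := fun l => |c l (p.1, p.2)|) (fun i _ => abs_nonneg _) 
        (Finset.mem_univ l)
    have h3 := hVv p.1
    have h4 := hWw p.2
    change |c l p| ≤ 1 * (V p.1 + W p.2)
    simp only [Prod.mk.eta] at h2 h1
    linarith
  obtain ⟨Λ, hΛc, hΛ⟩ := hahn_banach hνi hco hV hW hV1 hW1 hVi hWi l₀ (fun l => ⟨c l, hcm l⟩)
  let Λl : Fin L → growthSpace G →ₗ[ℝ] ℝ := fun l => 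
    Λ.comp (LinearMap.single ℝ (fun _ : Fin L => growthSpace G) l)
  have hsingle : ∀ l (f : growthSpace G) φ ψ, Continuous φ → Integrable φ μ → Continuous ψ → 
      Integrable ψ ν → (∀ x y, 0 ≤ φ x + ψ y) → (∀ x y, f.1 (x, y) ≤ φ x + ψ y) → 
      Λl l f ≤ ∫ x, φ x ∂μ + ∫ y, ψ y ∂ν := by
    intro l f φ ψ h1 h2 h3 h4 h5 h6
    refine hΛ _ φ ψ (fun _ _ => 0) ⟨h1, h2, h3, h4, fun _ => ⟨continuous_const, 0, by simp⟩, 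
      fun k x y => ?_⟩
    by_cases hk : k = l
    · subst hk
      simpa using h6 x y
    · simpa [hk] using h5 x y
  have hrep : ∀ l, ∃ γ : Measure (ℝ × ℝ), ∀ f : growthSpace G, 
      Integrable f.1 γ ∧ ∫ p, f.1 p ∂γ = Λl l f := by
    intro l
    refine riesz_growth hG hG1 hcomp (Λl l) (fun f hf => ?_) (fun ε hε => ?_)
    · have := hsingle l (-f) (fun _ => 0) (fun _ => 0) continuous_const (integrable_const _)
        continuous_const (integrable_const _) (by simp) (fun x y => by simpa using hf (x, y))
      simp only [map_neg, integral_zero, add_zero] at this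
      linarith
    · have h1 := (tail_tendsto hV hVi).add (tail_tendsto hW hWi)
      rw [add_zero] at h1
      obtain ⟨n, hn⟩ := ((tendsto_order.1 h1).2 ε hε).exists
      refine ⟨2 * n, fun f hf => ?_⟩
      refine (hsingle l f (fun x => 2 * max (V x - n) 0) (fun x => 2 * max (W x - n) 0) 
        (by fun_prop) ?_ (by fun_prop) ?_ (fun x y => by positivity) (fun x y => ?_)).trans hn.le
      · exact ((hVi.sub (integrable_const _)).sup (integrable_const _)).const_mul 2
      · exact ((hWi.sub (integrable_const _)).sup (integrable_const _)).const_mul 2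
      · refine (hf (x, y)).trans ?_
        have h2 := le_max_left (V x - n) 0
        have h3 := le_max_left (W y - n) 0
        have h4 := le_max_right (V x - n) 0
        have h5 := le_max_right (W y - n) 0
        have : max (G (x, y) - 2 * n) 0 ≤ max (V x - n) 0 + max (W y - n) 0 := by
          refine max_le ?_ (by linarith)
          change V x + W y - 2 * n ≤ _
          linarith
        linarith
  choose γ hγ using hrep
  have hsum : ∀ f : Fin L → growthSpace G, ∑ l, ∫ p, (f l).1 p ∂(γ l) = Λ f := by
    intro f
    rw [Finset.sum_congr rfl fun l _ => (hγ l (f l)).2]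
    simp only [Λl, LinearMap.comp_apply, LinearMap.single_apply]
    rw [← map_sum, Finset.univ_sum_single]
  have hone : ∀ l, IsFiniteMeasure (γ l) := by
    intro l
    have h := (hγ l ⟨fun _ => 1, continuous_const, 1, fun p => by simpa using hG1 p⟩).1
    rw [integrable_const_iff] at h
    simpa using h
  have hfm : (fun p : ℝ × ℝ => p.1) ∈ growthSpace G := ⟨continuous_fst, 1, fun p => by
    linarith [hGx p, abs_nonneg p.2]⟩
  have hsm : (fun p : ℝ × ℝ => p.2) ∈ growthSpace G := ⟨continuous_snd, 1, fun p => by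
    linarith [hGx p, abs_nonneg p.1]⟩
  have hx : ∀ l, Integrable (fun p : ℝ × ℝ => p.1) (γ l) := fun l => (hγ l ⟨_, hfm⟩).1
  have hy : ∀ l, Integrable (fun p : ℝ × ℝ => p.2) (γ l) := fun l => (hγ l ⟨_, hsm⟩).1
  have hθm : ∀ θ : ℝ → ℝ, Continuous θ → (∃ M, ∀ x, |θ x| ≤ M) →
      (fun p : ℝ × ℝ => θ p.1 * (p.2 - p.1)) ∈ growthSpace G := by
    rintro θ hθ ⟨M, hM⟩
    refine ⟨by fun_prop, M, fun p => ?_⟩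
    rw [abs_mul]
    have h0 : |p.2 - p.1| ≤ G p := by
      have := abs_sub p.2 p.1
      linarith [hGx p]
    exact mul_le_mul (hM _) h0 (abs_nonneg _) ((abs_nonneg _).trans (hM 0))
  have hmart0 : ∀ l, ∀ θ : ℝ → ℝ, Continuous θ → (∃ M, ∀ x, |θ x| ≤ M) →
      ∫ p, θ p.1 * (p.2 - p.1) ∂(γ l) ≤ 0 := by
    intro l θ hθ hM
    rw [(hγ l ⟨_, hθm θ hθ hM⟩).2]
    have := hΛ (Pi.single l ⟨_, hθm θ hθ hM⟩) (fun _ => 0) (fun _ => 0) 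
      (Pi.single l θ) ⟨continuous_const, integrable_const _, continuous_const, integrable_const _,
        fun k => ?_, fun k x y => ?_⟩
    · simp only [integral_zero, add_zero] at this
      exact this
    · by_cases hk : k = l
      · subst hk
        simpa using ⟨hθ, hM⟩
      · simp only [Pi.single_eq_of_ne hk]
        exact ⟨continuous_const, 0, by simp⟩
    · by_cases hk : k = l
      · subst hk
        simp
      · simp [hk]
  have hmart : ∀ l, ∀ θ : ℝ → ℝ, Continuous θ → (∃ M, ∀ x, |θ x| ≤ M) →
      ∫ p, θ p.1 * (p.2 - p.1) ∂(γ l) = 0 := by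
    intro l θ hθ hM
    refine le_antisymm (hmart0 l θ hθ hM) ?_
    have := hmart0 l (fun x => -θ x) hθ.neg (by simpa using hM)
    simp only [neg_mul, integral_neg] at this
    linarith
  have hbm1 : ∀ g : BoundedContinuousFunction ℝ ℝ, (fun p : ℝ × ℝ => g p.1) ∈ growthSpace G := by
    intro g
    refine ⟨g.continuous.comp continuous_fst, ‖g‖, fun p => ?_⟩
    have h2 := g.norm_coe_le_norm p.1
    rw [Real.norm_eq_abs] at h2
    nlinarith [hG1 p, norm_nonneg g]
  have hbm2 : ∀ g : BoundedContinuousFunction ℝ ℝ, (fun p : ℝ × ℝ => g p.2) ∈ growthSpace G := by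
    intro g
    refine ⟨g.continuous.comp continuous_snd, ‖g‖, fun p => ?_⟩
    have h2 := g.norm_coe_le_norm p.2
    rw [Real.norm_eq_abs] at h2
    nlinarith [hG1 p, norm_nonneg g]
  have hfst0 : ∀ g : BoundedContinuousFunction ℝ ℝ, 
      ∑ l, ∫ p, g p.1 ∂(γ l) ≤ ∫ x, g x ∂μ := by
    intro g
    rw [hsum (fun _ => ⟨_, hbm1 g⟩)]
    have := hΛ (fun _ => ⟨_, hbm1 g⟩) g (fun _ => 0) (fun _ _ => 0) ⟨g.continuous, g.integrable μ, 
      continuous_const, integrable_const _, fun _ => ⟨continuous_const, 0, by simp⟩, by simp⟩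
    simpa using this
  have hsnd0 : ∀ g : BoundedContinuousFunction ℝ ℝ, 
      ∑ l, ∫ p, g p.2 ∂(γ l) ≤ ∫ x, g x ∂ν := by
    intro g
    rw [hsum (fun _ => ⟨_, hbm2 g⟩)]
    have := hΛ (fun _ => ⟨_, hbm2 g⟩) (fun _ => 0) g (fun _ _ => 0) ⟨continuous_const, 
      integrable_const _, g.continuous, g.integrable ν, 
      fun _ => ⟨continuous_const, 0, by simp⟩, by simp⟩
    simpa using this
  have hfst : (∑ l, γ l).map Prod.fst = μ := by
    refine ext_of_forall_integral_eq_of_IsFiniteMeasure fun g => ?_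
    rw [integral_map measurable_fst.aemeasurable g.continuous.aestronglyMeasurable,
      integral_finsetSum_measure fun l _ => (hγ l ⟨_, hbm1 g⟩).1]
    refine le_antisymm (hfst0 g) ?_
    have := hfst0 (-g)
    simp only [BoundedContinuousFunction.coe_neg, Pi.neg_apply, integral_neg, 
      Finset.sum_neg_distrib] at this
    linarith
  have hsnd : (∑ l, γ l).map Prod.snd = ν := by
    refine ext_of_forall_integral_eq_of_IsFiniteMeasure fun g => ?_
    rw [integral_map measurable_snd.aemeasurable g.continuous.aestronglyMeasurable,
      integral_finsetSum_measure fun l _ => (hγ l ⟨_, hbm2 g⟩).1]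
    refine le_antisymm (hsnd0 g) ?_
    have := hsnd0 (-g)
    simp only [BoundedContinuousFunction.coe_neg, Pi.neg_apply, integral_neg, 
      Finset.sum_neg_distrib] at this
    linarith
  refine ⟨γ, ⟨fun l => ⟨hone l, Or.inr (mart_of_integral (γ l) (hx l) (hy l) (hmart l))⟩, ?_⟩, ?_⟩
  · obtain ⟨κ, hκ, hdis, hm⟩ := mart_of_integral (∑ l, γ l) 
      (integrable_finsetSum_measure.2 fun l _ => hx l) 
      (integrable_finsetSum_measure.2 fun l _ => hy l)
      (fun θ hθ hM => by
        rw [integral_finsetSum_measure fun l _ => (hγ l ⟨_, hθm θ hθ hM⟩).1]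
        exact Finset.sum_eq_zero fun l _ => hmart l θ hθ hM)
    rw [hfst] at hdis hm
    exact ⟨κ, ⟨hκ, by rw [hdis, hsnd], hm⟩, hdis.symm⟩
  · exact hΛc.symm.trans (hsum _).symm

/-- Duality: under [A'], the relaxed primal value equals the dual value, `P̄_c = D̄_c`. -/
theorem relaxed_duality
    (μ ν : Measure ℝ) {L : ℕ} (c : Fin L → ℝ × ℝ → ℝ)
    (hA : AssumpA' μ ν c) :
    RelaxedValue μ ν c = DualValue μ ν c := by
  rcases Nat.eq_zero_or_pos L with rfl | hL
  · have hμ := hA.1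
    have h1 : {r | ∃ γ : Fin 0 → Measure (ℝ × ℝ), MLfeasible μ ν γ ∧
        r = ∑ l, ∫ p, c l p ∂(γ l)} = ∅ := by
      rw [Set.eq_empty_iff_forall_notMem]
      rintro r ⟨γ, ⟨-, κ, ⟨hκ, -, -⟩, h⟩, -⟩
      rw [Finset.univ_eq_empty, Finset.sum_empty] at h
      have h2 : (μ ⊗ₘ κ) Set.univ = 1 := measure_univ
      rw [← h] at h2
      simp at h2
    have h2 : {r | ∃ φ ψ θ, DualFeasible μ ν c φ ψ θ ∧
        r = ∫ x, φ x ∂μ + ∫ y, ψ y ∂ν} = Set.univ := by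
      rw [Set.eq_univ_iff_forall]
      intro r
      refine ⟨fun _ => r, fun _ => 0, fun _ _ => 0, ⟨continuous_const, integrable_const _,
        continuous_const, integrable_zero _ _ _, fun l => l.elim0, fun l => l.elim0⟩, ?_⟩
      simp
    rw [RelaxedValue, DualValue, h1, h2]
    simp
  · obtain ⟨γ, hγ, hval⟩ := strong_duality hA ⟨0, hL⟩
    refine IsGreatest.csSup_eq ⟨⟨γ, hγ, hval⟩, ?_⟩
    rintro r ⟨γ', hγ', rfl⟩
    obtain ⟨hμ, hν, hμi, hνi, hc, hco, v, w, hv, hw, hvi, hwi, hb⟩ := id hA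
    refine le_csInf ⟨_, v, w, fun _ _ => 0, ⟨hv, hvi, hw, hwi, fun l => 
      ⟨continuous_const, 0, by simp⟩, fun l x y => ?_⟩, rfl⟩ ?_
    · have h2 := Finset.single_le_sum (f := fun l => |c l (x, y)|) (fun i _ => abs_nonneg _) 
        (Finset.mem_univ l)
      have h3 := hb x y
      have h4 := le_abs_self (c l (x, y))
      linarith
    · rintro _ ⟨φ, ψ, θ, hd, rfl⟩
      exact weak_duality hA hγ' hd

end
end
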